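/- Let G be a finite group. If G has a non-abelian minimal normal subgroup N such that N is contained in the commutator subgroup G', then the average of the degrees of the irreducible complex characters of G is at least 16/5. -/

import Mathlib

open CategoryTheory

/-- The set of irreducible complex characters of `G`: characters of simple
finite-dimensional complex representations of `G`. -/
noncomputable def IrrChar (G : Type) [Group G] : Set (G → ℂ) :=
  {χ | ∃ V : FDRep ℂ G, Simple V ∧ χ = fun g => V.character g}

/-- The degree of a character, read off from its value at `1`. -/
noncomputable def charDeg {G : Type} [Group G] (χ : G → ℂ) : ℕ :=
  ⌊(χ 1).re⌋₊

/-- The average degree of the irreducible characters of `G` satisfying a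
predicate `p` (with the convention that the average of the empty set is `0`). -/
noncomputable def acdRel (G : Type) [Group G] (p : (G → ℂ) → Prop) : ℝ :=
  (∑ᶠ χ ∈ {χ ∈ IrrChar G | p χ}, (charDeg χ : ℝ)) /
    ({χ ∈ IrrChar G | p χ} : Set (G → ℂ)).ncard

/-- The average character degree of `G`. -/
noncomputable def acd (G : Type) [Group G] : ℝ := acdRel G fun _ => True

namespace ACD
open Representation Module

/-- Characters of finite-dimensional complex representations. -/
def IsChar {G : Type} [Group G] (φ : G → ℂ) : Prop :=
  ∃ (V : Type) (_ : AddCommGroup V) (_ : Module ℂ V) (_ : FiniteDimensional ℂ V)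
    (ρ : Representation ℂ G V), φ = ρ.character

/-- Characters of irreducible finite-dimensional complex representations. -/
def Irr {G : Type} [Group G] (φ : G → ℂ) : Prop :=
  ∃ (V : Type) (_ : AddCommGroup V) (_ : Module ℂ V) (_ : FiniteDimensional ℂ V)
    (ρ : Representation ℂ G V), ρ.IsIrreducible ∧ φ = ρ.character

/-- The inner product of class functions. -/
noncomputable def ip {G : Type} [Group G] [Finite G] (φ ψ : G → ℂ) : ℂ :=
  letI := Fintype.ofFinite G
  (Nat.card G : ℂ)⁻¹ * ∑ g : G, φ g * ψ g⁻¹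

/-- The dual class function. -/
def dl {G : Type} [Group G] (φ : G → ℂ) : G → ℂ := fun g => φ g⁻¹

section basic
variable {G : Type} [Group G] {φ ψ χ : G → ℂ}

theorem isChar_of_rep {V : Type} [AddCommGroup V] [Module ℂ V] [FiniteDimensional ℂ V]
    (ρ : Representation ℂ G V) : IsChar ρ.character := ⟨V, _, _, inferInstance, ρ, rfl⟩

theorem Irr.isChar (h : Irr φ) : IsChar φ := by
  obtain ⟨V, _, _, _, ρ, _, rfl⟩ := h
  exact isChar_of_rep ρ

theorem IsChar.add (h : IsChar φ) (h' : IsChar ψ) : IsChar (φ + ψ) := by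
  obtain ⟨V, _, _, _, ρ, rfl⟩ := h
  obtain ⟨W, _, _, _, σ, rfl⟩ := h'
  refine ⟨V × W, _, _, inferInstance, ρ.prod σ, ?_⟩
  ext g
  exact (LinearMap.trace_prodMap' (ρ g) (σ g)).symm

theorem IsChar.mul (h : IsChar φ) (h' : IsChar ψ) : IsChar (φ * ψ) := by
  obtain ⟨V, _, _, _, ρ, rfl⟩ := h
  obtain ⟨W, _, _, _, σ, rfl⟩ := h'
  rw [← char_tensor]
  exact isChar_of_rep _

theorem IsChar.dl (h : IsChar φ) : IsChar (dl φ) := by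
  obtain ⟨V, _, _, _, ρ, rfl⟩ := h
  refine ⟨Module.Dual ℂ V, _, _, inferInstance, ρ.dual, ?_⟩
  ext g
  exact (char_dual ρ g).symm

theorem isChar_one : IsChar (1 : G → ℂ) := by
  refine ⟨ℂ, _, _, inferInstance, Representation.trivial ℂ G ℂ, ?_⟩
  ext g
  simp [Representation.character]

theorem isChar_zero : IsChar (0 : G → ℂ) := by
  refine ⟨Fin 0 → ℂ, _, _, inferInstance, Representation.trivial ℂ G _, ?_⟩
  ext g
  simp [Representation.character]

theorem IsChar.comp {H : Type} [Group H] (h : IsChar φ) (f : H →* G) : IsChar (φ ∘ f) := by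
  obtain ⟨V, _, _, _, ρ, rfl⟩ := h
  exact ⟨V, _, _, inferInstance, ρ.comp f, rfl⟩

theorem IsChar.mul_comm (h : IsChar φ) (a b : G) : φ (a * b) = φ (b * a) := by
  obtain ⟨V, _, _, _, ρ, rfl⟩ := h
  exact char_mul_comm _ _ _

theorem IsChar.conj (h : IsChar φ) (a b : G) : φ (a * b * a⁻¹) = φ b := by
  rw [h.mul_comm, inv_mul_cancel_left]

theorem IsChar.sum {ι : Type*} (s : Finset ι) (f : ι → G → ℂ) (h : ∀ i ∈ s, IsChar (f i)) :
    IsChar (∑ i ∈ s, f i) := Finset.sum_induction _ _ (fun _ _ => IsChar.add) isChar_zero h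

theorem IsChar.nsmul (h : IsChar φ) (n : ℕ) : IsChar (n • φ) := by
  induction n with
  | zero => simpa using isChar_zero
  | succ n ih => rw [succ_nsmul]; exact ih.add h

theorem IsChar.multisetSum (s : Multiset (G → ℂ)) (h : ∀ i ∈ s, IsChar i) : IsChar s.sum :=
  Multiset.sum_induction _ s (fun _ _ => IsChar.add) isChar_zero h

theorem dl_dl : dl (dl φ) = φ := by ext; simp [dl]
theorem dl_add : dl (φ + ψ) = dl φ + dl ψ := rfl
theorem dl_mul : dl (φ * ψ) = dl φ * dl ψ := rfl
theorem dl_one : dl (1 : G → ℂ) = 1 := rfl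
theorem dl_apply (g : G) : dl φ g = φ g⁻¹ := rfl

theorem IsChar.one_eq (h : IsChar φ) : φ 1 = charDeg φ := by
  obtain ⟨V, _, _, _, ρ, rfl⟩ := h
  simp [charDeg]

/-- An equivariant idempotent cuts out a character. -/
theorem isChar_of_idem {V : Type} [AddCommGroup V] [Module ℂ V] [FiniteDimensional ℂ V]
    (ρ : Representation ℂ G V) (P : V →ₗ[ℂ] V) (hP : P ∘ₗ P = P)
    (hc : ∀ g, ρ g ∘ₗ P = P ∘ₗ ρ g) : IsChar (fun g => LinearMap.trace ℂ V (ρ g ∘ₗ P)) := by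
  let p := LinearMap.range P
  have hm : ∀ g, ∀ v ∈ p, ρ g v ∈ p := by
    rintro g _ ⟨w, rfl⟩
    exact ⟨ρ g w, (LinearMap.congr_fun (hc g) w).symm⟩
  let s : Subrepresentation ρ := ⟨p, fun g v hv => hm g v hv⟩
  refine ⟨p, _, _, inferInstance, s.toRepresentation, ?_⟩
  ext g
  have h1 : ∀ x, (ρ g ∘ₗ P) x ∈ p := fun x => hm g _ ⟨x, rfl⟩
  rw [← LinearMap.trace_restrict_eq_of_forall_mem p (ρ g ∘ₗ P) h1]
  unfold Representation.character
  congr 1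
  ext ⟨_, w, rfl⟩
  have := LinearMap.congr_fun hP w
  simp only [LinearMap.comp_apply] at this
  simp only [LinearMap.restrict_apply, LinearMap.comp_apply, this]
  rfl

section fin
variable [Finite G]

theorem ip_def [Fintype G] : ip φ ψ = (Nat.card G : ℂ)⁻¹ * ∑ g : G, φ g * ψ g⁻¹ := by
  unfold ip
  congr!

theorem ip_add_left : ip (φ + ψ) χ = ip φ χ + ip ψ χ := by
  have := Fintype.ofFinite G
  simp [ip_def, add_mul, Finset.sum_add_distrib, mul_add]

theorem ip_comm : ip φ ψ = ip ψ φ := by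
  have := Fintype.ofFinite G
  rw [ip_def, ip_def]
  congr 1
  rw [← Equiv.sum_comp (Equiv.inv G)]
  simp [_root_.mul_comm]

theorem ip_add_right : ip χ (φ + ψ) = ip χ φ + ip χ ψ := by
  rw [ip_comm, ip_add_left, ip_comm, ip_comm (φ := ψ)]

theorem ip_smul_left (c : ℂ) : ip (c • φ) ψ = c * ip φ ψ := by
  have := Fintype.ofFinite G
  simp only [ip_def, Pi.smul_apply, smul_eq_mul, Finset.mul_sum]
  exact Finset.sum_congr rfl fun _ _ => by ring

theorem ip_smul_right (c : ℂ) : ip φ (c • ψ) = c * ip φ ψ := by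
  rw [ip_comm, ip_smul_left, ip_comm]

theorem ip_nsmul_left (n : ℕ) : ip (n • φ) ψ = n * ip φ ψ := by
  rw [← Nat.cast_smul_eq_nsmul ℂ, ip_smul_left]

theorem ip_nsmul_right (n : ℕ) : ip φ (n • ψ) = n * ip φ ψ := by
  rw [← Nat.cast_smul_eq_nsmul ℂ, ip_smul_right]

theorem ip_zero_left : ip (0 : G → ℂ) φ = 0 := by
  simpa using ip_smul_left (φ := (0 : G → ℂ)) (ψ := φ) 0

theorem ip_zero_right : ip φ (0 : G → ℂ) = 0 := by rw [ip_comm, ip_zero_left]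

theorem ip_sum_left {ι : Type*} (s : Finset ι) (f : ι → G → ℂ) :
    ip (∑ i ∈ s, f i) ψ = ∑ i ∈ s, ip (f i) ψ := by
  induction s using Finset.cons_induction with
  | empty => simp [ip_zero_left]
  | cons a s ha ih => rw [Finset.sum_cons, Finset.sum_cons, ip_add_left, ih]

theorem ip_sum_right {ι : Type*} (s : Finset ι) (f : ι → G → ℂ) :
    ip ψ (∑ i ∈ s, f i) = ∑ i ∈ s, ip ψ (f i) := by
  rw [ip_comm, ip_sum_left]
  exact Finset.sum_congr rfl fun _ _ => ip_comm

theorem ip_mul_left : ip (φ * χ) ψ = ip φ (ψ * dl χ) := by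
  have := Fintype.ofFinite G
  rw [ip_def, ip_def]
  congr 1
  exact Finset.sum_congr rfl fun _ _ => by simp [dl]; ring

theorem ip_dl : ip (dl φ) (dl ψ) = ip φ ψ := by
  have := Fintype.ofFinite G
  rw [ip_def, ip_def, ← Equiv.sum_comp (Equiv.inv G)]
  simp [dl]

theorem ip_rep {V W : Type} [AddCommGroup V] [Module ℂ V] [FiniteDimensional ℂ V]
    [AddCommGroup W] [Module ℂ W] [FiniteDimensional ℂ W]
    (ρ : Representation ℂ G V) (σ : Representation ℂ G W) :
    ip σ.character ρ.character = finrank ℂ (IntertwiningMap ρ σ) := by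
  have := Fintype.ofFinite G
  have : Invertible (Nat.card G : ℂ) := invertibleOfNonzero (NeZero.ne _)
  rw [← card_inv_mul_sum_char_mul_char_eq_finrank, ip_def]

theorem IsChar.ip_nat (h : IsChar φ) (h' : IsChar ψ) : ∃ n : ℕ, ip φ ψ = n := by
  obtain ⟨V, _, _, _, ρ, rfl⟩ := h
  obtain ⟨W, _, _, _, σ, rfl⟩ := h'
  exact ⟨_, ip_rep _ _⟩

theorem Irr.ip_self (h : Irr φ) : ip φ φ = 1 := by
  obtain ⟨V, _, _, _, ρ, hρ, rfl⟩ := h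
  rw [ip_rep, IsIrreducible.finrank_intertwiningMap_self, Nat.cast_one]

theorem Irr.ip_ne (h : Irr φ) (h' : Irr ψ) (hne : φ ≠ ψ) : ip φ ψ = 0 := by
  obtain ⟨V, _, _, _, ρ, hρ, rfl⟩ := h
  obtain ⟨W, _, _, _, σ, hσ, rfl⟩ := h'
  have := Fintype.ofFinite G
  have : Invertible (Nat.card G : ℂ) := invertibleOfNonzero (NeZero.ne _)
  have h1 : ¬ Nonempty (Representation.Equiv σ ρ) := fun ⟨e⟩ => hne (char_iso e).symm
  have h2 := char_orthonormal ρ σ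
  rw [if_neg h1] at h2
  rw [ip_def, h2]

open Classical in
theorem Irr.ip_eq (h : Irr φ) (h' : Irr ψ) : ip φ ψ = if φ = ψ then 1 else 0 := by
  split_ifs with hh
  · subst hh; exact h.ip_self
  · exact h.ip_ne h' hh

theorem exists_decomp_aux (n : ℕ) : ∀ (V : Type) [AddCommGroup V] [Module ℂ V]
    [FiniteDimensional ℂ V] (ρ : Representation ℂ G V), finrank ℂ V = n →
    ∃ s : Multiset (G → ℂ), (∀ χ ∈ s, Irr χ) ∧ s.sum = ρ.character := by
  induction n using Nat.strong_induction_on with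
  | _ n ih =>
  intro V _ _ _ ρ hn
  by_cases hirr : ρ.IsIrreducible
  · exact ⟨{ρ.character}, by simpa using ⟨V, _, _, inferInstance, ρ, hirr, rfl⟩, by simp⟩
  by_cases h0 : Subsingleton V
  · refine ⟨0, by simp, ?_⟩
    ext g
    have : ρ g = 0 := LinearMap.ext fun x => Subsingleton.elim _ _
    simp [Representation.character, this]
  · rw [not_subsingleton_iff_nontrivial] at h0
    have hnt : Nontrivial (Subrepresentation ρ) := by
      refine ⟨⊥, ⊤, fun h => ?_⟩
      have := congrArg Subrepresentation.toSubmodule h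
      exact bot_ne_top (α := Submodule ℂ V) this
    have : ∃ p : Subrepresentation ρ, p ≠ ⊥ ∧ p ≠ ⊤ := by
      by_contra hcon
      push Not at hcon
      exact hirr ⟨fun p => or_iff_not_imp_left.2 (hcon p)⟩
    obtain ⟨p, hp0, hp1⟩ := this
    have hss : IsSemisimpleRepresentation ρ := inferInstance
    have hcl : ComplementedLattice (Subrepresentation ρ) := hss
    obtain ⟨q, hq⟩ := exists_isCompl p
    have hc : IsCompl p.toSubmodule q.toSubmodule := by
      constructor
      · rw [disjoint_iff]
        exact congrArg Subrepresentation.toSubmodule hq.inf_eq_bot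
      · rw [codisjoint_iff]
        exact congrArg Subrepresentation.toSubmodule hq.sup_eq_top
    have hadd := Submodule.finrank_add_eq_of_isCompl hc
    have hp' : 0 < finrank ℂ p.toSubmodule := by
      rw [Nat.pos_iff_ne_zero]
      intro h
      rw [Submodule.finrank_eq_zero] at h
      exact hp0 (Subrepresentation.toSubmodule_injective h)
    have hq' : 0 < finrank ℂ q.toSubmodule := by
      rw [Nat.pos_iff_ne_zero]
      intro h
      rw [h, add_zero] at hadd
      exact hp1 (Subrepresentation.toSubmodule_injective (Submodule.eq_top_of_finrank_eq hadd))
    obtain ⟨s, hs, hs'⟩ := ih (finrank ℂ p.toSubmodule) (by omega) _ p.toRepresentation rfl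
    obtain ⟨t, ht, ht'⟩ := ih (finrank ℂ q.toSubmodule) (by omega) _ q.toRepresentation rfl
    refine ⟨s + t, ?_, ?_⟩
    · intro χ hχ
      rcases Multiset.mem_add.1 hχ with h | h
      exacts [hs _ h, ht _ h]
    · rw [Multiset.sum_add, hs', ht']
      ext g
      have e1 : (p.toRepresentation.prod q.toRepresentation).character = ρ.character := by
        apply char_iso
        refine Representation.Equiv.mk (Submodule.prodEquivOfIsCompl _ _ hc) ?_
        intro g
        ext x
        · simp; rfl
        · simp; rfl
      rw [← e1]
      exact (LinearMap.trace_prodMap' _ _).symm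

theorem IsChar.decomp (h : IsChar φ) :
    ∃ s : Multiset (G → ℂ), (∀ χ ∈ s, Irr χ) ∧ s.sum = φ := by
  obtain ⟨V, _, _, _, ρ, rfl⟩ := h
  exact exists_decomp_aux _ V ρ rfl

open Classical in
theorem ip_multiset_sum {s : Multiset (G → ℂ)} (hs : ∀ χ ∈ s, Irr χ) (hψ : Irr ψ) :
    ip s.sum ψ = s.count ψ := by
  induction s using Multiset.induction_on with
  | empty => simp [ip_zero_left]
  | cons a s ih =>
    rw [Multiset.sum_cons, ip_add_left, ih (fun χ h => hs χ (Multiset.mem_cons_of_mem h)),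
      (hs a (Multiset.mem_cons_self a s)).ip_eq hψ, Multiset.count_cons]
    by_cases h : a = ψ
    · subst h; simp [add_comm]
    · simp [h, Ne.symm h]

open Classical in
/-- A character of norm one is irreducible. -/
theorem IsChar.irr_of_ip (h : IsChar φ) (h1 : ip φ φ = 1) : Irr φ := by
  obtain ⟨s, hs, rfl⟩ := h.decomp
  have key : ∀ t : Multiset (G → ℂ), (∀ χ ∈ t, χ ∈ s) →
      ∃ m : ℕ, Multiset.card t ≤ m ∧ ip t.sum s.sum = m := by
    intro t
    induction t using Multiset.induction_on with
    | empty => intro _; exact ⟨0, by simp, by simp [ip_zero_left]⟩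
    | cons a t ih =>
      intro ht
      obtain ⟨m, hm, hm'⟩ := ih (fun χ h => ht χ (Multiset.mem_cons_of_mem h))
      have ha : a ∈ s := ht a (Multiset.mem_cons_self a t)
      refine ⟨s.count a + m, ?_, ?_⟩
      · have := Multiset.one_le_count_iff_mem.2 ha
        rw [Multiset.card_cons]; omega
      · rw [Multiset.sum_cons, ip_add_left, hm', ip_comm, ip_multiset_sum hs (hs a ha)]
        push_cast; ring
  obtain ⟨m, hm, hm'⟩ := key s (fun _ h => h)
  rw [h1] at hm'
  have : m = 1 := by exact_mod_cast hm'.symm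
  subst this
  rcases Nat.le_one_iff_eq_zero_or_eq_one.1 hm with h0 | h0
  · rw [Multiset.card_eq_zero] at h0
    subst h0
    simp [ip_zero_left] at h1
  · obtain ⟨a, rfl⟩ := Multiset.card_eq_one.1 h0
    simpa using hs a (by simp)

theorem Irr.comp_equiv {H : Type} [Group H] [Finite H] (h : Irr φ) (e : H ≃* G) :
    Irr (φ ∘ e) := by
  have := Fintype.ofFinite G
  have := Fintype.ofFinite H
  refine (h.isChar.comp e.toMonoidHom).irr_of_ip ?_
  rw [← h.ip_self, ip_def, ip_def, ← e.toEquiv.sum_comp, Nat.card_congr e.toEquiv]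
  simp

theorem Irr.dl (h : Irr φ) : Irr (dl φ) := h.isChar.dl.irr_of_ip (by rw [ip_dl, h.ip_self])

theorem irr_one : Irr (1 : G → ℂ) := by
  refine isChar_one.irr_of_ip ?_
  have := Fintype.ofFinite G
  simp [ip_def]

theorem irrChar_eq : IrrChar G = {φ | Irr φ} := by
  have := Fintype.ofFinite G
  ext φ
  simp only [IrrChar, Set.mem_ofPred_eq]
  have hN : (Nat.card G : ℂ) ≠ 0 := NeZero.ne _
  constructor
  · rintro ⟨V, hV, rfl⟩
    have h : IsChar (fun g => V.character g) := ⟨V, _, _, inferInstance, V.ρ, rfl⟩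
    refine h.irr_of_ip ?_
    rw [ip_def, (FDRep.simple_iff_char_is_norm_one V).1 hV, inv_mul_cancel₀ hN]
  · intro h
    have h1 := h.ip_self
    obtain ⟨V, _, _, _, ρ, hρ, rfl⟩ := h
    refine ⟨FDRep.of ρ, (FDRep.simple_iff_char_is_norm_one _).2 ?_, rfl⟩
    rw [ip_def, inv_mul_eq_one₀ hN] at h1
    exact h1.symm

theorem finite_irr : {φ : G → ℂ | Irr φ}.Finite := by
  classical
  have hli : LinearIndependent ℂ (fun x : {φ : G → ℂ | Irr φ} => (x : G → ℂ)) := by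
    rw [linearIndependent_iff']
    intro s c hc i hi
    have h1 : ip (∑ j ∈ s, c j • (j : G → ℂ)) (i : G → ℂ) = c i := by
      rw [ip_sum_left, Finset.sum_eq_single i]
      · rw [ip_smul_left, Irr.ip_self i.2, mul_one]
      · intro j _ hj
        rw [ip_smul_left, Irr.ip_ne j.2 i.2 (fun h => hj (Subtype.ext h)), mul_zero]
      · exact fun h => absurd hi h
    rw [hc, ip_zero_left] at h1
    exact h1.symm
  have : Finite {φ : G → ℂ | Irr φ} := hli.finite
  exact Set.toFinite _

variable (G) in
/-- The finset of irreducible characters. -/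
noncomputable def irr : Finset (G → ℂ) := (finite_irr (G := G)).toFinset

theorem mem_irr : φ ∈ irr G ↔ Irr φ := by simp [irr]

/-- Inner products as natural numbers. -/
noncomputable def mult (φ ψ : G → ℂ) : ℕ := ⌊(ip φ ψ).re⌋₊

theorem IsChar.cast_mult (h : IsChar φ) (h' : IsChar ψ) : (mult φ ψ : ℂ) = ip φ ψ := by
  obtain ⟨n, hn⟩ := h.ip_nat h'
  simp [mult, hn]

theorem IsChar.eq_sum (h : IsChar φ) : φ = ∑ χ ∈ irr G, mult φ χ • χ := by
  classical
  obtain ⟨s, hs, rfl⟩ := h.decomp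
  rw [Finset.sum_multiset_count_of_subset s (irr G)]
  · refine Finset.sum_congr rfl fun χ hχ => ?_
    congr 1
    have := (IsChar.multisetSum s (fun i hi => (hs i hi).isChar)).cast_mult (mem_irr.1 hχ).isChar
    rw [ip_multiset_sum hs (mem_irr.1 hχ)] at this
    have h2 : mult s.sum χ = s.count χ := by exact_mod_cast this
    rw [← Finset.sum_multiset_count_of_subset s (irr G), h2]
    intro χ hχ
    exact mem_irr.2 (hs _ (by simpa using hχ))
  · intro χ hχ
    exact mem_irr.2 (hs _ (by simpa using hχ))

end fin
end basic
end ACD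

namespace ACD
open Representation Module

section num
variable {G : Type} [Group G] {φ ψ χ : G → ℂ}

theorem deg_add (h : IsChar φ) (h' : IsChar ψ) : charDeg (φ + ψ) = charDeg φ + charDeg ψ := by
  have := (h.add h').one_eq
  rw [Pi.add_apply, h.one_eq, h'.one_eq] at this
  exact_mod_cast this.symm

theorem deg_mul (h : IsChar φ) (h' : IsChar ψ) : charDeg (φ * ψ) = charDeg φ * charDeg ψ := by
  have := (h.mul h').one_eq
  rw [Pi.mul_apply, h.one_eq, h'.one_eq] at this
  exact_mod_cast this.symm

theorem deg_dl : charDeg (dl φ) = charDeg φ := by simp [charDeg, dl]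

theorem deg_one : charDeg (1 : G → ℂ) = 1 := by simp [charDeg]
theorem deg_zero : charDeg (0 : G → ℂ) = 0 := by simp [charDeg]

theorem deg_nsmul (h : IsChar φ) (n : ℕ) : charDeg (n • φ) = n * charDeg φ := by
  have := (h.nsmul n).one_eq
  rw [Pi.smul_apply, h.one_eq, nsmul_eq_mul] at this
  exact_mod_cast this.symm

theorem deg_sum {ι : Type*} (s : Finset ι) (f : ι → G → ℂ) (h : ∀ i ∈ s, IsChar (f i)) :
    charDeg (∑ i ∈ s, f i) = ∑ i ∈ s, charDeg (f i) := by
  have := (IsChar.sum s f h).one_eq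
  rw [Finset.sum_apply, Finset.sum_congr rfl fun i hi => (h i hi).one_eq] at this
  exact_mod_cast this.symm

theorem Irr.deg_pos (h : Irr φ) : 0 < charDeg φ := by
  obtain ⟨V, _, _, _, ρ, hρ, rfl⟩ := h
  have : (charDeg ρ.character : ℂ) = finrank ℂ V := by
    rw [← (isChar_of_rep ρ).one_eq, char_one]
  have h2 : charDeg ρ.character = finrank ℂ V := by exact_mod_cast this
  rw [h2, Nat.pos_iff_ne_zero]
  intro h0
  have hs := Module.finrank_zero_iff.1 h0
  have hnt : Nontrivial (Subrepresentation ρ) := hρ.toNontrivial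
  obtain ⟨p, q, hpq⟩ := hnt
  apply hpq
  apply Subrepresentation.toSubmodule_injective
  exact Subsingleton.elim _ _

theorem IsChar.eq_zero_of_deg (h : IsChar φ) (h0 : charDeg φ = 0) : φ = 0 := by
  obtain ⟨V, _, _, _, ρ, rfl⟩ := h
  have : (charDeg ρ.character : ℂ) = finrank ℂ V := by
    rw [← (isChar_of_rep ρ).one_eq, char_one]
  rw [h0] at this
  have h2 : finrank ℂ V = 0 := by exact_mod_cast this.symm
  have hs := Module.finrank_zero_iff.1 h2
  ext g
  have : ρ g = 0 := LinearMap.ext fun x => Subsingleton.elim _ _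
  simp [Representation.character, this]

variable [Finite G]

theorem mult_eq_of (h : IsChar φ) (h' : IsChar ψ) {n : ℕ} (hn : ip φ ψ = n) : mult φ ψ = n := by
  rw [← h.cast_mult h'] at hn
  exact_mod_cast hn

theorem mult_comm : mult φ ψ = mult ψ φ := by rw [mult, mult, ip_comm]

theorem mult_dl : mult (dl φ) (dl ψ) = mult φ ψ := by rw [mult, mult, ip_dl]

theorem mult_mul_left : mult (φ * χ) ψ = mult φ (ψ * dl χ) := by rw [mult, mult, ip_mul_left]

theorem mult_add_left (h : IsChar φ) (h' : IsChar ψ) (h'' : IsChar χ) :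
    mult (φ + ψ) χ = mult φ χ + mult ψ χ := by
  apply mult_eq_of (h.add h') h''
  rw [ip_add_left, ← h.cast_mult h'', ← h'.cast_mult h'']; push_cast; rfl

theorem mult_add_right (h : IsChar φ) (h' : IsChar ψ) (h'' : IsChar χ) :
    mult χ (φ + ψ) = mult χ φ + mult χ ψ := by
  rw [mult_comm, mult_add_left h h' h'', mult_comm, mult_comm (φ := ψ)]

theorem mult_zero_left : mult (0 : G → ℂ) φ = 0 := by simp [mult, ip_zero_left]
theorem mult_zero_right : mult φ (0 : G → ℂ) = 0 := by simp [mult, ip_zero_right]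

theorem mult_nsmul_left (h : IsChar φ) (h' : IsChar ψ) (n : ℕ) :
    mult (n • φ) ψ = n * mult φ ψ := by
  apply mult_eq_of (h.nsmul n) h'
  rw [ip_nsmul_left, ← h.cast_mult h']; push_cast; rfl

theorem mult_nsmul_right (h : IsChar φ) (h' : IsChar ψ) (n : ℕ) :
    mult φ (n • ψ) = n * mult φ ψ := by
  rw [mult_comm, mult_nsmul_left h' h, mult_comm]

theorem mult_sum_left {ι : Type*} (s : Finset ι) (f : ι → G → ℂ) (h : ∀ i ∈ s, IsChar (f i))
    (h' : IsChar ψ) : mult (∑ i ∈ s, f i) ψ = ∑ i ∈ s, mult (f i) ψ := by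
  apply mult_eq_of (IsChar.sum s f h) h'
  rw [ip_sum_left]; push_cast
  exact Finset.sum_congr rfl fun i hi => ((h i hi).cast_mult h').symm

theorem mult_sum_right {ι : Type*} (s : Finset ι) (f : ι → G → ℂ) (h : ∀ i ∈ s, IsChar (f i))
    (h' : IsChar ψ) : mult ψ (∑ i ∈ s, f i) = ∑ i ∈ s, mult ψ (f i) := by
  rw [mult_comm, mult_sum_left s f h h']
  exact Finset.sum_congr rfl fun _ _ => mult_comm

theorem Irr.mult_self (h : Irr φ) : mult φ φ = 1 := by simp [mult, h.ip_self]
theorem Irr.mult_ne (h : Irr φ) (h' : Irr ψ) (hne : φ ≠ ψ) : mult φ ψ = 0 := by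
  simp [mult, h.ip_ne h' hne]

theorem IsChar.mult_eq_sum (h : IsChar φ) (h' : IsChar ψ) :
    mult φ ψ = ∑ χ ∈ irr G, mult φ χ * mult ψ χ := by
  conv_lhs => rw [h.eq_sum]
  rw [mult_sum_left _ _ (fun i hi => (mem_irr.1 hi).isChar.nsmul _) h']
  refine Finset.sum_congr rfl fun i hi => ?_
  rw [mult_nsmul_left (mem_irr.1 hi).isChar h', mult_comm (φ := i)]

theorem IsChar.deg_eq_sum (h : IsChar φ) :
    charDeg φ = ∑ χ ∈ irr G, mult φ χ * charDeg χ := by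
  conv_lhs => rw [h.eq_sum]
  rw [deg_sum _ _ (fun i hi => (mem_irr.1 hi).isChar.nsmul _)]
  exact Finset.sum_congr rfl fun i hi => deg_nsmul (mem_irr.1 hi).isChar _

theorem IsChar.exists_constituent (h : IsChar φ) (h0 : charDeg φ ≠ 0) :
    ∃ χ, Irr χ ∧ mult φ χ ≠ 0 := by
  by_contra hcon
  push Not at hcon
  apply h0
  rw [h.deg_eq_sum]
  exact Finset.sum_eq_zero fun χ hχ => by rw [hcon χ (mem_irr.1 hχ), zero_mul]

theorem IsChar.sub_irr (h : IsChar φ) (h' : Irr ψ) (hm : mult φ ψ ≠ 0) : IsChar (φ - ψ) := by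
  classical
  have : φ - ψ = ∑ χ ∈ irr G, (if χ = ψ then mult φ χ - 1 else mult φ χ) • χ := by
    rw [sub_eq_iff_eq_add]
    conv_lhs => rw [h.eq_sum]
    rw [← Finset.add_sum_erase _ _ (mem_irr.2 h'),
      ← Finset.add_sum_erase (irr G) (fun χ => (if χ = ψ then _ else _) • χ) (mem_irr.2 h')]
    simp only [if_true]
    obtain ⟨m, hm'⟩ := Nat.exists_eq_succ_of_ne_zero hm
    rw [hm', Nat.succ_eq_add_one, Nat.add_sub_cancel, add_nsmul, one_nsmul]
    have : ∑ x ∈ (irr G).erase ψ, (if x = ψ then mult φ x - 1 else mult φ x) • x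
        = ∑ x ∈ (irr G).erase ψ, mult φ x • x :=
      Finset.sum_congr rfl fun x hx => by rw [if_neg (Finset.ne_of_mem_erase hx)]
    rw [this]
    abel
  rw [this]
  exact IsChar.sum _ _ fun i hi => (mem_irr.1 hi).isChar.nsmul _

theorem IsChar.split (h : IsChar φ) (h' : Irr ψ) (hm : mult φ ψ ≠ 0) :
    ∃ τ, IsChar τ ∧ φ = ψ + τ ∧ charDeg φ = charDeg ψ + charDeg τ :=
  ⟨φ - ψ, h.sub_irr h' hm, by abel, by
    rw [← deg_add h'.isChar (h.sub_irr h' hm)]; congr 1; abel⟩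

theorem IsChar.irr_of_mult (h : IsChar φ) (h1 : mult φ φ = 1) : Irr φ :=
  h.irr_of_ip (by rw [← h.cast_mult h, h1, Nat.cast_one])

end num

section schur
variable {G : Type} [Group G]

theorem schur_scalar {V : Type} [AddCommGroup V] [Module ℂ V] [FiniteDimensional ℂ V]
    (ρ : Representation ℂ G V) [ρ.IsIrreducible] (T : V →ₗ[ℂ] V) (hT : ∀ g, T ∘ₗ ρ g = ρ g ∘ₗ T) :
    ∃ c : ℂ, T = c • LinearMap.id := by
  let f : IntertwiningMap ρ ρ := ⟨T, hT⟩
  obtain ⟨c, hc⟩ := (IsIrreducible.algebraMap_intertwiningMap_bijective_of_isAlgClosed (ρ := ρ)).2 f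
  refine ⟨c, ?_⟩
  have := congrArg IntertwiningMap.toLinearMap hc
  rw [← show f.toLinearMap = T from rfl, ← this]
  ext v
  rfl

theorem sum_conj_scalar {V : Type} [AddCommGroup V] [Module ℂ V] [FiniteDimensional ℂ V] [Fintype G]
    (ρ : Representation ℂ G V) [ρ.IsIrreducible] (x : G) :
    ∑ g : G, ρ (g * x * g⁻¹) =
      ((Nat.card G : ℂ) * ρ.character x / ρ.character 1) • (LinearMap.id : V →ₗ[ℂ] V) := by
  obtain ⟨c, hc⟩ := schur_scalar ρ (∑ g : G, ρ (g * x * g⁻¹)) (by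
    intro h
    change (∑ g : G, ρ (g * x * g⁻¹)) * ρ h = ρ h * (∑ g : G, ρ (g * x * g⁻¹))
    rw [Finset.sum_mul, Finset.mul_sum, ← Equiv.sum_comp (Equiv.mulLeft h)]
    refine Finset.sum_congr rfl fun g _ => ?_
    rw [← map_mul, ← map_mul]
    congr 1
    simp only [Equiv.coe_mulLeft]
    group)
  have hirr : Irr ρ.character := ⟨V, _, _, inferInstance, ρ, inferInstance, rfl⟩
  have h1 : ρ.character 1 ≠ 0 := by
    rw [hirr.isChar.one_eq]; exact_mod_cast hirr.deg_pos.ne'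
  have ht := congrArg (LinearMap.trace ℂ V) hc
  rw [map_sum, map_smul] at ht
  have h2 : ∑ g : G, LinearMap.trace ℂ V (ρ (g * x * g⁻¹)) = (Nat.card G : ℂ) * ρ.character x := by
    have : ∀ g : G, LinearMap.trace ℂ V (ρ (g * x * g⁻¹)) = ρ.character x :=
      fun g => char_conj ρ x g
    rw [Finset.sum_congr rfl fun g _ => this g]; simp
  have h3 : LinearMap.trace ℂ V LinearMap.id = ρ.character 1 := by
    rw [Representation.character, map_one]; rfl
  rw [h2, h3, smul_eq_mul] at ht
  rw [hc, ht, mul_div_assoc, div_self h1, mul_one]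

/-- Irreducible characters of `G` with a common constituent on the normal subgroup `N`
have proportional restrictions. -/
theorem proportional [Finite G] (N : Subgroup G) [hN : N.Normal] {W χ : G → ℂ} (hW : Irr W) (hχ : Irr χ)
    (h : ip (χ ∘ N.subtype) (W ∘ N.subtype) ≠ 0) (n : G) (hn : n ∈ N) : χ n * W 1 = W n * χ 1 := by
  have := Fintype.ofFinite G
  have hW1 : W 1 ≠ 0 := by rw [hW.isChar.one_eq]; exact_mod_cast hW.deg_pos.ne'
  have hχ1 : χ 1 ≠ 0 := by rw [hχ.isChar.one_eq]; exact_mod_cast hχ.deg_pos.ne'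
  obtain ⟨V, _, _, _, ρ, hρ, rfl⟩ := hW
  obtain ⟨U, _, _, _, σ, hσ, rfl⟩ := hχ
  have h1 : ip (Representation.character (σ.comp N.subtype))
    (Representation.character (ρ.comp N.subtype)) ≠ 0 := h
  rw [ip_rep] at h1
  have h2 : 0 < finrank ℂ (IntertwiningMap (ρ.comp N.subtype) (σ.comp N.subtype)) :=
    Nat.pos_of_ne_zero (by exact_mod_cast h1)
  obtain ⟨T, hT⟩ := Module.finrank_pos_iff_exists_ne_zero (R := ℂ).1 h2
  have hv : ∃ v, T v ≠ 0 := by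
    by_contra hcon
    push Not at hcon
    apply hT
    ext v
    exact hcon v
  obtain ⟨v, hv⟩ := hv
  have hT' : ∀ m ∈ N, ∀ v, T (ρ m v) = σ m (T v) := fun m hm v =>
    LinearMap.congr_fun (T.isIntertwining' ⟨m, hm⟩) v
  have e1 := LinearMap.congr_fun (sum_conj_scalar ρ n) v
  have e2 := LinearMap.congr_fun (sum_conj_scalar σ n) (T v)
  rw [LinearMap.sum_apply] at e1 e2
  have e3 := congrArg T.toLinearMap e1
  rw [map_sum] at e3
  have e4 : ∑ g : G, T.toLinearMap (ρ (g * n * g⁻¹) v) = ∑ g : G, σ (g * n * g⁻¹) (T v) :=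
    Finset.sum_congr rfl fun g _ => hT' _ (hN.conj_mem n hn g) v
  rw [e4, e2] at e3
  simp only [LinearMap.smul_apply, LinearMap.id_apply, map_smul] at e3
  have e5 := smul_left_injective ℂ hv (show _ • T v = _ • T v from e3)
  have hc : (Nat.card G : ℂ) ≠ 0 := NeZero.ne _
  rw [div_eq_div_iff hχ1 hW1] at e5
  apply mul_left_cancel₀ hc
  linear_combination e5

end schur

section squares
variable {G : Type} [Group G]

theorem trace_swap {V : Type} [AddCommGroup V] [Module ℂ V] [FiniteDimensional ℂ V]
    (A : V →ₗ[ℂ] V) :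
    LinearMap.trace ℂ (TensorProduct ℂ V V)
      (TensorProduct.map A A ∘ₗ (TensorProduct.comm ℂ V V).toLinearMap) =
    LinearMap.trace ℂ V (A ∘ₗ A) := by
  let b := Module.finBasis ℂ V
  rw [LinearMap.trace_eq_matrix_trace ℂ (b.tensorProduct b), LinearMap.trace_eq_matrix_trace ℂ b]
  rw [LinearMap.toMatrix_comp b b b, Matrix.trace, Matrix.trace, Fintype.sum_prod_type]
  refine Finset.sum_congr rfl fun i _ => ?_
  rw [Matrix.diag_apply, Matrix.mul_apply]
  refine Finset.sum_congr rfl fun j _ => ?_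
  rw [Matrix.diag_apply, LinearMap.toMatrix_apply, LinearMap.toMatrix_apply,
    LinearMap.toMatrix_apply]
  simp [Module.Basis.tensorProduct_repr_tmul_apply, mul_comm]

/-- Symmetric square. -/
noncomputable def sy (φ : G → ℂ) : G → ℂ := fun g => (φ g ^ 2 + φ (g * g)) / 2
/-- Exterior square. -/
noncomputable def la (φ : G → ℂ) : G → ℂ := fun g => (φ g ^ 2 - φ (g * g)) / 2

theorem sy_add_la (φ : G → ℂ) : sy φ + la φ = φ * φ := by
  ext g; simp [sy, la]; ring

theorem isChar_sq_aux {φ : G → ℂ} (h : IsChar φ) (c : ℂ) (hc : c * c = 1) :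
    IsChar (fun g => (φ g ^ 2 + c * φ (g * g)) / 2) := by
  obtain ⟨V, _, _, _, ρ, rfl⟩ := h
  let S : TensorProduct ℂ V V →ₗ[ℂ] TensorProduct ℂ V V := (TensorProduct.comm ℂ V V).toLinearMap
  have hS : S ∘ₗ S = LinearMap.id := by ext; simp [S]
  have hcm : ∀ g, (ρ.tprod ρ) g ∘ₗ S = S ∘ₗ (ρ.tprod ρ) g := by
    intro g; ext; simp [S]
  let P : TensorProduct ℂ V V →ₗ[ℂ] TensorProduct ℂ V V := (1/2 : ℂ) • (LinearMap.id + c • S)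
  have := isChar_of_idem (ρ.tprod ρ) P (by
      simp only [P, LinearMap.comp_smul, LinearMap.smul_comp, LinearMap.comp_add,
        LinearMap.add_comp, hS, LinearMap.comp_id, LinearMap.id_comp, smul_smul, smul_add]
      match_scalars
      · linear_combination (1 / 4 : ℂ) * hc
      · ring)
    (by
      intro g
      simp only [P, LinearMap.comp_smul, LinearMap.smul_comp, LinearMap.comp_add,
        LinearMap.add_comp, hcm, LinearMap.comp_id, LinearMap.id_comp])
  convert this using 1
  ext g
  simp only [P, LinearMap.comp_smul, LinearMap.comp_add, LinearMap.comp_id, map_smul, map_add]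
  have h1 := trace_swap (ρ g)
  have h2 : LinearMap.trace ℂ _ ((ρ.tprod ρ) g) = ρ.character g * ρ.character g :=
    congrFun (char_tensor ρ ρ) g
  have h3 : LinearMap.trace ℂ V (ρ g ∘ₗ ρ g) = ρ.character (g * g) := by
    rw [Representation.character, map_mul]; rfl
  have h4 : (ρ.tprod ρ) g ∘ₗ S = TensorProduct.map (ρ g) (ρ g) ∘ₗ
    (TensorProduct.comm ℂ V V).toLinearMap := rfl
  rw [h4, h1, h2, h3]
  simp only [smul_eq_mul]
  ring

theorem IsChar.sy {φ : G → ℂ} (h : IsChar φ) : IsChar (sy φ) := by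
  have h1 := isChar_sq_aux h 1 (by ring)
  simp only [one_mul] at h1
  exact h1

theorem IsChar.la {φ : G → ℂ} (h : IsChar φ) : IsChar (la φ) := by
  have h1 := isChar_sq_aux h (-1) (by ring)
  simp only [neg_one_mul, ← sub_eq_add_neg] at h1
  exact h1

theorem IsChar.matrix {φ : G → ℂ} (h : IsChar φ) {d : ℕ} (hd : charDeg φ = d) :
    ∃ M : G →* Matrix (Fin d) (Fin d) ℂ, ∀ g, φ g = (M g).trace := by
  have h1 := h.one_eq
  obtain ⟨V, _, _, _, ρ, rfl⟩ := h
  rw [char_one] at h1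
  have h2 : finrank ℂ V = d := by rw [← hd]; exact_mod_cast h1
  let b := Module.finBasisOfFinrankEq ℂ V h2
  refine ⟨((LinearMap.toMatrixAlgEquiv b : _ →* _)).comp ρ, fun g => ?_⟩
  rw [Representation.character, LinearMap.trace_eq_matrix_trace ℂ b]
  rfl

/-- An involution on which the character takes its degree acts trivially. -/
theorem IsChar.invol_ker {φ : G → ℂ} (h : IsChar φ) {z : G} (hz : z * z = 1) (h1 : φ z = φ 1)
    (m : G) : φ (z * m) = φ m := by
  obtain ⟨V, _, _, _, ρ, rfl⟩ := h
  have hzz : ρ z * ρ z = 1 := by rw [← map_mul, hz, map_one]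
  let P : V →ₗ[ℂ] V := (1/2 : ℂ) • (1 - ρ z)
  have hP : IsIdempotentElem P := by
    change P * P = P
    simp only [P, smul_mul_smul_comm, sub_mul, mul_sub, one_mul, mul_one, hzz]
    module
  have htr : LinearMap.trace ℂ V P = 0 := by
    simp only [P, map_smul, map_sub]
    have : LinearMap.trace ℂ V 1 = ρ.character 1 := by
      rw [Representation.character, map_one ρ]
    rw [this, ← h1, Representation.character, sub_self, smul_zero]
  have hpr : LinearMap.IsProj (LinearMap.range P) P :=
    ⟨fun x => ⟨x, rfl⟩, by rintro _ ⟨y, rfl⟩; exact LinearMap.congr_fun hP y⟩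
  have hr := hpr.trace
  rw [htr] at hr
  have hr0 : finrank ℂ (LinearMap.range P) = 0 := by exact_mod_cast hr.symm
  rw [Submodule.finrank_eq_zero, LinearMap.range_eq_bot] at hr0
  have hz1 : ρ z = 1 := by
    have h2 : (2 : ℂ) • P = 1 - ρ z := by simp [P, smul_smul]
    rw [hr0, smul_zero] at h2
    exact (sub_eq_zero.1 h2.symm).symm
  rw [Representation.character, map_mul, hz1, one_mul, Representation.character]

end squares
end ACD

namespace ACD
open Representation Module

section perfect
variable {H : Type} [Group H]

theorem hom_trivial_of_perfect (hp : commutator H = ⊤) {M : Type*} [Monoid M] (f : H →* M)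
    (hc : ∀ a b, f a * f b = f b * f a) (a : H) : f a = 1 := by
  have h : commutator H ≤ f.toHomUnits.ker := by
    rw [commutator_def, Subgroup.commutator_le]
    intro x _ y _
    rw [MonoidHom.mem_ker, map_commutatorElement, commutatorElement_eq_one_iff_mul_comm]
    ext
    simpa using hc x y
  have : a ∈ f.toHomUnits.ker := h (by rw [hp]; trivial)
  rw [MonoidHom.mem_ker] at this
  simpa using congrArg Units.val this

theorem det_one_of_perfect (hp : commutator H = ⊤) {d : ℕ} (M : H →* Matrix (Fin d) (Fin d) ℂ)
    (a : H) : (M a).det = 1 :=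
  hom_trivial_of_perfect hp (Matrix.detMonoidHom.comp M) (fun _ _ => mul_comm _ _) a

theorem deg_one_of_perfect (hp : commutator H = ⊤) {φ : H → ℂ} (h : IsChar φ)
    (hd : charDeg φ = 1) : φ = 1 := by
  obtain ⟨M, hM⟩ := h.matrix hd
  ext g
  have := det_one_of_perfect hp M g
  rw [Matrix.det_fin_one] at this
  rw [hM, Matrix.trace_fin_one, this]; rfl

theorem la_eq_dl_of_perfect (hp : commutator H = ⊤) {φ : H → ℂ} (h : IsChar φ)
    (hd : charDeg φ = 3) : la φ = dl φ := by
  obtain ⟨M, hM⟩ := h.matrix hd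
  ext g
  have h1 := det_one_of_perfect hp M g
  have h2 : M g * M g⁻¹ = 1 := by rw [← map_mul, mul_inv_cancel, map_one]
  have h3 : (M g).adjugate = M g⁻¹ := by
    have : (M g).adjugate * (M g * M g⁻¹) = M g⁻¹ := by
      rw [← mul_assoc, Matrix.adjugate_mul, h1, one_smul, one_mul]
    rwa [h2, mul_one] at this
  rw [dl, la, hM, hM, hM, ← h3, map_mul]
  generalize M g = A
  rw [Matrix.adjugate_fin_three]
  simp [Matrix.trace_fin_three, Matrix.mul_apply, Fin.sum_univ_three]
  ring

theorem deg_three_invol (hp : commutator H = ⊤) {φ : H → ℂ} (h : IsChar φ)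
    (hd : charDeg φ = 3) {z : H} (hz : z * z = 1) : φ z = 3 ∨ φ z = -1 := by
  have h1 := congrFun (la_eq_dl_of_perfect hp h hd) z
  have hz' : z⁻¹ = z := inv_eq_of_mul_eq_one_right hz
  rw [la, dl, hz', hz, h.one_eq, hd] at h1
  have : (φ z - 3) * (φ z + 1) = 0 := by push_cast at h1; linear_combination 2 * h1
  rcases mul_eq_zero.1 this with h | h
  · left; linear_combination h
  · right; linear_combination h

theorem deg_two_invol (hp : commutator H = ⊤) (M : H →* Matrix (Fin 2) (Fin 2) ℂ)
    {z : H} (hz : z * z = 1) (A : Matrix (Fin 2) (Fin 2) ℂ) : M z * A = A * M z := by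
  have h1 := det_one_of_perfect hp M z
  have h2 : M z * M z = 1 := by rw [← map_mul, hz, map_one]
  have h3 : (M z).adjugate = M z := by
    have : (M z).adjugate * (M z * M z) = M z := by
      rw [← mul_assoc, Matrix.adjugate_mul, h1, one_smul, one_mul]
    rwa [h2, mul_one] at this
  generalize M z = B at h3
  rw [Matrix.adjugate_fin_two] at h3
  have e0 : B 1 1 = B 0 0 := by simpa using congrFun (congrFun h3 0) 0
  have e1 : B 0 1 = 0 := by
    have : - B 0 1 = B 0 1 := by simpa using congrFun (congrFun h3 0) 1
    linear_combination (-1/2 : ℂ) * this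
  have e2 : B 1 0 = 0 := by
    have : - B 1 0 = B 1 0 := by simpa using congrFun (congrFun h3 1) 0
    linear_combination (-1/2 : ℂ) * this
  ext i j
  fin_cases i <;> fin_cases j <;> simp [Matrix.mul_apply, Fin.sum_univ_two, e0, e1, e2, mul_comm]

variable [Finite H]

theorem mult_one_eq_one {φ : H → ℂ} (h : Irr φ) : mult (φ * dl φ) 1 = 1 := by
  rw [mult_mul_left, dl_dl, one_mul, h.mult_self]

theorem odd_no_real (ho : Odd (Nat.card H)) {φ : H → ℂ} (h : Irr φ) (h1 : φ ≠ 1) : dl φ ≠ φ := by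
  intro hr
  have := Fintype.ofFinite H
  have e1 : mult (φ * φ) 1 = 1 := by
    conv_lhs => rw [← hr]
    rw [mult_comm, ← mult_dl, dl_mul, dl_dl, dl_one, mult_comm]
    conv_lhs => arg 1; arg 2; rw [← hr]
    exact mult_one_eq_one h
  rw [← sy_add_la, mult_add_left h.isChar.sy h.isChar.la isChar_one] at e1
  have e2 : ip (sy φ) 1 - ip (la φ) 1 = ip φ 1 := by
    rw [ip_def, ip_def, ip_def, ← mul_sub, ← Finset.sum_sub_distrib]
    congr 1
    have hb : Function.Bijective (fun g : H => g ^ 2) := by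
      have := (Nat.coprime_two_right.2 ho)
      exact (powCoprime this).bijective
    rw [← hb.sum_comp (fun g => φ g * (1 : H → ℂ) g⁻¹)]
    refine Finset.sum_congr rfl fun g _ => ?_
    simp [sy, la, pow_two]; ring
  rw [h.ip_ne irr_one h1, ← h.isChar.sy.cast_mult isChar_one,
    ← h.isChar.la.cast_mult isChar_one, sub_eq_zero] at e2
  have e3 : mult (sy φ) 1 = mult (la φ) 1 := by exact_mod_cast e2
  omega

theorem odd_deg (ho : Odd (Nat.card H)) {φ : H → ℂ} (h : Irr φ) : Odd (charDeg φ) := by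
  have hc := h.isChar.mul h.isChar.dl
  have h1 := mult_one_eq_one h
  obtain ⟨τ, hτ, he, hd⟩ := hc.split irr_one (by rw [h1]; exact one_ne_zero)
  have hdl : dl τ = τ := by
    have h2 : dl (φ * dl φ) = φ * dl φ := by rw [dl_mul, dl_dl, mul_comm]
    rw [he, dl_add, dl_one] at h2
    exact add_left_cancel h2
  have hm : mult τ 1 = 0 := by
    rw [he, mult_add_left isChar_one hτ isChar_one, irr_one.mult_self] at h1
    omega
  have hev : ((charDeg τ : ℕ) : ZMod 2) = 0 := by
    rw [hτ.deg_eq_sum, Nat.cast_sum]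
    refine Finset.sum_involution (fun χ _ => dl χ) ?_ ?_ ?_ ?_
    · intro χ _
      have : mult τ (dl χ) = mult τ χ := by
        conv_lhs => rw [← hdl]
        exact mult_dl
      rw [this, deg_dl]
      exact CharTwo.add_self_eq_zero _
    · intro χ hχ hne hcon
      by_cases h1 : χ = 1
      · subst h1; simp [hm] at hne
      · exact odd_no_real ho (mem_irr.1 hχ) h1 hcon
    · intro χ hχ; exact mem_irr.2 (mem_irr.1 hχ).dl
    · intro χ _; exact dl_dl
  rw [ZMod.natCast_eq_zero_iff_even] at hev
  rw [deg_mul h.isChar h.isChar.dl, deg_dl, deg_one] at hd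
  rw [← Nat.not_even_iff_odd]
  intro hcon
  have := hcon.mul_left (charDeg φ)
  rw [hd] at this
  rw [Nat.even_add] at this
  simp [hev] at this

theorem even_of_small (hp : commutator H = ⊤) {φ : H → ℂ} (h : Irr φ)
    (hd : charDeg φ = 2 ∨ charDeg φ = 3) : 2 ∣ Nat.card H := by
  rw [← even_iff_two_dvd]
  by_contra ho
  rw [Nat.not_even_iff_odd] at ho
  have hodd : ∀ χ : H → ℂ, Irr χ → χ ≠ 1 → 3 ≤ charDeg χ ∧ charDeg χ ≠ 4 := by
    intro χ hχ h1
    have := odd_deg ho hχ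
    have h2 : charDeg χ ≠ 1 := fun h2 => h1 (deg_one_of_perfect hp hχ.isChar h2)
    obtain ⟨k, hk⟩ := this
    omega
  rcases hd with hd | hd
  · have := odd_deg ho h; rw [hd] at this; exact absurd this (by decide)
  have hc := h.isChar.mul h.isChar.dl
  have h1 := mult_one_eq_one h
  obtain ⟨τ, hτ, he, hdt⟩ := hc.split irr_one (by rw [h1]; exact one_ne_zero)
  rw [deg_mul h.isChar h.isChar.dl, deg_dl, deg_one, hd] at hdt
  have hdl : dl τ = τ := by
    have h2 : dl (φ * dl φ) = φ * dl φ := by rw [dl_mul, dl_dl, mul_comm]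
    rw [he, dl_add, dl_one] at h2
    exact add_left_cancel h2
  have hm : mult τ 1 = 0 := by
    rw [he, mult_add_left isChar_one hτ isChar_one, irr_one.mult_self] at h1
    omega
  obtain ⟨α, hα, hαm⟩ := hτ.exists_constituent (by omega)
  have hα1 : α ≠ 1 := by rintro rfl; exact hαm hm
  obtain ⟨β, hβ, hβe, hβd⟩ := hτ.split hα hαm
  have hβm : mult β (dl α) ≠ 0 := by
    have : mult τ (dl α) = mult τ α := by
      conv_lhs => rw [← hdl]
      exact mult_dl
    rw [← this, hβe, mult_add_left hα.isChar hβ hα.dl.isChar,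
      hα.mult_ne hα.dl (odd_no_real ho hα hα1).symm, zero_add] at hαm
    exact hαm
  obtain ⟨γ, hγ, hγe, hγd⟩ := hβ.split hα.dl hβm
  rw [deg_dl] at hγd
  have := hodd α hα hα1
  obtain ⟨δ, hδ, hδm⟩ := hγ.exists_constituent (by omega)
  have hδ1 : δ ≠ 1 := by
    rintro rfl
    apply hδm
    rw [hβe, hγe, mult_add_left hα.isChar (hα.dl.isChar.add hγ) isChar_one,
      mult_add_left hα.dl.isChar hγ isChar_one] at hm
    omega
  obtain ⟨_, _, _, hd'⟩ := hγ.split hδ hδm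
  have := hodd δ hδ hδ1
  omega

end perfect

/-- Standing hypotheses: `N` is a nonabelian minimal normal subgroup. -/
structure Ctx {G : Type} [Group G] (N : Subgroup G) : Prop where
  nor : N.Normal
  mn : ∀ K : Subgroup G, K.Normal → K ≤ N → K = ⊥ ∨ K = N
  na : ∃ x y : N, x * y ≠ y * x

section ctx
variable {G : Type} [Group G] {N : Subgroup G}

theorem Ctx.perfect (c : Ctx N) : commutator N = ⊤ := by
  have := c.nor
  have h := Subgroup.map_subtype_commutator N
  rcases c.mn ⁅N, N⁆ inferInstance (Subgroup.commutator_le_left _ _) with h0 | h0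
  · exfalso
    obtain ⟨x, y, hxy⟩ := c.na
    rw [h0, Subgroup.map_eq_bot_iff_of_injective _ N.subtype_injective] at h
    apply hxy
    rw [← commutatorElement_eq_one_iff_mul_comm, ← Subgroup.mem_bot, ← h, commutator_def]
    exact Subgroup.commutator_mem_commutator trivial trivial
  · rw [h0] at h
    apply Subgroup.map_injective N.subtype_injective
    rw [h, ← MonoidHom.range_eq_map, Subgroup.range_subtype]

/-- A subgroup of `N` invariant under `G`-conjugation is trivial or everything. -/
theorem Ctx.dichotomy (c : Ctx N) (K : Subgroup N)
    (hK : ∀ (g : G) (n m : N), n ∈ K → (m : G) = g * n * g⁻¹ → m ∈ K) : K = ⊥ ∨ K = ⊤ := by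
  have hN := c.nor
  have hnor : (K.map N.subtype).Normal := by
    constructor
    rintro _ ⟨n, hn, rfl⟩ g
    exact ⟨⟨g * n * g⁻¹, hN.conj_mem _ n.2 g⟩, hK g n _ hn rfl, rfl⟩
  rcases c.mn _ hnor (by rintro _ ⟨n, _, rfl⟩; exact n.2) with h | h
  · left; exact (Subgroup.map_eq_bot_iff_of_injective _ N.subtype_injective).1 h
  · right
    apply Subgroup.map_injective N.subtype_injective
    rw [h, ← MonoidHom.range_eq_map, Subgroup.range_subtype]

variable [Finite G]

theorem Ctx.no_deg_two (c : Ctx N) {θ : N → ℂ} (h : Irr θ) : charDeg θ ≠ 2 := by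
  intro hd
  have hN := c.nor
  obtain ⟨M, hM⟩ := h.isChar.matrix hd
  obtain ⟨z, hz⟩ := exists_prime_orderOf_dvd_card' 2 (even_of_small c.perfect h (Or.inl hd))
  let K : Subgroup N :=
    { carrier := {n | ∀ (g : G) (m : N), (m : G) = g * n * g⁻¹ → ∀ k : N, M m * M k = M k * M m}
      one_mem' := by
        intro g m hm k
        have : m = 1 := by ext; simpa using hm
        simp [this]
      mul_mem' := by
        intro a b ha hb g m hm k
        have h1 := ha g ⟨g * a * g⁻¹, hN.conj_mem _ a.2 g⟩ rfl
        have h2 := hb g ⟨g * b * g⁻¹, hN.conj_mem _ b.2 g⟩ rfl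
        have : m = ⟨g * a * g⁻¹, hN.conj_mem _ a.2 g⟩ * ⟨g * b * g⁻¹, hN.conj_mem _ b.2 g⟩ := by
          ext; simp [hm]
        rw [this, map_mul, mul_assoc, h2, ← mul_assoc, h1, mul_assoc]
      inv_mem' := by
        intro a ha g m hm k
        have h1 := ha g m⁻¹ (by simp [hm, mul_assoc])  k
        have e1 : M m * M m⁻¹ = 1 := by rw [← map_mul, mul_inv_cancel, map_one]
        have e2 : M m⁻¹ * M m = 1 := by rw [← map_mul, inv_mul_cancel, map_one]
        calc M m * M k = M m * (M k * M m⁻¹) * M m := by rw [mul_assoc, mul_assoc, e2, mul_one]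
          _ = M m * (M m⁻¹ * M k) * M m := by rw [h1]
          _ = M k * M m := by rw [← mul_assoc, e1, one_mul] }
  rcases c.dichotomy K (by
    intro g n m hn hm g' m' hm' k
    refine hn (g' * g) m' ?_ k
    rw [hm', hm]; group) with hK | hK
  · have hzK : z ∈ K := by
      intro g m hm k
      apply deg_two_invol c.perfect M
      have hzz : (z : G) * z = 1 := by
        have := pow_orderOf_eq_one z
        rw [hz, pow_two] at this
        simpa using congrArg Subtype.val this
      ext
      simp only [Subgroup.coe_mul, hm, Subgroup.coe_one]
      calc g * z * g⁻¹ * (g * z * g⁻¹) = g * ((z : G) * z) * g⁻¹ := by group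
        _ = 1 := by rw [hzz]; group
    rw [hK, Subgroup.mem_bot] at hzK
    rw [hzK, orderOf_one] at hz
    omega
  · have htr : ∀ a, M a = 1 := hom_trivial_of_perfect c.perfect M (by
      intro a b
      have : a ∈ K := by rw [hK]; trivial
      exact this 1 a (by simp) b)
    have hc : θ = 2 • (1 : N → ℂ) := by
      ext g
      rw [hM, htr]
      simp
    have h1 := h.mult_self
    rw [hc, mult_nsmul_left isChar_one (isChar_one.nsmul 2), mult_nsmul_right isChar_one isChar_one,
      irr_one.mult_self] at h1
    omega

theorem Ctx.three_le (c : Ctx N) {θ : N → ℂ} (h : Irr θ) (h1 : θ ≠ 1) : 3 ≤ charDeg θ := by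
  have := h.deg_pos
  have := c.no_deg_two h
  have : charDeg θ ≠ 1 := fun hd => h1 (deg_one_of_perfect c.perfect h.isChar hd)
  omega

end ctx
end ACD

set_option linter.unusedSectionVars false

namespace ACD
open Representation Module

section rs
variable {G : Type} [Group G] (N : Subgroup G) {φ ψ χ W : G → ℂ}

/-- Restriction of functions to `N`. -/
def rs (φ : G → ℂ) : N → ℂ := fun n => φ n

variable {N}

theorem rs_apply (n : N) : rs N φ n = φ n := rfl
theorem rs_add : rs N (φ + ψ) = rs N φ + rs N ψ := rfl
theorem rs_mul : rs N (φ * ψ) = rs N φ * rs N ψ := rfl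
theorem rs_one : rs N (1 : G → ℂ) = 1 := rfl
theorem rs_zero : rs N (0 : G → ℂ) = 0 := rfl
theorem rs_dl : rs N (dl φ) = dl (rs N φ) := rfl
theorem rs_sy : rs N (sy φ) = sy (rs N φ) := rfl
theorem rs_la : rs N (la φ) = la (rs N φ) := rfl
theorem rs_nsmul (n : ℕ) : rs N (n • φ) = n • rs N φ := rfl
theorem rs_sum {ι : Type*} (s : Finset ι) (f : ι → G → ℂ) :
    rs N (∑ i ∈ s, f i) = ∑ i ∈ s, rs N (f i) := by
  ext n; simp [rs]
theorem IsChar.rs (h : IsChar φ) : IsChar (rs N φ) := h.comp N.subtype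
theorem deg_rs : charDeg (rs N φ) = charDeg φ := rfl

end rs

section gen
variable {H : Type} [Group H] [Finite H] {φ ψ χ : H → ℂ}

theorem IsChar.mult_self_pos (h : IsChar φ) (h0 : charDeg φ ≠ 0) : 0 < mult φ φ := by
  obtain ⟨χ, hχ, hm⟩ := h.exists_constituent h0
  rw [h.mult_eq_sum h]
  exact Finset.sum_pos' (fun _ _ => Nat.zero_le _) ⟨χ, mem_irr.2 hχ, by positivity⟩

theorem IsChar.mult_le_of_constituent (h : IsChar φ) (hχ : Irr χ) (hm : mult φ χ ≠ 0)
    (hψ : IsChar ψ) : mult χ ψ ≤ mult φ ψ := by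
  obtain ⟨τ, hτ, he, -⟩ := h.split hχ hm
  rw [he, mult_add_left hχ.isChar hτ hψ]
  omega

theorem IsChar.exists_common (h : IsChar φ) (h' : IsChar ψ) (hm : mult φ ψ ≠ 0) :
    ∃ χ, Irr χ ∧ mult φ χ ≠ 0 ∧ mult ψ χ ≠ 0 := by
  rw [h.mult_eq_sum h'] at hm
  obtain ⟨χ, hχ, hne⟩ := Finset.exists_ne_zero_of_sum_ne_zero hm
  exact ⟨χ, mem_irr.1 hχ, left_ne_zero_of_mul hne, right_ne_zero_of_mul hne⟩

theorem IsChar.deg_le_of_constituent (h : IsChar φ) (hχ : Irr χ) (hm : mult φ χ ≠ 0) :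
    charDeg χ ≤ charDeg φ := by
  obtain ⟨τ, hτ, he, hd⟩ := h.split hχ hm
  omega

/-- If a character has norm one it is irreducible; sums of two nonzero characters do not. -/
theorem two_le_mult_add (h : IsChar φ) (h' : IsChar ψ) (h0 : charDeg φ ≠ 0) (h0' : charDeg ψ ≠ 0) :
    2 ≤ mult (φ + ψ) (φ + ψ) := by
  have := h.mult_self_pos h0
  have := h'.mult_self_pos h0'
  rw [mult_add_left h h' (h.add h'), mult_add_right h h' h, mult_add_right h h' h']
  omega

end gen

section ctx
variable {G : Type} [Group G] [Finite G] (N : Subgroup G) {φ ψ χ W U : G → ℂ}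

/-- Inner product of restrictions to `N`. -/
noncomputable def mN (φ ψ : G → ℂ) : ℕ := mult (rs N φ) (rs N ψ)

variable {N}

theorem mN_comm : mN N φ ψ = mN N ψ φ := mult_comm
theorem mN_dl : mN N (dl φ) (dl ψ) = mN N φ ψ := by rw [mN, rs_dl, rs_dl, mult_dl, mN]
theorem mN_add_left (h : IsChar φ) (h' : IsChar ψ) (h'' : IsChar χ) :
    mN N (φ + ψ) χ = mN N φ χ + mN N ψ χ := mult_add_left h.rs h'.rs h''.rs
theorem mN_add_right (h : IsChar φ) (h' : IsChar ψ) (h'' : IsChar χ) :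
    mN N χ (φ + ψ) = mN N χ φ + mN N χ ψ := mult_add_right h.rs h'.rs h''.rs
theorem mN_mul_left : mN N (φ * χ) ψ = mN N φ (ψ * dl χ) := mult_mul_left
theorem mN_nsmul_left (h : IsChar φ) (h' : IsChar ψ) (n : ℕ) : mN N (n • φ) ψ = n * mN N φ ψ :=
  mult_nsmul_left h.rs h'.rs n

theorem IsChar.mN_le_of_constituent (h : IsChar φ) (hχ : Irr χ) (hm : mult φ χ ≠ 0)
    (hψ : IsChar ψ) : mN N χ ψ ≤ mN N φ ψ := by
  obtain ⟨τ, hτ, he, -⟩ := h.split hχ hm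
  rw [he, mN_add_left hχ.isChar hτ hψ]
  omega

theorem IsChar.mN_self_pos (h : IsChar φ) (h0 : charDeg φ ≠ 0) : 0 < mN N φ φ :=
  h.rs.mult_self_pos h0

theorem Irr.mN_self_pos (h : Irr φ) : 0 < mN N φ φ := h.isChar.mN_self_pos h.deg_pos.ne'

theorem IsChar.mN_eq_sum (h : IsChar φ) (h' : IsChar ψ) :
    mN N φ ψ = ∑ χ ∈ irr G, mult φ χ * mN N χ ψ := by
  have e : ACD.rs N φ = ∑ χ ∈ irr G, mult φ χ • ACD.rs N χ := by
    conv_lhs => rw [h.eq_sum]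
    rw [rs_sum]
    rfl
  rw [mN, e, mult_sum_left _ _ (fun i hi => (mem_irr.1 hi).isChar.rs.nsmul _) h'.rs]
  exact Finset.sum_congr rfl fun i hi => mult_nsmul_left (mem_irr.1 hi).isChar.rs h'.rs _

theorem IsChar.exists_constituent_mN (h : IsChar φ) (h' : IsChar ψ) (hm : mN N φ ψ ≠ 0) :
    ∃ χ, Irr χ ∧ mult φ χ ≠ 0 ∧ mN N χ ψ ≠ 0 := by
  rw [h.mN_eq_sum h'] at hm
  obtain ⟨χ, hχ, hne⟩ := Finset.exists_ne_zero_of_sum_ne_zero hm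
  exact ⟨χ, mem_irr.1 hχ, left_ne_zero_of_mul hne, right_ne_zero_of_mul hne⟩

theorem IsChar.irr_of_mN (h : IsChar φ) (h1 : mN N φ φ = 1) : Irr φ := by
  have h0 : charDeg φ ≠ 0 := by
    intro h0
    have := h.eq_zero_of_deg h0
    subst this
    rw [mN, rs_zero, mult_zero_left] at h1
    omega
  obtain ⟨χ, hχ, hm⟩ := h.exists_constituent h0
  obtain ⟨τ, hτ, he, hd⟩ := h.split hχ hm
  by_cases hτ0 : charDeg τ = 0
  · rw [he, hτ.eq_zero_of_deg hτ0, add_zero]; exact hχ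
  · exfalso
    have := two_le_mult_add (hχ.isChar.rs (N := N)) (hτ.rs (N := N)) hχ.deg_pos.ne' hτ0
    rw [← rs_add, ← he] at this
    unfold mN at h1
    omega

variable [hN : N.Normal]

theorem prop_rs (hW : Irr W) (hχ : Irr χ) (h : mN N χ W ≠ 0) :
    charDeg W • rs N χ = charDeg χ • rs N W := by
  ext n
  have h1 : ip (χ ∘ N.subtype) (W ∘ N.subtype) ≠ 0 := by
    have := (hχ.isChar.rs (N := N)).cast_mult (hW.isChar.rs (N := N))
    change ip (rs N χ) (rs N W) ≠ 0
    rw [← this]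
    exact_mod_cast h
  have := proportional N hW hχ h1 n n.2
  rw [hW.isChar.one_eq, hχ.isChar.one_eq] at this
  simp only [Pi.smul_apply, nsmul_eq_mul, rs_apply]
  rw [mul_comm, this, mul_comm]

theorem prop_mN (hW : Irr W) (hχ : Irr χ) (h : mN N χ W ≠ 0) (hφ : IsChar φ) :
    charDeg W * mN N χ φ = charDeg χ * mN N W φ := by
  rw [mN, mN, ← mult_nsmul_left hχ.isChar.rs hφ.rs, ← mult_nsmul_left hW.isChar.rs hφ.rs,
    prop_rs hW hχ h]

theorem mN_trans (hχ : Irr χ) (hW : Irr W) (hU : Irr U) (h : mN N χ W ≠ 0) (h' : mN N W U ≠ 0) :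
    mN N χ U ≠ 0 := by
  have := prop_mN hW hχ h hU.isChar
  intro h0
  rw [h0, mul_zero] at this
  rcases Nat.mul_eq_zero.1 this.symm with h2 | h2
  · exact hχ.deg_pos.ne' h2
  · exact h' h2

theorem triv_rs (hχ : Irr χ) (h : mN N χ 1 ≠ 0) : rs N χ = charDeg χ • (1 : N → ℂ) := by
  have := prop_rs irr_one hχ h
  rwa [deg_one, one_smul] at this

theorem triv_mN (hχ : Irr χ) (h : mN N χ 1 ≠ 0) (hφ : IsChar φ) :
    mN N χ φ = charDeg χ * mN N 1 φ := by
  have := prop_mN irr_one hχ h hφ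
  rwa [deg_one, one_mul] at this

theorem mN_one_one : mN N (1 : G → ℂ) 1 = 1 := by rw [mN, rs_one, irr_one.mult_self]

theorem mN_one_le (hφ : IsChar φ) : mN N φ 1 ≤ charDeg φ := by
  classical
  rw [mN, rs_one, ← deg_rs (N := N)]
  have h := hφ.rs (N := N)
  rw [h.deg_eq_sum, ← Finset.add_sum_erase _ _ (mem_irr.2 (irr_one (G := N))), deg_one]
  omega

theorem IsChar.exists_nontriv (hφ : IsChar φ) (h : mN N φ 1 < charDeg φ) :
    ∃ χ, Irr χ ∧ mult φ χ ≠ 0 ∧ mN N χ 1 = 0 := by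
  by_contra hcon
  push Not at hcon
  apply h.ne
  rw [hφ.mN_eq_sum isChar_one, hφ.deg_eq_sum]
  refine Finset.sum_congr rfl fun χ hχ => ?_
  by_cases hm : mult φ χ = 0
  · rw [hm, zero_mul, zero_mul]
  · rw [triv_mN (mem_irr.1 hχ) (hcon χ (mem_irr.1 hχ) hm) isChar_one, mN_one_one, mul_one]

theorem Ctx.norm_bound (c : Ctx N) {θ : N → ℂ} (h : IsChar θ) (h1 : mult θ 1 = 0) :
    mult θ θ ≤ (charDeg θ / 3) ^ 2 := by
  set k := ∑ χ ∈ irr N, mult θ χ with hk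
  have h3 : 3 * k ≤ charDeg θ := by
    rw [h.deg_eq_sum, hk, Finset.mul_sum]
    refine Finset.sum_le_sum fun χ hχ => ?_
    by_cases hχ1 : χ = 1
    · rw [hχ1, h1]; simp
    · rw [mul_comm]
      exact Nat.mul_le_mul_left _ (c.three_le (mem_irr.1 hχ) hχ1)
  have h4 : mult θ θ ≤ k ^ 2 := by
    rw [h.mult_eq_sum h, hk, pow_two, Finset.sum_mul]
    refine Finset.sum_le_sum fun χ hχ => Nat.mul_le_mul_left _ ?_
    exact Finset.single_le_sum (f := fun χ => mult θ χ) (fun _ _ => Nat.zero_le _) hχ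
  exact h4.trans (Nat.pow_le_pow_left (by omega) 2)

theorem Ctx.mN_bound (c : Ctx N) (h : IsChar φ) (h1 : mN N φ 1 = 0) :
    mN N φ φ ≤ (charDeg φ / 3) ^ 2 := c.norm_bound h.rs h1

theorem Ctx.mN_self_one (c : Ctx N) (h : IsChar φ) (h1 : mN N φ 1 = 0) (h0 : charDeg φ ≠ 0)
    (h5 : charDeg φ ≤ 5) : mN N φ φ = 1 := by
  have := c.mN_bound h h1
  have h2 := h.mN_self_pos (N := N) h0
  have h3 : charDeg φ / 3 ≤ 1 := by omega
  have h4 := Nat.pow_le_pow_left h3 2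
  omega

theorem Ctx.three_le_char (c : Ctx N) (h : IsChar φ) (h1 : mN N φ 1 = 0) (h0 : charDeg φ ≠ 0) :
    3 ≤ charDeg φ := by
  have := c.mN_bound h h1
  have h2 := h.mN_self_pos (N := N) h0
  by_contra hcon
  have h3 : charDeg φ / 3 = 0 := by omega
  rw [h3] at this
  omega

theorem Ctx.irr_small (c : Ctx N) (h : IsChar φ) (h1 : mN N φ 1 = 0) (h0 : charDeg φ ≠ 0)
    (h5 : charDeg φ ≤ 5) : Irr φ := h.irr_of_mN (c.mN_self_one h h1 h0 h5)

theorem Ctx.ker_dichotomy (c : Ctx N) (h : IsChar φ) :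
    (∀ n : N, (∀ m : N, φ (n * m) = φ m) → n = 1) ∨ ∀ n : N, φ n = φ 1 := by
  let K : Subgroup N :=
    { carrier := {n | ∀ m : N, φ (n * m) = φ m}
      one_mem' := by intro m; simp
      mul_mem' := by
        intro a b ha hb m
        have := ha (b * m)
        simp only [Subgroup.coe_mul] at this ⊢
        rw [mul_assoc, this, hb]
      inv_mem' := by
        intro a ha m
        have := ha (a⁻¹ * m)
        simp only [Subgroup.coe_mul, Subgroup.coe_inv] at this ⊢
        rw [← this, mul_inv_cancel_left] }
  rcases c.dichotomy K (by
    intro g n m hn hm k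
    have hk := hn ⟨g⁻¹ * k * g, by simpa using hN.conj_mem _ k.2 g⁻¹⟩
    simp only at hk
    have e1 : φ (m * k) = φ (n * (g⁻¹ * k * g)) := by
      rw [hm, ← h.conj g (n * (g⁻¹ * k * g))]
      congr 1; group
    have e2 : φ (k : G) = φ (g⁻¹ * k * g) := by
      rw [← h.conj g (g⁻¹ * k * g)]
      congr 1; group
    rw [e1, hk, e2]) with hK | hK
  · left
    intro n hn
    have : n ∈ K := hn
    rwa [hK, Subgroup.mem_bot] at this
  · right
    intro n
    have : n ∈ K := by rw [hK]; trivial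
    have := this 1
    simpa using this

theorem Ctx.ker_trivial (c : Ctx N) (h : IsChar φ) (h1 : mN N φ 1 = 0) (h0 : charDeg φ ≠ 0)
    (n : N) (hn : ∀ m : N, φ (n * m) = φ m) : n = 1 := by
  rcases c.ker_dichotomy h with hk | hk
  · exact hk n hn
  · exfalso
    have : rs N φ = charDeg φ • (1 : N → ℂ) := by
      ext n
      rw [rs_apply, hk, h.one_eq]
      simp
    rw [mN, this, rs_one, mult_nsmul_left isChar_one isChar_one, irr_one.mult_self] at h1
    omega

theorem Ctx.deg_three_neg (c : Ctx N) (h : IsChar φ) (h1 : mN N φ 1 = 0) (hd : charDeg φ = 3)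
    {z : N} (hz : z * z = 1) (hz1 : z ≠ 1) : φ z = -1 := by
  rcases deg_three_invol c.perfect (h.rs (N := N)) hd hz with h3 | h3
  · exfalso
    apply hz1
    apply c.ker_trivial h h1 (by omega) z
    intro m
    refine (h.rs (N := N)).invol_ker hz ?_ m
    rw [h3, rs_apply]
    simp [h.one_eq, hd]
  · exact h3

end ctx
end ACD

set_option linter.unusedSectionVars false

namespace ACD
open Representation Module

section perm
variable {G : Type} [Group G]

/-- The permutation character. -/
noncomputable def pch (G : Type) [Group G] (X : Type) [MulAction G X] : G → ℂ :=
  fun g => (Nat.card (MulAction.fixedBy X g) : ℂ)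

theorem isChar_pch (X : Type) [MulAction G X] [Finite X] : IsChar (pch G X) := by
  classical
  have := Fintype.ofFinite X
  let ρ : Representation ℂ G (X → ℂ) :=
    { toFun := fun g => LinearMap.funLeft ℂ ℂ (fun x => g⁻¹ • x)
      map_one' := by ext; simp [LinearMap.funLeft_apply]
      map_mul' := by
        intro a b
        ext f x
        simp [mul_smul, Function.comp_def, LinearMap.funLeft_apply] }
  refine ⟨X → ℂ, _, _, inferInstance, ρ, ?_⟩
  ext g
  rw [Representation.character, LinearMap.trace_eq_matrix_trace ℂ (Pi.basisFun ℂ X), Matrix.trace]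
  have : ∀ x : X, (LinearMap.toMatrix (Pi.basisFun ℂ X) (Pi.basisFun ℂ X) (ρ g)).diag x =
      if g • x = x then 1 else 0 := by
    intro x
    rw [Matrix.diag_apply, LinearMap.toMatrix_apply]
    simp only [Pi.basisFun_apply, Pi.basisFun_repr, ρ, MonoidHom.coe_mk, OneHom.coe_mk,
      LinearMap.funLeft_apply, Pi.single_apply]
    congr 1
    rw [inv_smul_eq_iff]
    exact propext eq_comm
  rw [Finset.sum_congr rfl fun x _ => this x, Finset.sum_boole, pch]
  congr 1
  rw [Nat.card_eq_fintype_card, Fintype.card_subtype]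
  rfl

theorem ip_pch_one (X : Type) [MulAction G X] [Finite X] [Finite G] :
    ip (pch G X) 1 = Nat.card (MulAction.orbitRel.Quotient G X) := by
  classical
  have := Fintype.ofFinite X
  have := Fintype.ofFinite G
  have := Fintype.ofFinite (MulAction.orbitRel.Quotient G X)
  have h := MulAction.sum_card_fixedBy_eq_card_orbits_mul_card_group G X
  rw [ip_def]
  have hc : (Nat.card G : ℂ) ≠ 0 := NeZero.ne _
  rw [inv_mul_eq_iff_eq_mul₀ hc]
  have h2 : ∑ g : G, pch G X g * (1 : G → ℂ) g⁻¹ = ((∑ g : G, Fintype.card (MulAction.fixedBy X g) : ℕ) : ℂ) := by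
    push_cast
    refine Finset.sum_congr rfl fun g _ => ?_
    rw [pch, Nat.card_eq_fintype_card]; simp
  rw [h2, h, Nat.card_eq_fintype_card, Nat.card_eq_fintype_card]
  push_cast; ring

theorem pch_prod (X Y : Type) [MulAction G X] [MulAction G Y] :
    pch G (X × Y) = pch G X * pch G Y := by
  ext g
  simp only [pch, Pi.mul_apply]
  rw [← Nat.cast_mul, ← Nat.card_prod]
  congr 1
  refine Nat.card_congr ⟨fun x => (⟨x.1.1, congrArg Prod.fst x.2⟩, ⟨x.1.2, congrArg Prod.snd x.2⟩),
    fun x => ⟨(x.1.1, x.2.1), Prod.ext x.1.2 x.2.2⟩, fun _ => rfl, fun _ => rfl⟩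

theorem dl_pch (X : Type) [MulAction G X] : dl (pch G X) = pch G X := by
  ext g
  rw [dl, pch, pch, MulAction.fixedBy_inv]

end perm

section block
variable {G : Type} [Group G] [Finite G] {N : Subgroup G} [hN : N.Normal] {φ ψ χ W U : G → ℂ}

theorem ip_quot (φ χ : G → ℂ) :
    ip (pch G (G ⧸ N) * φ) χ = ip (rs N φ) (rs N χ) := by
  classical
  have := Fintype.ofFinite G
  have hval : ∀ g : G, pch G (G ⧸ N) g = if g ∈ N then (Nat.card (G ⧸ N) : ℂ) else 0 := by
    intro g
    rw [pch]
    split_ifs with hg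
    · congr 1
      have : MulAction.fixedBy (G ⧸ N) g = Set.univ := by
        ext x
        induction x using QuotientGroup.induction_on with
        | H x =>
        simp only [MulAction.mem_fixedBy, Set.mem_univ, iff_true]
        rw [MulAction.Quotient.smul_coe, QuotientGroup.eq]
        have := hN.conj_mem _ (N.inv_mem hg) x⁻¹
        simpa [mul_assoc] using this
      rw [this]
      exact Nat.card_congr (Equiv.Set.univ _)
    · rw [Nat.cast_eq_zero, Nat.card_eq_zero]
      left
      refine ⟨fun ⟨x, hx⟩ => hg ?_⟩
      induction x using QuotientGroup.induction_on with
      | H x =>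
      rw [MulAction.mem_fixedBy, MulAction.Quotient.smul_coe, QuotientGroup.eq] at hx
      have := hN.conj_mem _ hx x
      have h2 := N.inv_mem this
      simpa [mul_assoc] using h2
  rw [ip_def, ip_def, N.card_eq_card_quotient_mul_card_subgroup]
  have h1 : ∑ g : G, (pch G (G ⧸ N) * φ) g * χ g⁻¹ =
      (Nat.card (G ⧸ N) : ℂ) * ∑ n : N, φ n * χ (n : G)⁻¹ := by
    have : ∀ g : G, (pch G (G ⧸ N) * φ) g * χ g⁻¹ =
        if g ∈ N then (Nat.card (G ⧸ N) : ℂ) * (φ g * χ g⁻¹) else 0 := by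
      intro g
      rw [Pi.mul_apply, hval]
      split_ifs <;> ring
    rw [Finset.sum_congr rfl fun g _ => this g, ← Finset.sum_filter, Finset.mul_sum]
    exact (Finset.sum_subtype _ (by simp) _)
  rw [h1]
  have hq : (Nat.card (G ⧸ N) : ℂ) ≠ 0 := NeZero.ne _
  have hn : (Nat.card N : ℂ) ≠ 0 := NeZero.ne _
  push_cast
  field_simp
  rfl

variable (N) in
/-- Irreducible characters of `G` trivial on `N`. -/
noncomputable def I0 : Finset (G → ℂ) := by
  classical exact (irr G).filter fun χ => mN N χ 1 ≠ 0

variable (N) in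
/-- Irreducible characters of `G` nontrivial on `N`. -/
noncomputable def I1 : Finset (G → ℂ) := by
  classical exact (irr G).filter fun χ => mN N χ 1 = 0

theorem mem_I0 : χ ∈ I0 N ↔ Irr χ ∧ mN N χ 1 ≠ 0 := by simp [I0, mem_irr]
theorem mem_I1 : χ ∈ I1 N ↔ Irr χ ∧ mN N χ 1 = 0 := by simp [I1, mem_irr]

theorem sum_split {M : Type*} [AddCommMonoid M] (f : (G → ℂ) → M) :
    ∑ χ ∈ irr G, f χ = ∑ χ ∈ I0 N, f χ + ∑ χ ∈ I1 N, f χ := by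
  classical
  have h := Finset.sum_filter_add_sum_filter_not (irr G) (fun χ => mN N χ 1 ≠ 0) f
  rw [← h]
  have e0 : (irr G).filter (fun χ => mN N χ 1 ≠ 0) = I0 N := by
    ext; simp [I0, mem_irr]
  have e1 : (irr G).filter (fun χ => ¬ mN N χ 1 ≠ 0) = I1 N := by
    ext; simp [I1, mem_irr]
  rw [e0, e1]

theorem quot_eq : pch G (G ⧸ N) = ∑ ψ ∈ I0 N, charDeg ψ • ψ := by
  have hc := isChar_pch (G := G) (G ⧸ N)
  conv_lhs => rw [hc.eq_sum]
  have hm : ∀ χ : G → ℂ, Irr χ → mult (pch G (G ⧸ N)) χ = mN N χ 1 := by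
    intro χ hχ
    have := ip_quot (N := N) (1 : G → ℂ) χ
    rw [mul_one] at this
    rw [mN_comm, mult, this, mN, mult]
  rw [sum_split (N := N)]
  have h1 : ∑ χ ∈ I1 N, mult (pch G (G ⧸ N)) χ • χ = 0 :=
    Finset.sum_eq_zero fun χ hχ => by
      rw [hm χ (mem_I1.1 hχ).1, (mem_I1.1 hχ).2, zero_smul]
  rw [h1, add_zero]
  refine Finset.sum_congr rfl fun ψ hψ => ?_
  obtain ⟨h2, h3⟩ := mem_I0.1 hψ
  rw [hm ψ h2, triv_mN h2 h3 isChar_one, mN_one_one, mul_one]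

theorem mN_eq_sum_I0 (hW : IsChar W) (hχ : IsChar χ) :
    mN N W χ = ∑ ψ ∈ I0 N, charDeg ψ * mult (ψ * W) χ := by
  have hc := isChar_pch (G := G) (G ⧸ N)
  rw [mN, mult, ← ip_quot, quot_eq, ← mult, Finset.sum_mul]
  rw [mult_sum_left _ _ _ hχ]
  · refine Finset.sum_congr rfl fun ψ hψ => ?_
    rw [smul_mul_assoc, mult_nsmul_left ((mem_I0.1 hψ).1.isChar.mul hW) hχ]
  · intro ψ hψ
    exact ((mem_I0.1 hψ).1.isChar.nsmul _).mul hW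

theorem mN_twist (hW : IsChar W) (hψ : ψ ∈ I0 N) (hφ : IsChar φ) :
    mN N (ψ * W) φ = charDeg ψ * mN N W φ := by
  obtain ⟨h2, h3⟩ := mem_I0.1 hψ
  rw [mN, rs_mul, triv_rs h2 h3, smul_mul_assoc, one_mul, mult_nsmul_left hW.rs hφ.rs, mN]

variable (N) in
/-- The class of `W` among irreducible characters. -/
noncomputable def cls (W : G → ℂ) : Finset (G → ℂ) := by
  classical exact (irr G).filter fun χ => mN N χ W ≠ 0

theorem mem_cls : χ ∈ cls N W ↔ Irr χ ∧ mN N χ W ≠ 0 := by simp [cls, mem_irr]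

theorem cls_deg_sum (hW : Irr W) :
    charDeg W * (I0 N).card ≤ mN N W W * ∑ χ ∈ cls N W, charDeg χ := by
  have h1 : mN N W W * ∑ χ ∈ cls N W, charDeg χ = charDeg W * ∑ χ ∈ cls N W, mN N W χ := by
    rw [Finset.mul_sum, Finset.mul_sum]
    refine Finset.sum_congr rfl fun χ hχ => ?_
    obtain ⟨h, h'⟩ := mem_cls.1 hχ
    rw [mN_comm (φ := W) (ψ := χ), prop_mN hW h h' hW.isChar, mul_comm]
  rw [h1]
  refine Nat.mul_le_mul_left _ ?_
  have h2 : ∑ χ ∈ cls N W, mN N W χ =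
      ∑ ψ ∈ I0 N, ∑ χ ∈ cls N W, charDeg ψ * mult (ψ * W) χ := by
    rw [Finset.sum_comm]
    exact Finset.sum_congr rfl fun χ hχ => mN_eq_sum_I0 hW.isChar (mem_cls.1 hχ).1.isChar
  rw [h2, Finset.card_eq_sum_ones]
  refine Finset.sum_le_sum fun ψ hψ => ?_
  obtain ⟨hψ1, hψ2⟩ := mem_I0.1 hψ
  have hc := hψ1.isChar.mul hW.isChar
  obtain ⟨χ, hχ, hm⟩ := hc.exists_constituent (by
    rw [deg_mul hψ1.isChar hW.isChar]
    exact (Nat.mul_pos hψ1.deg_pos hW.deg_pos).ne')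
  have hχc : χ ∈ cls N W := by
    refine mem_cls.2 ⟨hχ, fun h0 => ?_⟩
    have h3 := hc.mN_le_of_constituent (N := N) hχ hm hχ.isChar
    rw [mN_twist hW.isChar hψ hχ.isChar, mN_comm (φ := W), h0, mul_zero] at h3
    have := hχ.mN_self_pos (N := N)
    omega
  have h4 := Finset.single_le_sum (f := fun χ => charDeg ψ * mult (ψ * W) χ)
    (fun _ _ => Nat.zero_le _) hχc
  have h5 : 0 < charDeg ψ * mult (ψ * W) χ := Nat.mul_pos hψ1.deg_pos (Nat.pos_of_ne_zero hm)
  omega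

theorem block_big (hW : Irr W) (hmin : ∀ χ ∈ cls N W, charDeg W ≤ charDeg χ) (h4 : 4 ≤ charDeg W) :
    ((5 * charDeg W - 16 : ℝ) / mN N W W) * (I0 N).card ≤ ∑ χ ∈ cls N W, (5 * charDeg χ - 16 : ℝ) := by
  have h1 := cls_deg_sum (N := N) hW
  have hE : (0 : ℝ) < mN N W W := by exact_mod_cast hW.mN_self_pos (N := N)
  have hd : (4 : ℝ) ≤ charDeg W := by exact_mod_cast h4
  have h2 : (charDeg W : ℝ) * (I0 N).card ≤ mN N W W * ∑ χ ∈ cls N W, (charDeg χ : ℝ) := by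
    exact_mod_cast h1
  have h3 : (5 * charDeg W - 16 : ℝ) * ∑ χ ∈ cls N W, (charDeg χ : ℝ) ≤
      charDeg W * ∑ χ ∈ cls N W, (5 * charDeg χ - 16 : ℝ) := by
    rw [Finset.mul_sum, Finset.mul_sum]
    refine Finset.sum_le_sum fun χ hχ => ?_
    have : (charDeg W : ℝ) ≤ charDeg χ := by exact_mod_cast hmin χ hχ
    nlinarith
  rw [div_mul_eq_mul_div, div_le_iff₀ hE]
  have h5 : (0 : ℝ) ≤ 5 * charDeg W - 16 := by linarith
  have h6 : (charDeg W : ℝ) * ((5 * charDeg W - 16) * (I0 N).card) ≤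
      charDeg W * ((∑ χ ∈ cls N W, (5 * charDeg χ - 16 : ℝ)) * mN N W W) := by
    calc (charDeg W : ℝ) * ((5 * charDeg W - 16) * (I0 N).card)
        = (5 * charDeg W - 16) * (charDeg W * (I0 N).card) := by ring
      _ ≤ (5 * charDeg W - 16) * (mN N W W * ∑ χ ∈ cls N W, (charDeg χ : ℝ)) :=
          mul_le_mul_of_nonneg_left h2 h5
      _ = mN N W W * ((5 * charDeg W - 16) * ∑ χ ∈ cls N W, (charDeg χ : ℝ)) := by ring
      _ ≤ mN N W W * (charDeg W * ∑ χ ∈ cls N W, (5 * charDeg χ - 16 : ℝ)) :=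
          mul_le_mul_of_nonneg_left h3 hE.le
      _ = _ := by ring
  exact le_of_mul_le_mul_left h6 (by linarith)

theorem block_three (hW : Irr W) (hmin : ∀ χ ∈ cls N W, charDeg W ≤ charDeg χ)
    (h3 : charDeg W = 3) (hE : mN N W W = 1) :
    -((I0 N).card : ℝ) ≤ ∑ χ ∈ cls N W, (5 * charDeg χ - 16 : ℝ) := by
  classical
  have hcard : ((cls N W).filter fun χ => charDeg χ = 3).card ≤ (I0 N).card := by
    refine le_trans (Finset.card_le_card (t := (I0 N).image fun ψ => ψ * W) ?_) Finset.card_image_le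
    intro χ hχ
    obtain ⟨hχ1, hχ2⟩ := Finset.mem_filter.1 hχ
    obtain ⟨h, h'⟩ := mem_cls.1 hχ1
    have e1 := prop_mN hW h h' hW.isChar
    rw [h3, hE, hχ2] at e1
    have e2 := mN_eq_sum_I0 (N := N) hW.isChar h.isChar
    rw [mN_comm] at e2
    have e3 : ∑ ψ ∈ I0 N, charDeg ψ * mult (ψ * W) χ ≠ 0 := by omega
    obtain ⟨ψ, hψ, hne⟩ := Finset.exists_ne_zero_of_sum_ne_zero e3
    have h4 := Finset.single_le_sum (f := fun ψ => charDeg ψ * mult (ψ * W) χ)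
      (fun _ _ => Nat.zero_le _) hψ
    have h5 : charDeg ψ = 1 := by
      have : charDeg ψ * mult (ψ * W) χ = 1 := by omega
      exact Nat.eq_one_of_mul_eq_one_right this
    refine Finset.mem_image.2 ⟨ψ, hψ, ?_⟩
    have hψ1 := (mem_I0.1 hψ).1
    obtain ⟨τ, hτ, he, hd⟩ := (hψ1.isChar.mul hW.isChar).split h (right_ne_zero_of_mul hne)
    rw [deg_mul hψ1.isChar hW.isChar, h5, h3, hχ2] at hd
    rw [he, hτ.eq_zero_of_deg (by omega), add_zero]
  have h4 : ∑ χ ∈ cls N W, (if charDeg χ = 3 then (-1 : ℝ) else 0) ≤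
      ∑ χ ∈ cls N W, (5 * charDeg χ - 16 : ℝ) := by
    refine Finset.sum_le_sum fun χ hχ => ?_
    have := hmin χ hχ
    split_ifs with h
    · rw [h]; norm_num
    · have : (4 : ℝ) ≤ charDeg χ := by exact_mod_cast (by omega : 4 ≤ charDeg χ)
      linarith
  refine le_trans ?_ h4
  rw [← Finset.sum_filter, Finset.sum_const, nsmul_eq_mul]
  have : (((cls N W).filter fun χ => charDeg χ = 3).card : ℝ) ≤ (I0 N).card := by exact_mod_cast hcard
  linarith

/-- A set of minimal-degree representatives of the classes. -/
structure Reps (N : Subgroup G) (M : Finset (G → ℂ)) : Prop where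
  irr : ∀ W ∈ M, Irr W
  nt : ∀ W ∈ M, mN N W 1 = 0
  min : ∀ W ∈ M, ∀ χ, Irr χ → mN N χ W ≠ 0 → charDeg W ≤ charDeg χ
  uniq : ∀ W ∈ M, ∀ W' ∈ M, mN N W W' ≠ 0 → W = W'
  ex : ∀ χ, Irr χ → mN N χ 1 = 0 → ∃ W ∈ M, mN N χ W ≠ 0

variable (N) in
theorem exists_reps : ∃ M : Finset (G → ℂ), Reps N M := by
  classical
  let S : (G → ℂ) → Set (G → ℂ) := fun χ =>
    {W | W ∈ cls N χ ∧ ∀ U ∈ cls N χ, charDeg W ≤ charDeg U}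
  have hS : ∀ χ, Irr χ → (S χ).Nonempty := by
    intro χ hχ
    obtain ⟨W, hW, hW'⟩ := Finset.exists_min_image (cls N χ) charDeg
      ⟨χ, mem_cls.2 ⟨hχ, (hχ.mN_self_pos).ne'⟩⟩
    exact ⟨W, hW, hW'⟩
  let r : (G → ℂ) → (G → ℂ) := fun χ => Classical.epsilon (· ∈ S χ)
  have hr : ∀ χ, Irr χ → r χ ∈ S χ := fun χ hχ => Classical.epsilon_spec (hS χ hχ)
  have hcl : ∀ χ χ', Irr χ → Irr χ' → mN N χ χ' ≠ 0 → cls N χ = cls N χ' := by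
    intro χ χ' h h' hm
    ext U
    rw [mem_cls, mem_cls]
    exact and_congr_right fun hU => ⟨fun h2 => mN_trans hU h h' h2 hm,
      fun h2 => mN_trans hU h' h h2 (by rwa [mN_comm])⟩
  have hrr : ∀ χ χ', Irr χ → Irr χ' → mN N χ χ' ≠ 0 → r χ = r χ' := by
    intro χ χ' h h' hm
    simp only [r, S]
    rw [hcl χ χ' h h' hm]
  have hri : ∀ χ, Irr χ → Irr (r χ) := fun χ hχ => (mem_cls.1 (hr χ hχ).1).1
  have hrm : ∀ χ, Irr χ → mN N (r χ) χ ≠ 0 := fun χ hχ => (mem_cls.1 (hr χ hχ).1).2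
  refine ⟨(I1 N).image r, ?_, ?_, ?_, ?_, ?_⟩
  · intro W hW
    obtain ⟨χ, hχ, rfl⟩ := Finset.mem_image.1 hW
    exact hri χ (mem_I1.1 hχ).1
  · intro W hW
    obtain ⟨χ, hχ, rfl⟩ := Finset.mem_image.1 hW
    obtain ⟨h1, h2⟩ := mem_I1.1 hχ
    by_contra hcon
    exact mN_trans h1 (hri χ h1) irr_one (by rw [mN_comm]; exact hrm χ h1) hcon h2
  · intro W hW U hU hm
    obtain ⟨χ, hχ, rfl⟩ := Finset.mem_image.1 hW
    obtain ⟨h1, h2⟩ := mem_I1.1 hχ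
    refine (hr χ h1).2 U (mem_cls.2 ⟨hU, ?_⟩)
    exact mN_trans hU (hri χ h1) h1 hm (hrm χ h1)
  · intro W hW W' hW' hm
    obtain ⟨χ, hχ, rfl⟩ := Finset.mem_image.1 hW
    obtain ⟨χ', hχ', rfl⟩ := Finset.mem_image.1 hW'
    have h1 := (mem_I1.1 hχ).1
    have h1' := (mem_I1.1 hχ').1
    apply hrr χ χ' h1 h1'
    refine mN_trans h1 (hri χ h1) h1' (by rw [mN_comm]; exact hrm χ h1) ?_
    exact mN_trans (hri χ h1) (hri χ' h1') h1' hm (hrm χ' h1')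
  · intro χ hχ h1
    exact ⟨r χ, Finset.mem_image_of_mem _ (mem_I1.2 ⟨hχ, h1⟩), by rw [mN_comm]; exact hrm χ hχ⟩

theorem reduction (c : Ctx N) {M : Finset (G → ℂ)} (hM : Reps N M)
    (star : (11 : ℝ) + (M.filter fun W => charDeg W = 3).card ≤
      ∑ W ∈ M.filter (fun W => charDeg W ≠ 3), (5 * charDeg W - 16 : ℝ) / mN N W W) :
    0 ≤ ∑ χ ∈ irr G, (5 * charDeg χ - 16 : ℝ) := by
  classical
  rw [sum_split (N := N)]
  set k : ℝ := ((I0 N).card : ℝ) with hk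
  have h0 : -11 * k ≤ ∑ χ ∈ I0 N, (5 * charDeg χ - 16 : ℝ) := by
    rw [hk, mul_comm, ← nsmul_eq_mul, ← Finset.sum_const]
    refine Finset.sum_le_sum fun ψ hψ => ?_
    have : (1 : ℝ) ≤ charDeg ψ := by exact_mod_cast (mem_I0.1 hψ).1.deg_pos
    linarith
  have hdis : I1 N = M.biUnion (cls N) := by
    ext χ
    rw [mem_I1, Finset.mem_biUnion]
    constructor
    · rintro ⟨h, h'⟩
      obtain ⟨W, hW, hm⟩ := hM.ex χ h h'
      exact ⟨W, hW, mem_cls.2 ⟨h, hm⟩⟩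
    · rintro ⟨W, hW, hm⟩
      obtain ⟨h, h'⟩ := mem_cls.1 hm
      refine ⟨h, ?_⟩
      by_contra hcon
      exact mN_trans (hM.irr W hW) h irr_one (by rwa [mN_comm]) hcon (hM.nt W hW)
  have hsum : ∑ χ ∈ I1 N, (5 * charDeg χ - 16 : ℝ) =
      ∑ W ∈ M, ∑ χ ∈ cls N W, (5 * charDeg χ - 16 : ℝ) := by
    rw [hdis, Finset.sum_biUnion]
    intro W hW W' hW' hne
    rw [Function.onFun, Finset.disjoint_left]
    intro χ h h'
    obtain ⟨h1, h2⟩ := mem_cls.1 h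
    obtain ⟨_, h2'⟩ := mem_cls.1 h'
    exact hne (hM.uniq W hW W' hW' (mN_trans (hM.irr W hW) h1 (hM.irr W' hW') (by rwa [mN_comm]) h2'))
  have hmin : ∀ W ∈ M, ∀ χ ∈ cls N W, charDeg W ≤ charDeg χ := fun W hW χ hχ =>
    hM.min W hW χ (mem_cls.1 hχ).1 (mem_cls.1 hχ).2
  rw [hsum, ← Finset.sum_filter_add_sum_filter_not M (fun W => charDeg W = 3)]
  have h1 : -((M.filter fun W => charDeg W = 3).card : ℝ) * k ≤
      ∑ W ∈ M.filter (fun W => charDeg W = 3), ∑ χ ∈ cls N W, (5 * charDeg χ - 16 : ℝ) := by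
    rw [neg_mul, ← mul_neg, ← nsmul_eq_mul, ← Finset.sum_const]
    refine Finset.sum_le_sum fun W hW => ?_
    obtain ⟨hW, hd⟩ := Finset.mem_filter.1 hW
    exact block_three (hM.irr W hW) (hmin W hW) hd
      (c.mN_self_one (hM.irr W hW).isChar (hM.nt W hW) (by omega) (by omega))
  have h2 : (∑ W ∈ M.filter (fun W => charDeg W ≠ 3), (5 * charDeg W - 16 : ℝ) / mN N W W) * k ≤
      ∑ W ∈ M.filter (fun W => ¬ charDeg W = 3), ∑ χ ∈ cls N W, (5 * charDeg χ - 16 : ℝ) := by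
    rw [Finset.sum_mul]
    refine Finset.sum_le_sum fun W hW => ?_
    obtain ⟨hW, hd⟩ := Finset.mem_filter.1 hW
    have := c.three_le_char (hM.irr W hW).isChar (hM.nt W hW) (hM.irr W hW).deg_pos.ne'
    exact block_big (hM.irr W hW) (hmin W hW) (by omega)
  have hk0 : 0 ≤ k := by positivity
  have h3 := mul_le_mul_of_nonneg_right star hk0
  linarith

end block
end ACD

set_option linter.unusedSectionVars false

namespace ACD
open Representation Module

section F
variable {G : Type} [Group G] [Finite G] {N : Subgroup G} [hN : N.Normal] {φ ψ χ W U : G → ℂ}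
  {M : Finset (G → ℂ)}

theorem irr_rs (h : IsChar φ) (h1 : mN N φ φ = 1) : Irr (rs N φ) := h.rs.irr_of_mult h1

theorem mN_ne_deg (h : IsChar φ) (h1 : mN N φ φ = 1) (h' : IsChar ψ) (h1' : mN N ψ ψ = 1)
    (hd : charDeg φ ≠ charDeg ψ) : mN N φ ψ = 0 :=
  (irr_rs h h1).mult_ne (irr_rs h' h1') fun e => hd (by rw [← deg_rs (N := N) (φ := φ), e, deg_rs])

theorem mN_le_one (h : IsChar φ) (h1 : mN N φ φ = 1) (h' : IsChar ψ) (h1' : mN N ψ ψ = 1) :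
    mN N φ ψ ≤ 1 := by
  by_cases he : rs N φ = rs N ψ
  · rw [mN, he, (irr_rs h' h1').mult_self]
  · rw [mN, (irr_rs h h1).mult_ne (irr_rs h' h1') he]; omega

theorem rs_eq_of (h : IsChar φ) (h1 : mN N φ φ = 1) (h' : IsChar ψ) (h1' : mN N ψ ψ = 1)
    (hm : mN N φ ψ ≠ 0) : rs N φ = rs N ψ := by
  by_contra he
  exact hm ((irr_rs h h1).mult_ne (irr_rs h' h1') he)

/-- A representative with the same restriction. -/
theorem Reps.rep (hM : Reps N M) (h : Irr φ) (h1 : mN N φ 1 = 0)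
    (hc : Nat.Coprime (charDeg φ) (mN N φ φ)) : ∃ W ∈ M, rs N W = rs N φ := by
  obtain ⟨W, hW, hm⟩ := hM.ex φ h h1
  refine ⟨W, hW, ?_⟩
  have hWi := hM.irr W hW
  have e1 := prop_mN hWi h hm h.isChar
  have hle := hM.min W hW φ h hm
  have hdvd : charDeg φ ∣ charDeg W := hc.dvd_of_dvd_mul_right ⟨_, e1⟩
  have hd : charDeg W = charDeg φ := le_antisymm hle (Nat.le_of_dvd hWi.deg_pos hdvd)
  have e2 := prop_rs hWi h hm
  rw [hd] at e2
  have h0 : charDeg φ ≠ 0 := h.deg_pos.ne'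
  ext n
  have e3 := congrFun e2 n
  simp only [Pi.smul_apply, nsmul_eq_mul] at e3
  exact (mul_left_cancel₀ (by exact_mod_cast h0) e3).symm

theorem Reps.rep_one (hM : Reps N M) (h : IsChar φ) (h1 : mN N φ 1 = 0)
    (hE : mN N φ φ = 1) : ∃ W ∈ M, rs N W = rs N φ :=
  hM.rep (h.irr_of_mN hE) h1 (by rw [hE]; exact Nat.coprime_one_right _)

/-- splitting off the trivial constituent -/
theorem extract_one (h : IsChar φ) (h1 : mN N φ 1 = 1) :
    ∃ Y, IsChar Y ∧ rs N φ = 1 + rs N Y ∧ charDeg φ = charDeg Y + 1 ∧ mN N Y 1 = 0 := by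
  obtain ⟨χ, hχ, hm, hm1⟩ := h.exists_constituent_mN (N := N) isChar_one (by omega)
  have e1 := h.mN_le_of_constituent (N := N) hχ hm isChar_one
  have e2 := triv_mN hχ hm1 isChar_one
  rw [mN_one_one] at e2
  have hd : charDeg χ = 1 := by omega
  obtain ⟨Y, hY, he, hd'⟩ := h.split hχ hm
  have e3 := triv_rs hχ hm1
  rw [hd, one_smul] at e3
  refine ⟨Y, hY, by rw [he, rs_add, e3], by omega, ?_⟩
  have e4 := mN_add_left (N := N) hχ.isChar hY isChar_one
  rw [← he] at e4
  omega

/-- splitting off a constituent irreducible on `N`. -/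
theorem extract (h : IsChar φ) (hU : IsChar U) (hUi : mN N U U = 1) (h1 : mN N φ U = 1) :
    ∃ Y, IsChar Y ∧ rs N φ = rs N U + rs N Y ∧ charDeg φ = charDeg U + charDeg Y
      ∧ mN N Y U = 0 := by
  obtain ⟨χ, hχ, hm, hm1⟩ := h.exists_constituent_mN (N := N) hU (by omega)
  have e1 := h.mN_le_of_constituent (N := N) hχ hm hU
  have hUI := hU.irr_of_mN hUi
  have e2 := prop_mN hUI hχ hm1 hU
  have e0 : mN N χ U = 1 := by omega
  rw [hUi, e0, mul_one, mul_one] at e2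
  have e3 := prop_rs hUI hχ hm1
  rw [e2] at e3
  have hr : rs N χ = rs N U := by
    have h0 : charDeg χ ≠ 0 := hχ.deg_pos.ne'
    ext n
    have e3 := congrFun e3 n
    simp only [Pi.smul_apply, nsmul_eq_mul] at e3
    exact (mul_left_cancel₀ (by exact_mod_cast h0) e3)
  obtain ⟨Y, hY, he, hd'⟩ := h.split hχ hm
  refine ⟨Y, hY, by rw [he, rs_add, hr], by omega, ?_⟩
  have e4 := mN_add_left (N := N) hχ.isChar hY hU
  rw [← he] at e4
  omega

theorem Reps.E3 (c : Ctx N) (hM : Reps N M) (hW : W ∈ M) (hd : charDeg W ≤ 5) : mN N W W = 1 :=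
  c.mN_self_one (hM.irr W hW).isChar (hM.nt W hW) (hM.irr W hW).deg_pos.ne' hd

theorem Reps.le_mN (hM : Reps N M) (hW : W ∈ M) (h : IsChar φ) (hm : mN N φ W ≠ 0) :
    mN N W W ≤ mN N φ W := by
  obtain ⟨χ, hχ, hm', hm1⟩ := h.exists_constituent_mN (N := N) (hM.irr W hW).isChar hm
  have e1 := h.mN_le_of_constituent (N := N) hχ hm' (hM.irr W hW).isChar
  have e2 := prop_mN (hM.irr W hW) hχ hm1 (hM.irr W hW).isChar
  have e3 := hM.min W hW χ hχ hm1
  refine le_trans ?_ e1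
  have hp := (hM.irr W hW).deg_pos
  by_contra hcon
  push Not at hcon
  have := Nat.mul_lt_mul_of_le_of_lt e3 hcon (by omega)
  omega

theorem sum_three (c : Ctx N) (hM : Reps N M) (h : IsChar φ) :
    ∑ j ∈ M.filter (fun W => charDeg W = 3), mN N φ j * 3 ≤ charDeg φ := by
  classical
  rw [← deg_rs (N := N), (h.rs (N := N)).deg_eq_sum]
  have hinj : Set.InjOn (rs N) (M.filter (fun W => charDeg W = 3) : Finset (G → ℂ)) := by
    intro a ha b hb hab
    obtain ⟨ha, ha'⟩ := Finset.mem_filter.1 ha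
    obtain ⟨hb, hb'⟩ := Finset.mem_filter.1 hb
    refine hM.uniq a ha b hb ?_
    rw [mN, ← hab]
    have := hM.E3 c ha (by omega)
    rw [mN] at this
    omega
  calc ∑ j ∈ M.filter (fun W => charDeg W = 3), mN N φ j * 3
      = ∑ θ ∈ (M.filter (fun W => charDeg W = 3)).image (rs N), mult (rs N φ) θ * charDeg θ := by
        rw [Finset.sum_image hinj]
        refine Finset.sum_congr rfl fun j hj => ?_
        rw [deg_rs, (Finset.mem_filter.1 hj).2, mN]
    _ ≤ _ := by
        refine Finset.sum_le_sum_of_subset ?_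
        intro θ hθ
        obtain ⟨j, hj, rfl⟩ := Finset.mem_image.1 hθ
        obtain ⟨ha, ha'⟩ := Finset.mem_filter.1 hj
        exact mem_irr.2 (irr_rs (hM.irr j ha).isChar (hM.E3 c ha (by omega)))

theorem exists_invol (c : Ctx N) (h : IsChar φ) (h1 : mN N φ φ = 1) (hd : charDeg φ = 3) :
    ∃ z : N, z * z = 1 ∧ z ≠ 1 := by
  have := even_of_small c.perfect (irr_rs h h1) (Or.inr hd)
  obtain ⟨z, hz⟩ := exists_prime_orderOf_dvd_card' 2 this
  refine ⟨z, ?_, ?_⟩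
  · rw [← pow_two, ← hz, pow_orderOf_eq_one]
  · rintro rfl; simp at hz

/-- Each product of two degree three members has a constituent of other type. -/
theorem exists_partner (c : Ctx N) (hM : Reps N M) (hW : W ∈ M) (hU : U ∈ M)
    (hW3 : charDeg W = 3) (hU3 : charDeg U = 3) :
    ∃ Y ∈ M, charDeg Y ≠ 3 ∧ mN N (W * dl U) Y ≠ 0 := by
  by_contra hcon
  push Not at hcon
  have hWc := (hM.irr W hW).isChar
  have hUc := (hM.irr U hU).isChar
  have hX := hWc.mul hUc.dl
  have hE := hM.E3 c hW (by omega)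
  have hE' := hM.E3 c hU (by omega)
  obtain ⟨z, hz, hz1⟩ := exists_invol c hWc hE hW3
  have key : ∀ χ ∈ irr G, (mult (W * dl U) χ : ℂ) *
      (3 * χ z + charDeg χ - 4 * mN N χ 1) = 0 := by
    intro χ hχ
    rw [mem_irr] at hχ
    by_cases hm : mult (W * dl U) χ = 0
    · rw [hm]; simp
    refine mul_eq_zero_of_right _ ?_
    by_cases h1 : mN N χ 1 = 0
    · obtain ⟨Y, hY, hYm⟩ := hM.ex χ hχ h1
      have hY3 : charDeg Y = 3 := by
        by_contra h3
        have := hX.mN_le_of_constituent (N := N) hχ hm (hM.irr Y hY).isChar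
        have := hcon Y hY h3
        omega
      have e1 := congrFun (prop_rs (hM.irr Y hY) hχ hYm) z
      have e2 := c.deg_three_neg (hM.irr Y hY).isChar (hM.nt Y hY) hY3 hz hz1
      simp only [Pi.smul_apply, nsmul_eq_mul, rs_apply, hY3, e2] at e1
      rw [h1]
      push_cast at e1 ⊢
      linear_combination e1
    · have e1 := congrFun (triv_rs hχ h1) z
      have e2 := triv_mN hχ h1 isChar_one
      rw [mN_one_one, mul_one] at e2
      simp only [Pi.smul_apply, nsmul_eq_mul, rs_apply, Pi.one_apply] at e1
      rw [e1, e2]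
      ring
  have hs := Finset.sum_eq_zero key
  have e1 : ∑ χ ∈ irr G, (mult (W * dl U) χ : ℂ) * χ z = (W * dl U) z := by
    conv_rhs => rw [hX.eq_sum]
    simp
  have e2 : ∑ χ ∈ irr G, (mult (W * dl U) χ : ℂ) * charDeg χ = 9 := by
    have := hX.deg_eq_sum
    rw [deg_mul hWc hUc.dl, deg_dl, hW3, hU3] at this
    have h2 : ((3 * 3 : ℕ) : ℂ) = _ := congrArg (Nat.cast (R := ℂ)) this
    push_cast at h2
    rw [← h2]
  have e3 : ∑ χ ∈ irr G, (mult (W * dl U) χ : ℂ) * mN N χ 1 = mN N (W * dl U) 1 := by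
    rw [hX.mN_eq_sum isChar_one]
    push_cast
    rfl
  have hle : mN N (W * dl U) 1 ≤ 1 := by
    rw [mN_mul_left, dl_dl, one_mul]
    exact mN_le_one hWc hE hUc hE'
  have hz' : (z : G)⁻¹ = z := by
    apply inv_eq_of_mul_eq_one_right
    exact_mod_cast congrArg Subtype.val hz
  have e4 : (W * dl U) z = 1 := by
    rw [Pi.mul_apply, dl_apply, hz', c.deg_three_neg hWc (hM.nt W hW) hW3 hz hz1,
      c.deg_three_neg hUc (hM.nt U hU) hU3 hz hz1]
    norm_num
  have : (3 * 1 + 9 - 4 * (mN N (W * dl U) 1 : ℂ)) = 0 := by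
    rw [← hs, ← e4, ← e1, ← e2, ← e3, Finset.mul_sum, Finset.mul_sum, ← Finset.sum_add_distrib,
      ← Finset.sum_sub_distrib]
    refine Finset.sum_congr rfl fun χ _ => ?_
    ring
  have h3 : (4 * mN N (W * dl U) 1 : ℂ) = (12 : ℕ) := by push_cast; linear_combination -this
  have h4 : 4 * mN N (W * dl U) 1 = 12 := by exact_mod_cast h3
  omega

theorem mN_swap (W Y j : G → ℂ) : mN N (W * dl j) Y = mN N (W * dl Y) j := by
  rw [mN_mul_left, mN_mul_left, dl_dl, dl_dl, mul_comm Y j]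

open Classical in
/-- the degree three members linked to `Y` -/
noncomputable def Us (N : Subgroup G) (M : Finset (G → ℂ)) (W Y : G → ℂ) : Finset (G → ℂ) :=
  (M.filter (fun W => charDeg W = 3)).filter fun j => mN N (W * dl j) Y ≠ 0

theorem mem_Us {j Y : G → ℂ} : j ∈ Us N M W Y ↔ (j ∈ M ∧ charDeg j = 3) ∧ mN N (W * dl Y) j ≠ 0 := by
  rw [Us, Finset.mem_filter, Finset.mem_filter, mN_swap]

theorem Us_card (c : Ctx N) (hM : Reps N M) (hW : W ∈ M) (hW3 : charDeg W = 3) {Y : G → ℂ}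
    (hY : Y ∈ M) : (Us N M W Y).card * mN N Y Y ≤ charDeg Y := by
  classical
  have hWc := (hM.irr W hW).isChar
  have hYc := (hM.irr Y hY).isChar
  have h := sum_three c hM (hWc.mul hYc.dl)
  rw [deg_mul hWc hYc.dl, deg_dl, hW3] at h
  have h2 : (Us N M W Y).card * (mN N Y Y * 3) ≤
      ∑ j ∈ M.filter (fun W => charDeg W = 3), mN N (W * dl Y) j * 3 := by
    rw [← smul_eq_mul, ← Finset.sum_const]
    refine le_trans (Finset.sum_le_sum (g := fun j => mN N (W * dl Y) j * 3) fun j hj => ?_)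
      (Finset.sum_le_sum_of_subset (Finset.filter_subset _ _))
    rw [Us, Finset.mem_filter] at hj
    have := hM.le_mN hY (hWc.mul (hM.irr j (Finset.mem_filter.1 hj.1).1).isChar.dl) hj.2
    rw [mN_swap] at this
    omega
  nlinarith

/-- main counting lemma -/
theorem star_of (c : Ctx N) (hM : Reps N M) (hW : W ∈ M) (hW3 : charDeg W = 3)
    (S : Finset (G → ℂ)) (hS : ∀ Y ∈ S, Y ∈ M ∧ charDeg Y ≠ 3) (T : Finset (G → ℂ))
    (hT : ∀ Y ∈ S, Us N M W Y ⊆ T)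
    (hsum : (11 : ℝ) + T.card ≤ ∑ Y ∈ S, (5 * charDeg Y - 16 : ℝ) / mN N Y Y) :
    (11 : ℝ) + (M.filter fun W => charDeg W = 3).card ≤
      ∑ W ∈ M.filter (fun W => charDeg W ≠ 3), (5 * charDeg W - 16 : ℝ) / mN N W W := by
  classical
  have hSs : S ⊆ M.filter (fun W => charDeg W ≠ 3) := fun Y hY => Finset.mem_filter.2 (hS Y hY)
  rw [← Finset.sum_sdiff hSs]
  have h1 : (M.filter fun W => charDeg W = 3) ⊆
      T ∪ (M.filter (fun W => charDeg W ≠ 3) \ S).biUnion (Us N M W) := by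
    intro j hj
    obtain ⟨hj1, hj2⟩ := Finset.mem_filter.1 hj
    obtain ⟨Y, hY, hY3, hm⟩ := exists_partner c hM hW hj1 hW3 hj2
    have hjU : j ∈ Us N M W Y := Finset.mem_filter.2 ⟨hj, hm⟩
    by_cases hYS : Y ∈ S
    · exact Finset.mem_union_left _ (hT Y hYS hjU)
    · exact Finset.mem_union_right _ (Finset.mem_biUnion.2
        ⟨Y, Finset.mem_sdiff.2 ⟨Finset.mem_filter.2 ⟨hY, hY3⟩, hYS⟩, hjU⟩)
  have h2 := (Finset.card_le_card h1).trans ((Finset.card_union_le _ _).trans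
    (Nat.add_le_add_left Finset.card_biUnion_le _))
  have h3 : ((∑ Y ∈ M.filter (fun W => charDeg W ≠ 3) \ S, (Us N M W Y).card : ℕ) : ℝ) ≤
      ∑ Y ∈ M.filter (fun W => charDeg W ≠ 3) \ S, (5 * charDeg Y - 16 : ℝ) / mN N Y Y := by
    push_cast
    refine Finset.sum_le_sum fun Y hY => ?_
    obtain ⟨hY, hY3⟩ := Finset.mem_filter.1 (Finset.mem_sdiff.1 hY).1
    have hp := (hM.irr Y hY).mN_self_pos (N := N)
    rw [le_div_iff₀ (by exact_mod_cast hp)]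
    have h4 := Us_card c hM hW hW3 hY
    have h4' : ((Us N M W Y).card * mN N Y Y : ℝ) ≤ charDeg Y := by exact_mod_cast h4
    have h5 := c.three_le_char (hM.irr Y hY).isChar (hM.nt Y hY) (hM.irr Y hY).deg_pos.ne'
    have h6 : (4 : ℝ) ≤ charDeg Y := by exact_mod_cast (by omega : 4 ≤ charDeg Y)
    linarith
  have h2' : ((M.filter fun W => charDeg W = 3).card : ℝ) ≤ T.card +
      ((∑ Y ∈ M.filter (fun W => charDeg W ≠ 3) \ S, (Us N M W Y).card : ℕ) : ℝ) := by
    exact_mod_cast h2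
  linarith

/-- If `χ` is a degree three character not real on `N`, its symmetric square is irreducible. -/
theorem sy_irr (c : Ctx N) (h : IsChar φ) (h1 : mN N φ 1 = 0) (hd : charDeg φ = 3)
    (hz : ∃ z : N, z * z = 1 ∧ z ≠ 1)
    (hs1 : mN N (sy φ) 1 = 0) (hs : charDeg (sy φ) = 6) : mN N (sy φ) (sy φ) = 1 := by
  have hsc := (h.sy.rs (N := N))
  obtain ⟨a, ha, hm⟩ := hsc.exists_constituent (by rw [deg_rs, hs]; norm_num)
  obtain ⟨b, hb, he, hd'⟩ := hsc.split ha hm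
  rw [deg_rs, hs] at hd'
  have hab1 : mult a 1 + mult b 1 = 0 := by
    rw [← mult_add_left ha.isChar hb isChar_one, ← he]
    exact hs1
  have three : ∀ θ : N → ℂ, IsChar θ → mult θ 1 = 0 → charDeg θ ≠ 0 → 3 ≤ charDeg θ := by
    intro θ hθ hθ1 h0
    have hnb := c.norm_bound hθ hθ1
    have h2 := hθ.mult_self_pos h0
    by_contra hcon
    have h3 : charDeg θ / 3 = 0 := by omega
    rw [h3] at hnb
    omega
  by_cases hb0 : charDeg b = 0
  · have := hb.eq_zero_of_deg hb0
    rw [this, add_zero] at he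
    rw [mN, he, ha.mult_self]
  exfalso
  have ha3 := three a ha.isChar (by omega) ha.deg_pos.ne'
  have hb3 := three b hb (by omega) hb0
  have ha3' : charDeg a = 3 := by omega
  have hb3' : charDeg b = 3 := by omega
  have key : ∀ z : N, z * z = 1 → z ≠ 1 → a z + b z = 2 := by
    intro z hz hz1
    rw [← Pi.add_apply, ← he, rs_apply, sy, c.deg_three_neg h h1 hd hz hz1]
    have : (z : G) * z = 1 := by exact_mod_cast congrArg Subtype.val hz
    rw [this, h.one_eq, hd]
    norm_num
  have inv := fun (z : N) (hz : z * z = 1) => deg_three_invol c.perfect ha.isChar ha3' hz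
  have inv' := fun (z : N) (hz : z * z = 1) => deg_three_invol c.perfect hb hb3' hz
  have keya : ∀ θ : N → ℂ, IsChar θ → charDeg θ = 3 → mult θ 1 = 0 →
      ∃ z : N, z * z = 1 ∧ z ≠ 1 ∧ θ z = -1 := by
    intro θ hθ hθ3 hθ1
    by_contra hcon
    push Not at hcon
    have hall : ∀ z : N, z * z = 1 → ∀ m, θ (z * m) = θ m := by
      intro z hz
      apply hθ.invol_ker hz
      by_cases hz1 : z = 1
      · rw [hz1]
      · rcases deg_three_invol c.perfect hθ hθ3 hz with h3 | h3
        · rw [h3, hθ.one_eq, hθ3]; norm_num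
        · exact absurd h3 (hcon z hz hz1)
    have htop : Subgroup.closure {z : N | z * z = 1} = ⊤ := by
      refine (c.dichotomy _ ?_).resolve_left ?_
      · intro g n m hn hm
        induction hn using Subgroup.closure_induction generalizing m with
        | mem x hx =>
          apply Subgroup.subset_closure
          have hx' : (x : G) * x = 1 := by exact_mod_cast congrArg Subtype.val hx
          apply Subtype.ext
          rw [Subgroup.coe_mul, hm, Subgroup.coe_one]
          calc g * x * g⁻¹ * (g * x * g⁻¹) = g * (x * x) * g⁻¹ := by group
            _ = 1 := by rw [hx']; group
        | one =>
          have : m = 1 := by apply Subtype.ext; rw [hm]; simp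
          rw [this]; exact Subgroup.one_mem _
        | mul x y _ _ hx hy =>
          have := Subgroup.mul_mem _ (hx ⟨g * x * g⁻¹, hN.conj_mem _ x.2 g⟩ rfl)
            (hy ⟨g * y * g⁻¹, hN.conj_mem _ y.2 g⟩ rfl)
          convert this using 1
          apply Subtype.ext
          rw [hm]; simp
        | inv x _ hx =>
          have := Subgroup.inv_mem _ (hx ⟨g * x * g⁻¹, hN.conj_mem _ x.2 g⟩ rfl)
          convert this using 1
          apply Subtype.ext
          rw [hm]; simp [mul_assoc]
      · obtain ⟨z, hz, hz1⟩ := hz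
        intro hbot
        have : z ∈ Subgroup.closure {z : N | z * z = 1} := Subgroup.subset_closure hz
        rw [hbot] at this
        exact hz1 (Subgroup.mem_bot.1 this)
    have hker : ∀ n : N, ∀ m, θ (n * m) = θ m := by
      intro n
      have hn : n ∈ Subgroup.closure {z : N | z * z = 1} := by rw [htop]; trivial
      induction hn using Subgroup.closure_induction with
      | mem x hx => exact hall x hx
      | one => simp
      | mul x y _ _ hx hy => intro m; rw [mul_assoc, hx, hy]
      | inv x _ hx => intro m; rw [← hx (x⁻¹ * m), mul_inv_cancel_left]
    have h3 : θ = 3 • (1 : N → ℂ) := by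
      ext n
      have := hker n 1
      rw [mul_one, hθ.one_eq, hθ3] at this
      rw [this]; simp
    rw [h3, mult_nsmul_left isChar_one isChar_one, irr_one.mult_self] at hθ1
    omega
  have kerof : ∀ θ : N → ℂ, IsChar θ → charDeg θ = 3 → ∀ z : N, z * z = 1 → θ z = 3 →
      ∀ m, θ (z * m) = θ m := by
    intro θ hθ hθ3 z hz h3
    apply hθ.invol_ker hz
    rw [h3, hθ.one_eq, hθ3]; norm_num
  have ne3 : (3 : ℂ) ≠ -1 := by norm_num
  obtain ⟨z2, hz2, hz21, haz2⟩ := keya a ha.isChar ha3' (by omega)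
  obtain ⟨z1, hz1, hz11, hbz1⟩ := keya b hb hb3' (by omega)
  have haz1 : a z1 = 3 := by have := key z1 hz1 hz11; rw [hbz1] at this; linear_combination this
  have hbz2 : b z2 = 3 := by have := key z2 hz2 hz21; rw [haz2] at this; linear_combination this
  have ka := kerof a ha.isChar ha3' z1 hz1 haz1
  have kb := kerof b hb hb3' z2 hz2 hbz2
  have hw : z1 * z2 * z1 * z2 = 1 := by
    apply c.ker_trivial h.sy hs1 (by omega)
    intro m
    have e : ∀ x : N, sy φ x = a x + b x := fun x => by rw [← Pi.add_apply, ← he, rs_apply]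
    have e1 := e (z1 * z2 * z1 * z2 * m)
    rw [Subgroup.coe_mul] at e1
    rw [e1, e m]
    congr 1
    · calc a (z1 * z2 * z1 * z2 * m) = a (z1 * (z2 * (z1 * z2 * m))) := by simp only [mul_assoc]
        _ = a (z1 * (z2 * m * z2)) := by rw [ka, ha.isChar.mul_comm]; simp only [mul_assoc]
        _ = a (z2 * (z2 * m)) := by rw [ka, ha.isChar.mul_comm]
        _ = a m := by rw [← mul_assoc, hz2, one_mul]
    · calc b (z1 * z2 * z1 * z2 * m) = b (z1 * (z2 * (z1 * (z2 * m)))) := by simp only [mul_assoc]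
        _ = b (z2 * (z1 * (z2 * (m * z1)))) := by rw [hb.mul_comm]; simp only [mul_assoc]
        _ = b (z1 * (z2 * (m * z1))) := by rw [kb]
        _ = b (z2 * (m * (z1 * z1))) := by rw [hb.mul_comm]; simp only [mul_assoc]
        _ = b m := by rw [hz1, mul_one, kb]
  have hne : z1 * z2 ≠ 1 := by
    intro hcon
    have : z1 = z2 := by
      rw [← mul_right_inj z1, hz1, hcon]
    rw [this, haz2] at haz1
    exact ne3 haz1.symm
  have := key (z1 * z2) (by rw [← mul_assoc]; exact hw) hne
  rw [ka, haz2, hb.mul_comm, kb, hbz1] at this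
  norm_num at this

theorem deg_sy3 (h : IsChar φ) (hd : charDeg φ = 3) : charDeg (sy φ) = 6 := by
  have := h.sy.one_eq
  rw [sy, mul_one, h.one_eq, hd] at this
  have h2 : ((6 : ℕ) : ℂ) = charDeg (sy φ) := by rw [← this]; norm_num
  exact_mod_cast h2.symm

theorem deg_la3 (h : IsChar φ) (hd : charDeg φ = 3) : charDeg (la φ) = 3 := by
  have := h.la.one_eq
  rw [la, mul_one, h.one_eq, hd] at this
  have h2 : ((3 : ℕ) : ℂ) = charDeg (la φ) := by rw [← this]; norm_num
  exact_mod_cast h2.symm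

theorem star_nonreal (c : Ctx N) (hM : Reps N M) (hW : W ∈ M) (hW3 : charDeg W = 3)
    (hnr : mN N W (dl W) = 0) :
    (11 : ℝ) + (M.filter fun W => charDeg W = 3).card ≤
      ∑ W ∈ M.filter (fun W => charDeg W ≠ 3), (5 * charDeg W - 16 : ℝ) / mN N W W := by
  have hWc := (hM.irr W hW).isChar
  have hE := hM.E3 c hW (by omega)
  have hsq1 : mN N (W * W) 1 = 0 := by rw [mN_mul_left, one_mul, hnr]
  rw [← sy_add_la, mN_add_left hWc.sy hWc.la isChar_one] at hsq1
  have hd6 := deg_sy3 hWc hW3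
  have hd3 := deg_la3 hWc hW3
  have hs := sy_irr c hWc (hM.nt W hW) hW3 (exists_invol c hWc hE hW3) (by omega) hd6
  have hl := c.mN_self_one hWc.la (by omega) (by omega) (by omega)
  have hsl := mN_ne_deg hWc.sy hs hWc.la hl (by omega)
  have h2 : mN N (W * W) (W * W) = 2 := by
    rw [← sy_add_la, mN_add_left hWc.sy hWc.la (hWc.sy.add hWc.la),
      mN_add_right hWc.sy hWc.la hWc.sy, mN_add_right hWc.sy hWc.la hWc.la, hs, hl, hsl,
      mN_comm (φ := la W), hsl]
  have h2' : mN N (W * dl W) (W * dl W) = 2 := by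
    rw [← h2, mN_mul_left, mN_mul_left, dl_dl]
    congr 1
    ring
  have h11 : mN N (W * dl W) 1 = 1 := by rw [mN_mul_left, one_mul, dl_dl, hE]
  obtain ⟨Y, hY, hYr, hYd, hY1⟩ := extract_one (hWc.mul hWc.dl) h11
  rw [deg_mul hWc hWc.dl, deg_dl, hW3] at hYd
  have hYE : mN N Y Y = 1 := by
    have e : mN N (W * dl W) (W * dl W) = mN N (1 + Y) (1 + Y) := by rw [mN, hYr, mN, rs_add, rs_one]
    rw [mN_add_left isChar_one hY (isChar_one.add hY), mN_add_right isChar_one hY isChar_one,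
      mN_add_right isChar_one hY hY, mN_one_one, hY1, mN_comm (φ := 1), hY1] at e
    omega
  obtain ⟨V, hV, hVr⟩ := hM.rep_one hY hY1 hYE
  have hVd : charDeg V = 8 := by
    have := deg_rs (N := N) (φ := V)
    rw [hVr, deg_rs] at this
    omega
  have hVE : mN N V V = 1 := by rw [mN, hVr]; exact hYE
  refine star_of c hM hW hW3 {V} ?_ (Us N M W V) ?_ ?_
  · simp [hV, hVd]
  · simp
  · have := Us_card c hM hW hW3 hV
    rw [hVE, hVd, mul_one] at this
    have : ((Us N M W V).card : ℝ) ≤ 8 := by exact_mod_cast this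
    rw [Finset.sum_singleton, hVd, hVE]
    norm_num
    linarith

end F
end ACD

set_option linter.unusedSectionVars false

namespace ACD
open Representation Module

section Fb
variable {G : Type} [Group G] [Finite G] {N : Subgroup G} [hN : N.Normal] {φ ψ χ W U : G → ℂ}
  {M : Finset (G → ℂ)}

theorem mN_congr {φ φ' ψ ψ' : G → ℂ} (h : rs N φ = rs N φ') (h' : rs N ψ = rs N ψ') :
    mN N φ ψ = mN N φ' ψ' := by rw [mN, h, h', mN]

theorem deg_congr {φ φ' : G → ℂ} (h : rs N φ = rs N φ') : charDeg φ = charDeg φ' := by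
  rw [← deg_rs (N := N) (φ := φ), h, deg_rs]

/-- Data attached to a real degree three character. -/
theorem real_data (c : Ctx N) (hM : Reps N M) (hW : W ∈ M) (hW3 : charDeg W = 3)
    (hre : rs N (dl W) = rs N W) :
    ∃ η V, η ∈ M ∧ charDeg η = 5 ∧ mN N η η = 1 ∧ rs N (dl η) = rs N η ∧
      IsChar V ∧ charDeg V = 7 ∧ mN N V 1 = 0 ∧ mN N V W = 0 ∧
      rs N (W * η) = rs N (W + V + η) := by
  have hWc := (hM.irr W hW).isChar
  have hE := hM.E3 c hW (by omega)
  have hla : rs N (la W) = rs N W := by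
    rw [rs_la, la_eq_dl_of_perfect c.perfect hWc.rs hW3, ← rs_dl, hre]
  have hd6 := deg_sy3 hWc hW3
  have hsq1 : mN N (W * W) 1 = 1 := by rw [mN_mul_left, one_mul, mN_congr rfl hre, hE]
  rw [← sy_add_la, mN_add_left hWc.sy hWc.la isChar_one, mN_congr hla rfl, hM.nt W hW,
    add_zero] at hsq1
  obtain ⟨Y, hY, hYr, hYd, hY1⟩ := extract_one hWc.sy hsq1
  have hYE := c.mN_self_one hY hY1 (by omega) (by omega)
  obtain ⟨η, hη, hηr⟩ := hM.rep_one hY hY1 hYE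
  have hηc := (hM.irr η hη).isChar
  have hηd : charDeg η = 5 := by rw [deg_congr hηr]; omega
  have hηE : mN N η η = 1 := by rw [mN_congr hηr hηr, hYE]
  have hr2 : ∀ n : N, W ((n : G) * n) = W n ^ 2 - 2 * W n := by
    intro n
    have := congrFun hla n
    simp only [rs_apply, la] at this
    linear_combination -2 * this
  have hηv : ∀ n : N, η n = W n ^ 2 - W n - 1 := by
    intro n
    have e1 := congrFun hYr n
    have e2 := congrFun hηr n
    simp only [rs_apply, sy, Pi.add_apply, Pi.one_apply] at e1 e2
    rw [e2]
    linear_combination -e1 + (1 / 2) * hr2 n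
  have hηre : rs N (dl η) = rs N η := by
    ext n
    have e := congrFun hre n
    simp only [rs_apply, dl_apply] at e ⊢
    have := hηv n⁻¹
    rw [Subgroup.coe_inv] at this
    rw [this, hηv, e]
  have hlaη : ∀ n : N, la η n = W n ^ 3 - 2 * W n ^ 2 + 1 := by
    intro n
    have e := hηv (n * n)
    rw [Subgroup.coe_mul, hr2] at e
    rw [la, e, hηv]
    ring
  have hprod : rs N (W * η) = rs N (la η + η) := by
    ext n
    simp only [rs_apply, Pi.mul_apply, Pi.add_apply, hlaη, hηv]
    ring
  have hηW : mN N η W = 0 := mN_ne_deg hηc hηE hWc hE (by omega)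
  have hWW : rs N (W * dl W) = rs N (1 + (η + W)) := by
    ext n
    have e := congrFun hre n
    simp only [rs_apply, dl_apply] at e
    simp only [rs_apply, Pi.mul_apply, Pi.add_apply, Pi.one_apply, dl_apply, e, hηv]
    ring
  have h1 : mN N (la η + η) W = 1 := by
    rw [← mN_congr hprod rfl, mul_comm, mN_mul_left, mN_congr rfl hWW,
      mN_add_right isChar_one (hηc.add hWc) hηc, mN_add_right hηc hWc hηc, hηE, hηW, hM.nt η hη]
  rw [mN_add_left hηc.la hηc hWc, hηW, add_zero] at h1
  have h2 : mN N (la η + η) 1 = 0 := by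
    rw [← mN_congr hprod rfl, mN_mul_left, one_mul, mN_congr rfl hηre, mN_comm, hηW]
  rw [mN_add_left hηc.la hηc isChar_one] at h2
  have hlad : charDeg (la η) = 10 := by
    have := hηc.la.one_eq
    rw [la, mul_one, hηc.one_eq, hηd] at this
    have h2 : ((10 : ℕ) : ℂ) = charDeg (la η) := by rw [← this]; norm_num
    exact_mod_cast h2.symm
  obtain ⟨V, hV, hVr, hVd, hVW⟩ := extract hηc.la hWc hE h1
  have hV1 : mN N (la η) 1 = mN N (W + V) 1 := mN_congr (by rw [hVr, rs_add]) rfl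
  rw [mN_add_left hWc hV isChar_one] at hV1
  refine ⟨η, V, hη, hηd, hηE, hηre, hV, by omega, by omega, hVW, ?_⟩
  rw [hprod, rs_add, hVr, rs_add, rs_add]

theorem star_real (c : Ctx N) (hM : Reps N M) (hW : W ∈ M) (hW3 : charDeg W = 3)
    (hall : ∀ j ∈ M, charDeg j = 3 → rs N (dl j) = rs N j) :
    (11 : ℝ) + (M.filter fun W => charDeg W = 3).card ≤
      ∑ W ∈ M.filter (fun W => charDeg W ≠ 3), (5 * charDeg W - 16 : ℝ) / mN N W W := by
  classical
  have hre := hall W hW hW3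
  have hWc := (hM.irr W hW).isChar
  have hE := hM.E3 c hW (by omega)
  obtain ⟨η, V, hη, hηd, hηE, hηre, hV, hVd, hV1, hVW, hprod⟩ := real_data c hM hW hW3 hre
  have hηc := (hM.irr η hη).isChar
  have hηW : mN N η W = 0 := mN_ne_deg hηc hηE hWc hE (by omega)
  have hη3 : ∀ j ∈ M, charDeg j = 3 → mN N η j = 0 := fun j hj h3 =>
    mN_ne_deg hηc hηE (hM.irr j hj).isChar (hM.E3 c hj (by omega)) (by omega)
  have h33 : ∀ j ∈ M, j ≠ W → mN N W j = 0 := fun j hj hne => by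
    by_contra hcon
    exact hne (hM.uniq W hW j hj hcon).symm
  have hUη : ∀ j ∈ Us N M W η, j = W ∨ mN N V j ≠ 0 := by
    intro j hj
    obtain ⟨⟨hjM, hj3⟩, hjm⟩ := mem_Us.1 hj
    by_contra hcon
    push Not at hcon
    apply hjm
    have e : rs N (W * dl η) = rs N (W * η) := by rw [rs_mul, hηre, rs_mul]
    rw [mN_congr (e.trans hprod) rfl, mN_add_left (hWc.add hV) hηc (hM.irr j hjM).isChar,
      mN_add_left hWc hV (hM.irr j hjM).isChar, hcon.2, hη3 j hjM hj3, h33 j hjM hcon.1]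
  by_cases hVi : Irr V
  · -- `V` irreducible
    have hVb := c.mN_bound hV hV1
    rw [hVd] at hVb
    have hVp := hVi.mN_self_pos (N := N)
    norm_num at hVb
    have hco : Nat.Coprime (charDeg V) (mN N V V) := by
      rw [hVd]
      interval_cases mN N V V <;> norm_num
    obtain ⟨Z, hZ, hZr⟩ := hM.rep hVi hV1 hco
    have hZd : charDeg Z = 7 := by rw [deg_congr hZr, hVd]
    have hZE : mN N Z Z = mN N V V := mN_congr hZr hZr
    have hηT : Us N M W η ⊆ {W} := by
      intro j hj
      rw [Finset.mem_singleton]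
      refine (hUη j hj).resolve_right fun hcon => ?_
      obtain ⟨⟨hjM, hj3⟩, -⟩ := mem_Us.1 hj
      rw [← mN_congr hZr rfl] at hcon
      have := hM.uniq Z hZ j hjM hcon
      rw [this] at hZd
      omega
    have hZη : Z ≠ η := by rintro rfl; omega
    refine star_of c hM hW hW3 {η, Z} ?_ ({W} ∪ Us N M W Z) ?_ ?_
    · intro Y hY
      rw [Finset.mem_insert, Finset.mem_singleton] at hY
      rcases hY with rfl | rfl
      · exact ⟨hη, by omega⟩
      · exact ⟨hZ, by omega⟩
    · intro Y hY
      rw [Finset.mem_insert, Finset.mem_singleton] at hY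
      rcases hY with rfl | rfl
      · exact hηT.trans Finset.subset_union_left
      · exact Finset.subset_union_right
    · rw [Finset.sum_pair hZη.symm, hηd, hZd, hηE]
      have h1 := Us_card c hM hW hW3 hZ
      rw [hZd] at h1
      have h2 := Finset.card_union_le {W} (Us N M W Z)
      rw [Finset.card_singleton] at h2
      have h2' : (({W} ∪ Us N M W Z).card : ℝ) ≤ 1 + (Us N M W Z).card := by exact_mod_cast h2
      have hp : (0 : ℝ) < mN N Z Z := by rw [hZE]; exact_mod_cast hVp
      have hp4 : (mN N Z Z : ℝ) ≤ 4 := by rw [hZE]; exact_mod_cast hVb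
      have h1' : ((Us N M W Z).card : ℝ) ≤ 7 / mN N Z Z := by
        rw [le_div_iff₀ hp]; exact_mod_cast h1
      have h3 : (3 : ℝ) ≤ 12 / mN N Z Z := by
        rw [le_div_iff₀ hp]; linarith
      have h4 : (5 * ((7 : ℕ) : ℝ) - 16) / mN N Z Z = 7 / mN N Z Z + 12 / mN N Z Z := by
        rw [← add_div]; norm_num
      rw [h4]
      push_cast
      linarith
  -- `V` reducible
  obtain ⟨σ, κ, hσ, hκ, hσd, hκd, hVr⟩ : ∃ σ κ : G → ℂ, IsChar σ ∧ IsChar κ ∧ charDeg σ = 3 ∧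
      charDeg κ = 4 ∧ V = σ + κ := by
    obtain ⟨χ, hχ, hm⟩ := hV.exists_constituent (by omega)
    obtain ⟨τ, hτ, he, hd⟩ := hV.split hχ hm
    have h0 : charDeg τ ≠ 0 := by
      intro h0
      rw [hτ.eq_zero_of_deg h0, add_zero] at he
      exact hVi (he ▸ hχ)
    have h1 := mN_add_left (N := N) hχ.isChar hτ isChar_one
    rw [← he] at h1
    have h2 := c.three_le_char hχ.isChar (by omega) hχ.deg_pos.ne'
    have h3 := c.three_le_char hτ (by omega) h0
    rcases (by omega : charDeg χ = 3 ∨ charDeg χ = 4) with h | h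
    · exact ⟨χ, τ, hχ.isChar, hτ, h, by omega, he⟩
    · exact ⟨τ, χ, hτ, hχ.isChar, by omega, h, by rw [he, add_comm]⟩
  have hsum1 := mN_add_left (N := N) hσ hκ isChar_one
  rw [← hVr] at hsum1
  have hsumW := mN_add_left (N := N) hσ hκ hWc
  rw [← hVr] at hsumW
  have hσE' := c.mN_self_one hσ (by omega) (by omega) (by omega)
  have hκE' := c.mN_self_one hκ (by omega) (by omega) (by omega)
  obtain ⟨S, hS, hSr⟩ := hM.rep_one hσ (by omega) hσE'
  obtain ⟨K, hK, hKr⟩ := hM.rep_one hκ (by omega) hκE'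
  have hSd : charDeg S = 3 := by rw [deg_congr hSr, hσd]
  have hKd : charDeg K = 4 := by rw [deg_congr hKr, hκd]
  have hSc := (hM.irr S hS).isChar
  have hKc := (hM.irr K hK).isChar
  have hSE := hM.E3 c hS (by omega)
  have hKE := hM.E3 c hK (by omega)
  have hprod' : rs N (W * η) = rs N (W + (S + K) + η) := by
    rw [hprod, hVr]; simp only [rs_add, hSr, hKr]
  have hWS : W ≠ S := by
    rintro rfl
    rw [← mN_congr hSr rfl] at hsumW
    omega
  have hWSm : mN N W S = 0 := h33 S hS hWS.symm
  have hKS : mN N K S = 0 := mN_ne_deg hKc hKE hSc hSE (by omega)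
  have hKη : mN N K η = 0 := mN_ne_deg hKc hKE hηc hηE (by omega)
  have hKW : mN N K W = 0 := mN_ne_deg hKc hKE hWc hE (by omega)
  have hηS := hη3 S hS hSd
  have hUη' : Us N M W η ⊆ {W, S} := by
    intro j hj
    rw [Finset.mem_insert, Finset.mem_singleton]
    refine (hUη j hj).imp_right fun hcon => ?_
    obtain ⟨⟨hjM, hj3⟩, -⟩ := mem_Us.1 hj
    have e : rs N V = rs N (S + K) := by rw [hVr, rs_add, rs_add, hSr, hKr]
    rw [mN_congr e rfl, mN_add_left hSc hKc (hM.irr j hjM).isChar,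
      mN_ne_deg hKc hKE (hM.irr j hjM).isChar (hM.E3 c hjM (by omega)) (by omega), add_zero] at hcon
    exact (hM.uniq S hS j hjM hcon).symm
  have hηre' : ∀ φ : G → ℂ, rs N (φ * dl η) = rs N (φ * η) := fun φ => by
    rw [rs_mul, hηre, rs_mul]
  have hWre' : ∀ φ : G → ℂ, rs N (φ * dl W) = rs N (φ * W) := fun φ => by
    rw [rs_mul, hre, rs_mul]
  -- the product `W * S`
  have hWSη : mN N (W * S) η = 1 := by
    rw [mul_comm, mN_mul_left, mN_congr rfl (hWre' η), mul_comm η W, mN_congr rfl hprod',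
      mN_add_right (hWc.add (hSc.add hKc)) hηc hSc, mN_add_right hWc (hSc.add hKc) hSc,
      mN_add_right hSc hKc hSc, hSE, mN_comm (ψ := W), hWSm, mN_comm (ψ := K), hKS,
      mN_comm (ψ := η), hηS]
  have hWS1 : mN N (W * S) 1 = 0 := by
    rw [mul_comm, mN_mul_left, one_mul, mN_congr rfl hre, mN_comm, hWSm]
  obtain ⟨κ', hκ', hκ'r, hκ'd, -⟩ := extract (hWc.mul hSc) hηc hηE hWSη
  rw [deg_mul hWc hSc, hW3, hSd, hηd] at hκ'd
  have hκ'1 : mN N (W * S) 1 = mN N (η + κ') 1 := mN_congr (by rw [hκ'r, rs_add]) rfl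
  rw [mN_add_left hηc hκ' isChar_one, hWS1] at hκ'1
  have hκ'E := c.mN_self_one hκ' (by omega) (by omega) (by omega)
  obtain ⟨K', hK', hK'r⟩ := hM.rep_one hκ' (by omega) hκ'E
  have hK'd : charDeg K' = 4 := by rw [deg_congr hK'r]; omega
  have hK'E := hM.E3 c hK' (by omega)
  have hK'c := (hM.irr K' hK').isChar
  have hWSr : rs N (W * S) = rs N (η + K') := by rw [hκ'r, rs_add, hK'r]
  have hSre := hall S hS hSd
  -- `S` is linked to `K'`
  have hSK' : S ∈ Us N M W K' := by
    refine mem_Us.2 ⟨⟨hS, hSd⟩, ?_⟩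
    have e : rs N (W * dl S) = rs N (η + K') := by rw [rs_mul, hSre, ← rs_mul, hWSr]
    rw [← mN_swap, mN_congr e rfl, mN_add_left hηc hK'c hK'c, hK'E]
    omega
  -- at most one is linked to `K`
  have hUK : (Us N M W K).card ≤ 1 := by
    rw [Finset.card_le_one]
    intro j hj j' hj'
    by_contra hne
    obtain ⟨⟨hjM, hj3⟩, hjm⟩ := mem_Us.1 hj
    obtain ⟨⟨hjM', hj3'⟩, hjm'⟩ := mem_Us.1 hj'
    have hjc := (hM.irr j hjM).isChar
    have hjc' := (hM.irr j' hjM').isChar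
    have hjE := hM.E3 c hjM (by omega)
    have hjE' := hM.E3 c hjM' (by omega)
    have hX := hWc.mul hKc.dl
    have hXη : mN N (W * dl K) η ≠ 0 := by
      rw [← mN_swap, mN_congr (hηre' W) rfl, mN_congr hprod' rfl,
        mN_add_left (hWc.add (hSc.add hKc)) hηc hKc, mN_add_left hWc (hSc.add hKc) hKc,
        mN_add_left hSc hKc hKc, hKE]
      omega
    have hX1 : mN N (W * dl K) 1 = 0 := by
      rw [mN_mul_left, one_mul, dl_dl, mN_comm, hKW]
    have hXd : charDeg (W * dl K) = 12 := by rw [deg_mul hWc hKc.dl, deg_dl, hW3, hKd]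
    obtain ⟨t1, ht1, he1, hd1⟩ := (hX.rs (N := N)).split (irr_rs hηc hηE) hXη
    have m1 : mult t1 (rs N j) ≠ 0 := by
      have : mN N (W * dl K) j = mult (rs N η) (rs N j) + mult t1 (rs N j) := by
        rw [mN, he1, mult_add_left hηc.rs ht1 hjc.rs]
      have h0 : mult (rs N η) (rs N j) = 0 := hη3 j hjM hj3
      omega
    have m1' : mult t1 (rs N j') ≠ 0 := by
      have : mN N (W * dl K) j' = mult (rs N η) (rs N j') + mult t1 (rs N j') := by
        rw [mN, he1, mult_add_left hηc.rs ht1 hjc'.rs]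
      have h0 : mult (rs N η) (rs N j') = 0 := hη3 j' hjM' hj3'
      omega
    obtain ⟨t2, ht2, he2, hd2⟩ := ht1.split (irr_rs hjc hjE) m1
    have m2 : mult t2 (rs N j') ≠ 0 := by
      rw [he2, mult_add_left hjc.rs ht2 hjc'.rs] at m1'
      have h0 : mult (rs N j) (rs N j') = 0 := by
        by_contra hcon
        exact hne (hM.uniq j hjM j' hjM' hcon)
      omega
    obtain ⟨t3, ht3, he3, hd3⟩ := ht2.split (irr_rs hjc' hjE') m2
    have h31 : mult t3 1 = 0 := by
      have e : mN N (W * dl K) 1 = mult (rs N (W * dl K)) 1 := by rw [mN, rs_one]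
      rw [he1, he2, he3, mult_add_left hηc.rs (hjc.rs.add (hjc'.rs.add ht3)) isChar_one,
        mult_add_left hjc.rs (hjc'.rs.add ht3) isChar_one,
        mult_add_left hjc'.rs ht3 isChar_one] at e
      omega
    simp only [deg_rs] at hd1 hd2 hd3
    have hb := c.norm_bound ht3 h31
    have hp := ht3.mult_self_pos (by omega)
    have h0 : charDeg t3 / 3 = 0 := by omega
    rw [h0] at hb
    omega
  by_cases hKK : K' = K
  · have hUK' : Us N M W K ⊆ {W, S} := by
      intro j hj
      rw [hKK] at hSK'
      rw [Finset.card_le_one.1 hUK j hj S hSK']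
      simp
    refine star_of c hM hW hW3 {η, K} ?_ {W, S} ?_ ?_
    · intro Y hY
      rw [Finset.mem_insert, Finset.mem_singleton] at hY
      rcases hY with rfl | rfl
      · exact ⟨hη, by omega⟩
      · exact ⟨hK, by omega⟩
    · intro Y hY
      rw [Finset.mem_insert, Finset.mem_singleton] at hY
      rcases hY with rfl | rfl
      · exact hUη'
      · exact hUK'
    · rw [Finset.sum_pair (by rintro rfl; omega), hηd, hηE, hKd, hKE, Finset.card_pair hWS]
      norm_num
  · refine star_of c hM hW hW3 {η, K, K'} ?_ ({W} ∪ (Us N M W K ∪ Us N M W K')) ?_ ?_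
    · intro Y hY
      simp only [Finset.mem_insert, Finset.mem_singleton] at hY
      rcases hY with rfl | rfl | rfl
      · exact ⟨hη, by omega⟩
      · exact ⟨hK, by omega⟩
      · exact ⟨hK', by omega⟩
    · intro Y hY
      simp only [Finset.mem_insert, Finset.mem_singleton] at hY
      rcases hY with rfl | rfl | rfl
      · intro j hj
        have := hUη' hj
        rw [Finset.mem_insert, Finset.mem_singleton] at this
        rcases this with rfl | rfl
        · simp
        · exact Finset.mem_union_right _ (Finset.mem_union_right _ hSK')
      · exact Finset.subset_union_left.trans Finset.subset_union_right
      · exact Finset.subset_union_right.trans Finset.subset_union_right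
    · rw [Finset.sum_insert, Finset.sum_pair (fun h => hKK h.symm), hηd, hηE, hKd, hKE, hK'd, hK'E]
      · have h1 := Us_card c hM hW hW3 hK'
        rw [hK'd, hK'E] at h1
        have h2 := Finset.card_union_le {W} (Us N M W K ∪ Us N M W K')
        have h3 := Finset.card_union_le (Us N M W K) (Us N M W K')
        rw [Finset.card_singleton] at h2
        have h4 : (({W} ∪ (Us N M W K ∪ Us N M W K')).card : ℝ) ≤ 6 := by
          exact_mod_cast (by omega : ({W} ∪ (Us N M W K ∪ Us N M W K')).card ≤ 6)
        push_cast
        linarith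
      · simp only [Finset.mem_insert, Finset.mem_singleton]
        rintro (rfl | rfl) <;> omega

theorem star_three (c : Ctx N) (hM : Reps N M) (hW : W ∈ M) (hW3 : charDeg W = 3) :
    (11 : ℝ) + (M.filter fun W => charDeg W = 3).card ≤
      ∑ W ∈ M.filter (fun W => charDeg W ≠ 3), (5 * charDeg W - 16 : ℝ) / mN N W W := by
  by_cases h : ∃ j ∈ M, charDeg j = 3 ∧ mN N j (dl j) = 0
  · obtain ⟨j, hj, hj3, hjm⟩ := h
    exact star_nonreal c hM hj hj3 hjm
  · push Not at h
    refine star_real c hM hW hW3 fun j hj hj3 => ?_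
    have hE := hM.E3 c hj (by omega)
    have hjc := (hM.irr j hj).isChar
    exact (rs_eq_of hjc hE hjc.dl (by rw [mN_dl, hE]) (h j hj hj3)).symm

end Fb
end ACD

set_option linter.unusedSectionVars false

namespace ACD
open Representation Module

section H
variable {G : Type} [Group G] [Finite G] {N : Subgroup G} [hN : N.Normal] {φ ψ χ W U : G → ℂ}
  {M : Finset (G → ℂ)}

theorem rs_pch (X : Type) [MulAction G X] : rs N (pch G X) = pch N X := rfl

theorem mult_pch_one {H : Type} [Group H] [Finite H] (X : Type) [MulAction H X] [Finite X] :
    mult (pch H X) 1 = Nat.card (MulAction.orbitRel.Quotient H X) := by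
  apply mult_eq_of (isChar_pch X) isChar_one
  rw [ip_pch_one]

theorem orbit_count {H : Type} [Group H] [Finite H] (X : Type) [MulAction H X] [Finite X]
    (p : ℕ) (x0 : X) (htr : ∀ x y : X, ∃ h : H, h • x = y)
    (hp : ∀ x y : X, x ≠ y → p ≤ Nat.card {y' : X | ∃ h : H, h • x = x ∧ h • y = y'}) :
    p * (mult (pch H X) (pch H X) - 1) ≤ Nat.card X - 1 := by
  classical
  have := Fintype.ofFinite X
  set Q := MulAction.orbitRel.Quotient H (X × X) with hQ
  have hfQ : Fintype Q := Fintype.ofFinite Q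
  have h1 : mult (pch H X) (pch H X) = Nat.card Q := by
    rw [hQ, ← mult_pch_one, pch_prod, mult_mul_left, one_mul, dl_pch]
  let f : Q → ℕ := fun q => Nat.card q.orbit
  let q0 : Q := Quotient.mk'' (x0, x0)
  have hXX : Nat.card X * Nat.card X = ∑ q : Q, f q := by
    rw [← Nat.card_prod, Nat.card_congr (MulAction.selfEquivSigmaOrbits' H (X × X)), Nat.card_sigma]
  have hf0 : Nat.card X ≤ f q0 := by
    refine Nat.card_le_card_of_injective (fun x => (⟨(x, x), ?_⟩ : q0.orbit)) ?_
    · rw [MulAction.orbitRel.Quotient.mem_orbit]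
      apply Quotient.sound'
      obtain ⟨h, hh⟩ := htr x0 x
      exact ⟨h, by simp [hh]⟩
    · intro a b hab
      simpa using hab
  have hf : ∀ q : Q, q ≠ q0 → p * Nat.card X ≤ f q := by
    intro q hq
    have hne : ∀ a : X × X, a ∈ q.orbit → a.1 ≠ a.2 := by
      rintro ⟨a, b⟩ hab (rfl : a = b)
      rw [MulAction.orbitRel.Quotient.mem_orbit] at hab
      apply hq
      rw [← hab]
      apply Quotient.sound'
      obtain ⟨h, hh⟩ := htr x0 a
      exact ⟨h, by simp [hh]⟩
    have e : f q = ∑ x : X, ((q.orbit.toFinset).filter fun a => a.1 = x).card := by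
      have hh := Finset.card_eq_sum_card_fiberwise (f := (Prod.fst : X × X → X))
        (s := q.orbit.toFinset) (t := Finset.univ) (fun _ _ => Finset.mem_coe.2 (Finset.mem_univ _))
      rw [Set.toFinset_card, ← Nat.card_eq_fintype_card] at hh
      exact hh
    rw [e, mul_comm, Nat.card_eq_fintype_card, ← Finset.card_univ, ← smul_eq_mul, ← Finset.sum_const]
    refine Finset.sum_le_sum fun x _ => ?_
    obtain ⟨⟨a, b⟩, rfl⟩ := Quotient.exists_rep q
    obtain ⟨h, rfl⟩ := htr a x
    have hmem : (h • a, h • b) ∈ MulAction.orbitRel.Quotient.orbit (Quotient.mk _ (a, b) : Q) := by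
      rw [MulAction.orbitRel.Quotient.mem_orbit]
      apply Quotient.sound'
      exact ⟨h, rfl⟩
    refine (hp _ _ (hne _ hmem)).trans ?_
    rw [Nat.card_eq_card_finite_toFinset (Set.toFinite _)]
    refine (Finset.card_le_card_of_injOn (fun y => (h • a, y)) ?_ ?_).trans le_rfl
    · intro y hy
      obtain ⟨k, hk1, hk2⟩ := (Set.Finite.mem_toFinset _).1 hy
      rw [Finset.mem_coe, Finset.mem_filter, Set.mem_toFinset]
      refine ⟨?_, rfl⟩
      rw [MulAction.orbitRel.Quotient.mem_orbit]
      apply Quotient.sound'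
      refine ⟨k * h, ?_⟩
      simp only [Prod.smul_mk, mul_smul, hk1, hk2]
    · intro y _ y' _ hyy
      exact (Prod.ext_iff.1 hyy).2
  rw [← Finset.add_sum_erase _ _ (Finset.mem_univ q0)] at hXX
  have h2 : (Nat.card Q - 1) * (p * Nat.card X) ≤ ∑ q ∈ Finset.univ.erase q0, f q := by
    rw [Nat.card_eq_fintype_card, ← Finset.card_univ, ← Finset.card_erase_of_mem (Finset.mem_univ q0),
      ← smul_eq_mul, ← Finset.sum_const]
    exact Finset.sum_le_sum fun q hq => hf q (Finset.ne_of_mem_erase hq)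
  rw [h1]
  have hX : 0 < Nat.card X := Nat.card_pos_iff.2 ⟨⟨x0⟩, inferInstance⟩
  have h3 : (p * (Nat.card Q - 1)) * Nat.card X + Nat.card X ≤ Nat.card X * Nat.card X := by
    rw [hXX]
    calc _ = (Nat.card Q - 1) * (p * Nat.card X) + Nat.card X := by ring
      _ ≤ _ := by omega
  have h4 : (p * (Nat.card Q - 1) + 1) * Nat.card X ≤ Nat.card X * Nat.card X := by
    calc _ = (p * (Nat.card Q - 1)) * Nat.card X + Nat.card X := by ring
      _ ≤ _ := h3
  have := Nat.le_of_mul_le_mul_right h4 hX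
  omega

/-- The existence of a good character. -/
theorem exists_good (X : Type) [MulAction G X] [Finite X] (p : ℕ) (x0 : X)
    (htr : ∀ x y : X, ∃ h : N, h • x = y) (hX1 : 1 < Nat.card X)
    (hp : ∀ x y : X, x ≠ y → p ≤ Nat.card {y' : X | ∃ h : N, h • x = x ∧ h • y = y'}) :
    ∃ χ, Irr χ ∧ mN N χ 1 = 0 ∧ p * mN N χ χ ≤ charDeg χ := by
  have hπ := isChar_pch (G := G) X
  have hc := orbit_count (H := N) X p x0 htr hp
  rw [← rs_pch] at hc
  have hd : charDeg (pch G X) = Nat.card X := by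
    have := hπ.one_eq
    rw [pch] at this
    have h2 : MulAction.fixedBy X (1 : G) = Set.univ := by ext; simp
    rw [h2, Nat.card_congr (Equiv.Set.univ X)] at this
    exact_mod_cast this.symm
  have h1 : mN N (pch G X) 1 = 1 := by
    rw [mN, rs_one, rs_pch, mult_pch_one, Nat.card_eq_one_iff_unique]
    refine ⟨⟨fun a b => ?_⟩, ⟨Quotient.mk'' x0⟩⟩
    induction a using Quotient.inductionOn'
    induction b using Quotient.inductionOn'
    apply Quotient.sound'
    obtain ⟨h, hh⟩ := htr _ _
    exact ⟨h, hh⟩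
  by_contra hcon
  push Not at hcon
  have s1 := hπ.deg_eq_sum
  have s2 := hπ.mN_eq_sum (N := N) hπ
  have s3 := hπ.mN_eq_sum (N := N) isChar_one
  rw [sum_split (N := N)] at s1 s2 s3
  have z3 : ∑ χ ∈ I1 N, mult (pch G X) χ * mN N χ 1 = 0 :=
    Finset.sum_eq_zero fun χ hχ => by rw [(mem_I1.1 hχ).2, mul_zero]
  have z1 : ∑ χ ∈ I0 N, mult (pch G X) χ * charDeg χ = 1 := by
    rw [← h1, s3, z3, add_zero]
    refine Finset.sum_congr rfl fun χ hχ => ?_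
    rw [triv_mN (mem_I0.1 hχ).1 (mem_I0.1 hχ).2 isChar_one, mN_one_one, mul_one]
  have z2 : ∑ χ ∈ I0 N, mult (pch G X) χ * mN N χ (pch G X) = 1 := by
    rw [← z1]
    refine Finset.sum_congr rfl fun χ hχ => ?_
    rw [triv_mN (mem_I0.1 hχ).1 (mem_I0.1 hχ).2 hπ, mN_comm, h1, mul_one]
  have z4 : ∑ χ ∈ I1 N, mult (pch G X) χ * mN N χ χ ≤
      ∑ χ ∈ I1 N, mult (pch G X) χ * mN N χ (pch G X) := by
    refine Finset.sum_le_sum fun χ hχ => ?_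
    by_cases hm : mult (pch G X) χ = 0
    · simp [hm]
    · refine Nat.mul_le_mul_left _ ?_
      have hχi := (mem_I1.1 hχ).1
      rw [mN_comm (ψ := pch G X)]
      exact hπ.mN_le_of_constituent hχi hm hχi.isChar
  rw [z1, hd] at s1
  rw [z2] at s2
  change p * (mN N (pch G X) (pch G X) - 1) ≤ Nat.card X - 1 at hc
  have z5 : p * ∑ χ ∈ I1 N, mult (pch G X) χ * mN N χ χ ≤
      ∑ χ ∈ I1 N, mult (pch G X) χ * charDeg χ := by
    refine (Nat.mul_le_mul_left p (z4.trans ?_)).trans (hc.trans ?_) <;> omega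
  have z6 : ∑ χ ∈ I1 N, mult (pch G X) χ * charDeg χ ≠ 0 := by omega
  obtain ⟨χ, hχ, hne⟩ := Finset.exists_ne_zero_of_sum_ne_zero z6
  have z7 : ∑ χ ∈ I1 N, mult (pch G X) χ * charDeg χ <
      ∑ χ ∈ I1 N, p * (mult (pch G X) χ * mN N χ χ) := by
    refine Finset.sum_lt_sum (fun ξ hξ => ?_) ⟨χ, hχ, ?_⟩
    · have := (hcon ξ (mem_I1.1 hξ).1 (mem_I1.1 hξ).2).le
      calc _ ≤ mult (pch G X) ξ * (p * mN N ξ ξ) := Nat.mul_le_mul_left _ this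
        _ = _ := by ring
    · have := hcon χ (mem_I1.1 hχ).1 (mem_I1.1 hχ).2
      calc _ < mult (pch G X) χ * (p * mN N χ χ) :=
            Nat.mul_lt_mul_of_pos_left this (Nat.pos_of_ne_zero (left_ne_zero_of_mul hne))
        _ = _ := by ring
  rw [← Finset.mul_sum] at z7
  omega

/-- Sylow subgroups of `N`, with the action of `G`. -/
def Om (p : ℕ) (N : Subgroup G) : Type := Sylow p N

instance (p : ℕ) : Finite (Om p N) := inferInstanceAs (Finite (Sylow p N))

noncomputable instance (p : ℕ) : MulAction G (Om p N) :=
  MulAction.compHom (Sylow p N) (MulAut.conjNormal : G →* MulAut N)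

theorem Om_smul (p : ℕ) (n : N) (P : Sylow p N) :
    (n • (show Om p N from P) : Om p N) = (n • P : Sylow p N) := by
  change (MulAut.conjNormal (H := N) (n : G) : MulAut N) • P = MulAut.conj n • P
  rw [MulAut.conjNormal_val]

theorem Ctx.not_solvable (c : Ctx N) : ¬ Group.IsSolvable N := by
  intro h
  obtain ⟨x, y, hxy⟩ := c.na
  have : Nontrivial N := ⟨x * y, y * x, hxy⟩
  have h1 := Group.IsSolvable.commutator_lt_top_of_nontrivial N
  rw [c.perfect] at h1
  exact lt_irrefl _ h1

theorem exists_good_sylow (c : Ctx N) (p : ℕ) [hpf : Fact p.Prime] (hdvd : p ∣ Nat.card N) :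
    ∃ χ, Irr χ ∧ mN N χ 1 = 0 ∧ p * mN N χ χ ≤ charDeg χ := by
  have P0 : Sylow p N := default
  refine exists_good (Om p N) p P0 ?_ ?_ ?_
  · intro P Q
    obtain ⟨n, hn⟩ := MulAction.exists_smul_eq N (α := Sylow p N) P Q
    exact ⟨n, (Om_smul p n P).trans hn⟩
  · by_contra hcon
    have hsub : Subsingleton (Sylow p N) := by
      have : Nat.card (Sylow p N) ≤ 1 := not_lt.1 hcon
      exact (Finite.card_le_one_iff_subsingleton).1 this
    have hP0 : (P0 : Subgroup N) ≠ ⊥ := by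
      intro hbot
      have := P0.card_eq_multiplicity
      rw [show Nat.card P0 = 1 by
        change Nat.card (P0 : Subgroup N) = 1; rw [hbot]; simp] at this
      have h2 : 0 < (Nat.card N).factorization p :=
        hpf.out.factorization_pos_of_dvd Nat.card_pos.ne' hdvd
      have := Nat.one_lt_pow h2.ne' hpf.out.one_lt
      omega
    have hinv : ∀ (g : G) (n m : N), n ∈ (P0 : Subgroup N) → (m : G) = g * n * g⁻¹ →
        m ∈ (P0 : Subgroup N) := by
      intro g n m hn hm
      have e : (MulAut.conjNormal g : MulAut N) • P0 = P0 := Subsingleton.elim _ _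
      have e2 : (MulAut.conjNormal g : MulAut N) n ∈
          (((MulAut.conjNormal g : MulAut N) • P0 : Sylow p N) : Subgroup N) := by
        rw [Sylow.pointwise_smul_def]
        exact Subgroup.smul_mem_pointwise_smul n _ _ hn
      rw [e] at e2
      have e3 : m = (MulAut.conjNormal g : MulAut N) n := by
        apply Subtype.ext
        rw [hm, MulAut.conjNormal_apply]
      rw [e3]
      exact e2
    rcases c.dichotomy (P0 : Subgroup N) hinv with h | h
    · exact hP0 h
    · have hpg : IsPGroup p N := by
        have := P0.isPGroup'
        rw [h] at this
        exact this.of_equiv Subgroup.topEquiv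
      have := hpg.isNilpotent
      exact c.not_solvable inferInstance
  · intro P Q hne
    change Sylow p N at P Q
    have hsub : (MulAction.orbit (P : Subgroup N) Q : Set (Sylow p N)) ⊆
        {y' : Sylow p N | ∃ h : N, h • P = P ∧ h • Q = y'} := by
      rintro _ ⟨h, rfl⟩
      refine ⟨h, ?_, rfl⟩
      rw [Sylow.smul_eq_iff_mem_normalizer]
      exact Subgroup.le_normalizer h.2
    have hset : {y' : Om p N | ∃ h : N, h • (show Om p N from P) = (show Om p N from P) ∧
        h • (show Om p N from Q) = y'} = {y' : Sylow p N | ∃ h : N, h • P = P ∧ h • Q = y'} := by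
      ext y
      constructor
      · rintro ⟨h, h1, h2⟩
        exact ⟨h, (Om_smul p h P).symm.trans h1, (Om_smul p h Q).symm.trans h2⟩
      · rintro ⟨h, h1, h2⟩
        exact ⟨h, (Om_smul p h P).trans h1, (Om_smul p h Q).trans h2⟩
    refine le_of_le_of_eq ?_ (congrArg (fun s : Set (Sylow p N) => Nat.card s) hset).symm
    refine le_trans ?_ (Nat.card_mono (Set.toFinite _) hsub)
    obtain ⟨n, hn⟩ := IsPGroup.card_orbit P.isPGroup' Q
    rw [hn]
    have hn0 : n ≠ 0 := by
      rintro rfl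
      rw [pow_zero] at hn
      have hfix : Q ∈ MulAction.fixedPoints (P : Subgroup N) (Sylow p N) := by
        rw [MulAction.mem_fixedPoints']
        intro y hy
        have hs := (Nat.card_eq_one_iff_unique.1 hn).1
        exact congrArg Subtype.val
          (hs.elim (⟨y, hy⟩ : MulAction.orbit (P : Subgroup N) Q) ⟨Q, MulAction.mem_orbit_self Q⟩)
      rw [P.2.sylow_mem_fixedPoints_iff] at hfix
      exact hne (Sylow.ext (P.3 Q.2 hfix).symm)
    exact Nat.le_self_pow hn0 p

end H
end ACD

set_option linter.unusedSectionVars false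

namespace ACD
open Representation Module

section K
variable {G : Type} [Group G] [Finite G] {N : Subgroup G} [hN : N.Normal] {φ ψ χ W U Y : G → ℂ}
  {M : Finset (G → ℂ)}

theorem deg_sy5 (h : IsChar φ) (hd : charDeg φ = 5) : charDeg (sy φ) = 15 := by
  have := h.sy.one_eq
  rw [sy, mul_one, h.one_eq, hd] at this
  have h2 : ((15 : ℕ) : ℂ) = charDeg (sy φ) := by rw [← this]; norm_num
  exact_mod_cast h2.symm

theorem deg_la5 (h : IsChar φ) (hd : charDeg φ = 5) : charDeg (la φ) = 10 := by
  have := h.la.one_eq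
  rw [la, mul_one, h.one_eq, hd] at this
  have h2 : ((10 : ℕ) : ℂ) = charDeg (la φ) := by rw [← this]; norm_num
  exact_mod_cast h2.symm

theorem f_pos (c : Ctx N) (hM : Reps N M) (h3 : ∀ W ∈ M, charDeg W ≠ 3) (hW : W ∈ M) :
    (0 : ℝ) ≤ (5 * charDeg W - 16 : ℝ) / mN N W W := by
  have h4 := c.three_le_char (hM.irr W hW).isChar (hM.nt W hW) (hM.irr W hW).deg_pos.ne'
  have h5 : 4 ≤ charDeg W := by have := h3 W hW; omega
  have h6 : (4 : ℝ) ≤ charDeg W := by exact_mod_cast h5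
  apply div_nonneg _ (Nat.cast_nonneg _)
  linarith

theorem f_two (c : Ctx N) (hM : Reps N M) (h3 : ∀ W ∈ M, charDeg W ≠ 3) (hW : W ∈ M)
    (hd : charDeg W ≤ 15) : (2 : ℝ) ≤ (5 * charDeg W - 16 : ℝ) / mN N W W := by
  have h4 := c.three_le_char (hM.irr W hW).isChar (hM.nt W hW) (hM.irr W hW).deg_pos.ne'
  have h5 : 4 ≤ charDeg W := by have := h3 W hW; omega
  have hE := (hM.irr W hW).mN_self_pos (N := N)
  have hb := c.mN_bound (hM.irr W hW).isChar (hM.nt W hW)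
  have hE' : (0 : ℝ) < mN N W W := by exact_mod_cast hE
  rw [le_div_iff₀ hE']
  have : 2 * mN N W W + 16 ≤ 5 * charDeg W := by
    generalize mN N W W = E at *
    generalize charDeg W = d at *
    interval_cases d <;> omega
  have h7 : (2 * mN N W W + 16 : ℝ) ≤ 5 * charDeg W := by exact_mod_cast this
  linarith

theorem star_pair (c : Ctx N) (hM : Reps N M) (h3 : ∀ W ∈ M, charDeg W ≠ 3) (S : Finset (G → ℂ))
    (hS : S ⊆ M) (hsum : (11 : ℝ) ≤ ∑ Y ∈ S, (5 * charDeg Y - 16 : ℝ) / mN N Y Y) :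
    (11 : ℝ) + (M.filter fun W => charDeg W = 3).card ≤
      ∑ W ∈ M.filter (fun W => charDeg W ≠ 3), (5 * charDeg W - 16 : ℝ) / mN N W W := by
  rw [Finset.filter_true_of_mem h3, Finset.filter_false_of_mem h3, Finset.card_empty]
  refine le_trans (by simpa using hsum) (Finset.sum_le_sum_of_subset_of_nonneg hS ?_)
  intro W hW _
  exact f_pos c hM h3 hW

theorem other_rep (c : Ctx N) (hM : Reps N M) (hY : Y ∈ M) (hY5 : charDeg Y = 5)
    {T : G → ℂ} (hT : IsChar T) (hT1 : mN N T 1 = 0) (hd : charDeg T ≤ 15) (h5 : ¬ 5 ∣ charDeg T) :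
    ∃ W ∈ M, W ≠ Y ∧ charDeg W ≤ 15 := by
  have hYi := hM.irr Y hY
  have hE : mN N Y Y = 1 := hM.E3 c hY hY5.le
  have : ∃ χ, Irr χ ∧ mult T χ ≠ 0 ∧ mN N χ Y = 0 := by
    by_contra hcon
    push Not at hcon
    apply h5
    rw [hT.deg_eq_sum]
    refine Finset.dvd_sum fun χ hχ => ?_
    by_cases hm : mult T χ = 0
    · simp [hm]
    · have e := prop_mN hYi (mem_irr.1 hχ) (hcon χ (mem_irr.1 hχ) hm) hYi.isChar
      rw [hE, hY5, mul_one] at e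
      exact Dvd.dvd.mul_left ⟨_, e.symm⟩ _
  obtain ⟨χ, hχ, hm, h0⟩ := this
  have h1 : mN N χ 1 = 0 := by
    have := hT.mN_le_of_constituent (N := N) hχ hm isChar_one
    omega
  obtain ⟨W, hW, hWm⟩ := hM.ex χ hχ h1
  refine ⟨W, hW, fun e => hWm (e ▸ h0), (hM.min W hW χ hχ hWm).trans (le_trans ?_ hd)⟩
  obtain ⟨τ, hτ, he, hd'⟩ := hT.split hχ hm
  omega

theorem star_zero (c : Ctx N) (hM : Reps N M) (h3 : ∀ W ∈ M, charDeg W ≠ 3) (p : ℕ) (hp : 5 ≤ p)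
    (hχ : Irr χ) (hχ1 : mN N χ 1 = 0) (hχp : p * mN N χ χ ≤ charDeg χ) :
    (11 : ℝ) + (M.filter fun W => charDeg W = 3).card ≤
      ∑ W ∈ M.filter (fun W => charDeg W ≠ 3), (5 * charDeg W - 16 : ℝ) / mN N W W := by
  classical
  obtain ⟨Y, hY, hm⟩ := hM.ex χ hχ hχ1
  have hYi := hM.irr Y hY
  have hle := hM.min Y hY χ hχ hm
  have e1 := prop_mN hYi hχ hm hχ.isChar
  have e2 := prop_mN hYi hχ hm hYi.isChar
  rw [mN_comm (φ := Y)] at e1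
  have hp5 : 5 * mN N χ χ ≤ charDeg χ := (Nat.mul_le_mul_right _ hp).trans hχp
  have hYp : 5 * mN N Y Y ≤ charDeg Y := by
    have hx := hχ.deg_pos
    have : charDeg χ * charDeg χ * (5 * mN N Y Y) ≤ charDeg χ * charDeg χ * charDeg Y := by
      calc charDeg χ * charDeg χ * (5 * mN N Y Y) = 5 * charDeg χ * (charDeg χ * mN N Y Y) := by ring
        _ = charDeg Y * (5 * (charDeg χ * mN N χ Y)) := by rw [← e2]; ring
        _ = charDeg Y * charDeg Y * (5 * mN N χ χ) := by rw [← e1]; ring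
        _ ≤ charDeg Y * charDeg χ * charDeg χ :=
            Nat.mul_le_mul (Nat.mul_le_mul_left _ hle) hp5
        _ = _ := by ring
    exact Nat.le_of_mul_le_mul_left this (Nat.mul_pos hx hx)
  have hE := hYi.mN_self_pos (N := N)
  have hE' : (0 : ℝ) < mN N Y Y := by exact_mod_cast hE
  by_cases h6 : 6 ≤ charDeg Y
  · refine star_pair c hM h3 {Y} (by simpa using hY) ?_
    rw [Finset.sum_singleton, le_div_iff₀ hE']
    have a1 : (5 * mN N Y Y : ℝ) ≤ charDeg Y := by exact_mod_cast hYp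
    have a2 : (6 : ℝ) ≤ charDeg Y := by exact_mod_cast h6
    linarith
  have hY5 : charDeg Y = 5 := by omega
  have hE1 : mN N Y Y = 1 := by omega
  have hYc := hYi.isChar
  have fin : ∀ W ∈ M, W ≠ Y → charDeg W ≤ 15 →
    (11 : ℝ) + (M.filter fun W => charDeg W = 3).card ≤
      ∑ W ∈ M.filter (fun W => charDeg W ≠ 3), (5 * charDeg W - 16 : ℝ) / mN N W W := by
    intro W hW hne hd
    refine star_pair c hM h3 {Y, W} ?_ ?_
    · intro Z hZ
      rcases Finset.mem_insert.1 hZ with rfl | hZ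
      · exact hY
      · rw [Finset.mem_singleton.1 hZ]; exact hW
    · rw [Finset.sum_pair hne.symm, hE1, hY5]
      have := f_two c hM h3 hW hd
      push_cast
      linarith
  by_cases hreal : mN N Y (dl Y) = 0
  · obtain ⟨W, hW, hr⟩ := hM.rep_one (φ := dl Y) hYc.dl
      (by have := hM.nt Y hY; rw [← dl_one, mN_dl]; exact this)
      (by rw [mN_dl]; exact hE1)
    refine fin W hW ?_ ?_
    · rintro rfl
      rw [mN, ← hr] at hreal
      exact hE.ne' hreal
    · rw [← deg_rs (N := N), hr, deg_rs, deg_dl, hY5]; norm_num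
  · have h1 : mN N (Y * Y) 1 = 1 := by
      have a := rs_eq_of hYc hE1 hYc.dl (by rw [mN_dl]; exact hE1) hreal
      rw [mN_mul_left, one_mul, mN, ← a]
      exact hE1
    rw [← sy_add_la, mN_add_left hYc.sy hYc.la isChar_one] at h1
    have hsd := deg_sy5 hYc hY5
    have hld := deg_la5 hYc hY5
    rcases Nat.eq_zero_or_pos (mN N (sy Y) 1) with h0 | h0
    · obtain ⟨T, hT, -, hd, hT1⟩ := extract_one (N := N) hYc.la (by omega)
      obtain ⟨W, hW, hne, hd'⟩ := other_rep c hM hY hY5 hT hT1 (by omega) (by omega)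
      exact fin W hW hne hd'
    · obtain ⟨T, hT, -, hd, hT1⟩ := extract_one (N := N) hYc.sy (by omega)
      obtain ⟨W, hW, hne, hd'⟩ := other_rep c hM hY hY5 hT hT1 (by omega) (by omega)
      exact fin W hW hne hd'

end K
end ACD

set_option linter.unusedSectionVars false

namespace ACD
open Representation Module

theorem root_data {V : Type} [AddCommGroup V] [Module ℂ V] [FiniteDimensional ℂ V]
    (f : V →ₗ[ℂ] V) (n : ℕ) (hn : 0 < n) (hf : f ^ n = 1) :
    ∃ s : Multiset ℂ, s.card = finrank ℂ V ∧ (∀ z ∈ s, z ^ n = 1) ∧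
      LinearMap.trace ℂ V f = s.sum ∧ ∀ α : ℂ, (∀ z ∈ s, z = α) → f = α • LinearMap.id := by
  have hsp : f.charpoly.Splits := IsAlgClosed.splits _
  have hcard : f.charpoly.roots.card = finrank ℂ V := by
    rw [← hsp.natDegree_eq_card_roots, LinearMap.charpoly_natDegree]
  refine ⟨f.charpoly.roots, hcard, ?_, ?_, ?_⟩
  · intro z hz
    have h1 := (Module.End.hasEigenvalue_iff_isRoot_charpoly f z).2
      ((Polynomial.mem_roots (LinearMap.charpoly_monic f).ne_zero).1 hz)
    obtain ⟨v, hv⟩ := h1.exists_hasEigenvector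
    have h2 := hv.pow_apply n
    rw [hf] at h2
    have h3 : (z ^ n - 1) • v = 0 := by
      rw [sub_smul, one_smul, ← h2]; simp
    rcases smul_eq_zero.1 h3 with h | h
    · exact sub_eq_zero.1 h
    · exact absurd h hv.2
  · let b := Module.finBasis ℂ V
    rw [LinearMap.trace_eq_matrix_trace ℂ b, Matrix.trace_eq_sum_roots_charpoly,
      LinearMap.charpoly_toMatrix]
  · intro α hα
    have h1 : f.charpoly = (Polynomial.X - Polynomial.C α) ^ (finrank ℂ V) := by
      have h2 := hsp.eq_prod_roots_of_monic (LinearMap.charpoly_monic f)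
      rw [Multiset.eq_replicate_of_mem hα, hcard] at h2
      rw [h2]; simp
    have h2 : minpoly ℂ f ∣ (Polynomial.X - Polynomial.C α) ^ (finrank ℂ V) := by
      rw [← h1]; exact LinearMap.minpoly_dvd_charpoly f
    have h3 : minpoly ℂ f ∣ Polynomial.X ^ n - 1 := by
      apply minpoly.dvd
      simp [hf]
    have h4 : Squarefree (minpoly ℂ f) := by
      refine Squarefree.squarefree_of_dvd h3 (Polynomial.Separable.squarefree ?_)
      exact Polynomial.separable_X_pow_sub_C (1 : ℂ) (by exact_mod_cast hn.ne') one_ne_zero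
    have h5 : minpoly ℂ f ∣ Polynomial.X - Polynomial.C α := h4.isRadical _ _ h2
    obtain ⟨r, hr⟩ := h5
    have h6 := congrArg (Polynomial.aeval f) hr
    rw [map_mul, minpoly.aeval, zero_mul] at h6
    simp only [map_sub, Polynomial.aeval_X, Polynomial.aeval_C] at h6
    rw [sub_eq_zero] at h6
    rw [h6]; rfl

theorem norm_sum_le (s : Multiset ℂ) (h : ∀ z ∈ s, ‖z‖ = 1) : ‖s.sum‖ ≤ s.card := by
  induction s using Multiset.induction_on with
  | empty => simp
  | cons a t ih =>
    have h1 := ih fun z hz => h z (Multiset.mem_cons_of_mem hz)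
    have h2 := h a (Multiset.mem_cons_self a t)
    rw [Multiset.sum_cons, Multiset.card_cons]
    push_cast
    linarith [norm_add_le a t.sum]

theorem all_eq (s : Multiset ℂ) (h : ∀ z ∈ s, ‖z‖ = 1) (α : ℂ) (hα : ‖α‖ = 1)
    (hs : s.sum = s.card * α) : ∀ z ∈ s, z = α := by
  intro z hz
  obtain ⟨t, rfl⟩ := Multiset.exists_cons_of_mem hz
  have h1 := norm_sum_le t fun z hz => h z (Multiset.mem_cons_of_mem hz)
  have h2 := h z hz
  rw [Multiset.sum_cons, Multiset.card_cons] at hs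
  have h3 : (starRingEnd ℂ α) * z + (starRingEnd ℂ α) * t.sum = (t.card + 1 : ℝ) := by
    rw [← mul_add, hs]
    have : (starRingEnd ℂ α) * α = 1 := by
      rw [mul_comm, Complex.mul_conj, Complex.normSq_eq_norm_sq, hα]; simp
    push_cast
    linear_combination (t.card + 1 : ℂ) * this
  have h4 := congrArg Complex.re h3
  rw [Complex.add_re, Complex.ofReal_re] at h4
  have h5 : ((starRingEnd ℂ α) * t.sum).re ≤ t.card := by
    refine (Complex.re_le_norm _).trans ?_
    rw [norm_mul, RCLike.norm_conj, hα, one_mul]; exact h1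
  have h6 : ‖z - α‖ ^ 2 ≤ 0 := by
    have h7 : ‖z - α‖ ^ 2 = 2 - 2 * ((starRingEnd ℂ α) * z).re := by
      have e1 : ‖z‖ ^ 2 = 1 := by rw [h2]; norm_num
      have e2 : ‖α‖ ^ 2 = 1 := by rw [hα]; norm_num
      rw [← Complex.normSq_eq_norm_sq, Complex.normSq_apply] at e1 e2 ⊢
      simp only [Complex.sub_re, Complex.sub_im, Complex.mul_re, Complex.conj_re, Complex.conj_im]
      linarith
    linarith
  have h8 : ‖z - α‖ = 0 := by nlinarith [norm_nonneg (z - α)]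
  exact sub_eq_zero.1 (norm_eq_zero.1 h8)

theorem norm_one_of (s : Multiset ℂ) (n : ℕ) (hn : 0 < n) (h : ∀ z ∈ s, z ^ n = 1)
    (α : ℂ) (hs : s.sum = s.card * α) (h0 : s.card ≠ 0) (hα : α ≠ 0) (hi : IsIntegral ℤ α) :
    ‖α‖ = 1 := by
  classical
  let K := IntermediateField.adjoin ℚ (s.toFinset : Set ℂ)
  have hintg : ∀ z ∈ s, IsIntegral ℚ z := by
    intro z hz
    refine IsIntegral.of_pow hn ?_
    rw [h z hz]; exact isIntegral_one
  have hfd : FiniteDimensional ℚ K := by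
    apply IntermediateField.finiteDimensional_adjoin
    intro z hz
    exact hintg z (by simpa using hz)
  have hnf : NumberField K := ⟨⟩
  have hsK : ∀ z ∈ s, z ∈ K := fun z hz => IntermediateField.subset_adjoin _ _ (by simpa using hz)
  obtain ⟨t, ht⟩ : ∃ t : Multiset K, t.map (algebraMap K ℂ) = s := by
    refine ⟨s.pmap (fun z hz => (⟨z, hz⟩ : K)) hsK, ?_⟩
    rw [Multiset.map_pmap]
    simp [Multiset.pmap_eq_map]
  have hct : s.card = t.card := by rw [← ht, Multiset.card_map]
  rw [hct] at hs h0
  have hc : (t.card : ℂ) ≠ 0 := by exact_mod_cast h0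
  have hcK : (t.card : K) ≠ 0 := by
    exact_mod_cast h0
  let a : K := t.sum / t.card
  have ha : algebraMap K ℂ a = α := by
    simp only [a, map_div₀, map_multiset_sum, map_natCast]
    rw [ht, hs]
    field_simp
  have ha0 : a ≠ 0 := by
    intro h0; rw [h0, map_zero] at ha; exact hα ha.symm
  have hai : IsIntegral ℤ a := by
    rw [← ha] at hi
    exact (isIntegral_algebraMap_iff (algebraMap K ℂ).injective).1 hi
  obtain ⟨m, hm, e⟩ := NumberField.Embeddings.pow_eq_one_of_norm_le_one K ℂ ha0 hai (by
    intro φ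
    have e1 : φ a = (t.map φ).sum / t.card := by
      simp only [a, map_div₀, map_multiset_sum, map_natCast]
    rw [e1, norm_div, Complex.norm_natCast]
    have hpos : (0 : ℝ) < t.card := by
      have : 0 < t.card := Nat.pos_of_ne_zero h0
      exact_mod_cast this
    rw [div_le_one hpos]
    have := norm_sum_le (t.map φ) (by
      intro z hz
      obtain ⟨w, hw, rfl⟩ := Multiset.mem_map.1 hz
      have h1 := h _ (ht ▸ Multiset.mem_map_of_mem _ hw)
      have h2 : w ^ n = 1 := by
        apply (algebraMap K ℂ).injective
        rw [map_pow, h1, map_one]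
      apply Complex.norm_eq_one_of_pow_eq_one _ hn.ne'
      rw [← map_pow, h2, map_one])
    rwa [Multiset.card_map] at this)
  apply Complex.norm_eq_one_of_pow_eq_one _ hm.ne'
  rw [← ha, ← map_pow, e, map_one]

end ACD

set_option linter.unusedSectionVars false

namespace ACD
open Representation Module

section R
variable {G : Type} [Group G] [Finite G] {φ χ : G → ℂ}

theorem rep_pow_card {V : Type} [AddCommGroup V] [Module ℂ V]
    (ρ : Representation ℂ G V) (g : G) : (ρ g) ^ (Nat.card G) = 1 := by
  rw [← map_pow, pow_card_eq_one', map_one]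

theorem IsChar.integral (h : IsChar φ) (g : G) : IsIntegral ℤ (φ g) := by
  obtain ⟨V, _, _, _, ρ, rfl⟩ := h
  obtain ⟨s, -, h1, h2, -⟩ := root_data (ρ g) (Nat.card G) Nat.card_pos (rep_pow_card ρ g)
  change IsIntegral ℤ (LinearMap.trace ℂ V (ρ g))
  rw [h2]
  refine IsIntegral.multiset_sum fun z hz => ?_
  refine IsIntegral.of_pow (Nat.card_pos (α := G)) ?_
  rw [h1 z hz]; exact isIntegral_one

theorem class_integral (h : Irr χ) (x : G) (C : Finset G)
    (hC : ∀ g, ∀ y ∈ C, g * y * g⁻¹ ∈ C) (hx : ∀ y ∈ C, IsConj x y) :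
    IsIntegral ℤ (C.card * (χ x / χ 1)) := by
  have h1 := h.isChar.one_eq
  have hpos := h.deg_pos
  have hχ0 : χ 1 ≠ 0 := by rw [h1]; exact_mod_cast hpos.ne'
  have hconj : ∀ y ∈ C, χ y = χ x := by
    intro y hy
    obtain ⟨u, hu⟩ := isConj_iff.1 (hx y hy)
    rw [← hu, h.isChar.conj]
  obtain ⟨V, _, _, _, ρ, hρ, rfl⟩ := h
  let T : V →ₗ[ℂ] V := ∑ y ∈ C, ρ y
  obtain ⟨c, hc⟩ := schur_scalar ρ T (by
    intro g
    change T * ρ g = ρ g * T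
    simp only [T, Finset.sum_mul, Finset.mul_sum, ← map_mul]
    refine Finset.sum_nbij' (fun y => g⁻¹ * y * g) (fun y => g * y * g⁻¹) ?_ ?_ ?_ ?_ ?_
    · intro y hy
      simpa using hC g⁻¹ y hy
    · intro y hy
      exact hC g y hy
    · intro y _; group
    · intro y _; group
    · intro y _; congr 1; group)
  have e : (C.card : ℂ) * (ρ.character x / ρ.character 1) = c := by
    have h2 := congrArg (LinearMap.trace ℂ V) hc
    simp only [T, map_sum, map_smul, LinearMap.trace_id, smul_eq_mul] at h2
    have h3 : ∑ y ∈ C, LinearMap.trace ℂ V (ρ y) = C.card * ρ.character x := by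
      refine (Finset.sum_congr rfl hconj).trans ?_
      rw [Finset.sum_const, nsmul_eq_mul]
    rw [h3, ← char_one ρ] at h2
    rw [← mul_div_assoc, div_eq_iff hχ0]
    exact h2
  rw [e]
  have hfin : Nontrivial V := by
    rw [← finrank_pos_iff (R := ℂ)]
    rw [char_one] at hχ0
    exact Nat.pos_of_ne_zero (by exact_mod_cast hχ0)
  let F : MonoidAlgebra ℤ G →ₐ[ℤ] Module.End ℂ V := MonoidAlgebra.lift ℤ (Module.End ℂ V) G ρ
  have hI : IsIntegral ℤ (F (∑ y ∈ C, MonoidAlgebra.single y 1)) :=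
    (IsIntegral.of_finite ℤ (∑ y ∈ C, MonoidAlgebra.single y (1 : ℤ))).map F
  have hF : F (∑ y ∈ C, MonoidAlgebra.single y 1) = algebraMap ℂ (Module.End ℂ V) c := by
    rw [map_sum]
    simp only [F, MonoidAlgebra.lift_single, one_smul]
    exact hc
  rw [hF] at hI
  exact (isIntegral_algebraMap_iff (algebraMap ℂ (Module.End ℂ V)).injective).1 hI

theorem mult_regular (h : Irr χ) : mult (pch G G) χ = charDeg χ := by
  classical
  have := Fintype.ofFinite G
  apply mult_eq_of (isChar_pch G) h.isChar
  rw [ip_def, Finset.sum_eq_single 1]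
  · rw [pch, inv_one, h.isChar.one_eq]
    have : MulAction.fixedBy G (1 : G) = Set.univ := by ext; simp
    rw [this, Nat.card_congr (Equiv.Set.univ G), ← mul_assoc, inv_mul_cancel₀, one_mul]
    exact_mod_cast Nat.card_pos.ne'
  · intro g _ hg
    rw [pch]
    have : MulAction.fixedBy G g = ∅ := by ext; simp [hg]
    rw [this]; simp
  · simp

theorem regular_zero (g : G) (hg : g ≠ 1) : ∑ χ ∈ irr G, (charDeg χ : ℂ) * χ g = 0 := by
  have h1 := congrFun (isChar_pch (G := G) G).eq_sum g
  have h2 : pch G G g = 0 := by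
    rw [pch]
    have : MulAction.fixedBy G g = ∅ := by ext; simp [hg]
    rw [this]; simp
  rw [h2, Finset.sum_apply] at h1
  rw [h1]
  refine Finset.sum_congr rfl fun χ hχ => ?_
  rw [mult_regular (mem_irr.1 hχ)]
  simp

theorem exists_special (g : G) (hg : g ≠ 1) (q : ℕ) (hq : q.Prime) :
    ∃ χ : G → ℂ, Irr χ ∧ χ ≠ 1 ∧ χ g ≠ 0 ∧ ¬ q ∣ charDeg χ := by
  classical
  by_contra hcon
  push Not at hcon
  have h1 := regular_zero g hg
  rw [← Finset.add_sum_erase _ _ (mem_irr.2 (irr_one (G := G))), deg_one, Pi.one_apply] at h1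
  have h2 : IsIntegral ℤ (∑ χ ∈ (irr G).erase 1, ((charDeg χ / q : ℕ) : ℂ) * χ g) := by
    refine IsIntegral.sum _ fun χ hχ => ?_
    refine IsIntegral.mul ?_ ((mem_irr.1 (Finset.mem_of_mem_erase hχ)).isChar.integral g)
    exact_mod_cast isIntegral_algebraMap (R := ℤ) (A := ℂ) (x := ((charDeg χ / q : ℕ) : ℤ))
  have hq0 : (q : ℂ) ≠ 0 := by exact_mod_cast hq.ne_zero
  have h3 : ∑ χ ∈ (irr G).erase 1, (charDeg χ : ℂ) * χ g =
      q * ∑ χ ∈ (irr G).erase 1, ((charDeg χ / q : ℕ) : ℂ) * χ g := by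
    rw [Finset.mul_sum]
    refine Finset.sum_congr rfl fun χ hχ => ?_
    by_cases h0 : χ g = 0
    · simp [h0]
    · have hd := hcon χ (mem_irr.1 (Finset.mem_of_mem_erase hχ)) (Finset.ne_of_mem_erase hχ) h0
      rw [← mul_assoc]
      congr 1
      exact_mod_cast (Nat.mul_div_cancel' hd).symm
  rw [h3] at h1
  have h4 : ∑ χ ∈ (irr G).erase 1, ((charDeg χ / q : ℕ) : ℂ) * χ g =
      algebraMap ℚ ℂ (-1 / q) := by
    rw [map_div₀, map_neg, map_one, map_natCast, eq_div_iff hq0]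
    linear_combination h1
  rw [h4] at h2
  have h5 := (isIntegral_algebraMap_iff (algebraMap ℚ ℂ).injective).1 h2
  obtain ⟨m, hm⟩ := IsIntegrallyClosed.isIntegral_iff.1 h5
  have hq0' : (q : ℚ) ≠ 0 := by exact_mod_cast hq.ne_zero
  rw [eq_div_iff hq0'] at hm
  rw [eq_intCast] at hm
  have h6 : m * q = -1 := by exact_mod_cast hm
  have h7 : (q : ℤ) ∣ 1 := ⟨-m, by linear_combination h6⟩
  have h8 : q ∣ 1 := by exact_mod_cast h7
  exact hq.one_lt.ne' (Nat.dvd_one.1 h8)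

theorem burnside_core (hs : ∀ K : Subgroup G, K.Normal → K = ⊥ ∨ K = ⊤)
    (hna : ∃ x y : G, x * y ≠ y * x) (g : G) (hg : g ≠ 1) (q k : ℕ) (hq : q.Prime)
    (hk : (Subgroup.centralizer {g}).index = q ^ k) : False := by
  classical
  have := Fintype.ofFinite G
  obtain ⟨χ, hχ, hne, hg0, hqd⟩ := exists_special g hg q hq
  let C : Finset G := Finset.univ.filter fun y => IsConj g y
  have hC : C.card = q ^ k := by
    have e1 : (MulAction.stabilizer (ConjAct G) g).index = (Subgroup.centralizer {g}).index := by
      rw [Subgroup.centralizer_eq_comap_stabilizer]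
      exact (Subgroup.index_comap_of_surjective _ ConjAct.toConjAct.surjective).symm
    rw [← hk, ← e1, MulAction.index_stabilizer, ← Set.ncard_coe_finset]
    congr 1
    ext y
    rw [ConjAct.mem_orbit_conjAct, Finset.mem_coe, Finset.mem_filter]
    exact ⟨fun h => h.2.symm, fun h => ⟨Finset.mem_univ _, h.symm⟩⟩
  have h1 := class_integral hχ g C (by
    intro u y hy
    rw [Finset.mem_filter] at hy ⊢
    exact ⟨Finset.mem_univ _, hy.2.trans (isConj_iff.2 ⟨u, rfl⟩)⟩)
    (fun y hy => (Finset.mem_filter.1 hy).2)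
  have h2 := hχ.isChar.integral g
  have hd1 := hχ.isChar.one_eq
  have hd0 : (charDeg χ : ℂ) ≠ 0 := by exact_mod_cast hχ.deg_pos.ne'
  rw [hC, hd1] at h1
  have hα : IsIntegral ℤ (χ g / charDeg χ) := by
    have hcop : IsCoprime ((q ^ k : ℕ) : ℤ) (charDeg χ : ℤ) := by
      rw [Nat.isCoprime_iff_coprime]
      exact Nat.Coprime.pow_left _ ((Nat.Prime.coprime_iff_not_dvd hq).2 hqd)
    obtain ⟨u, v, huv⟩ := hcop
    have huv' : (u : ℂ) * ((q ^ k : ℕ) : ℂ) + v * (charDeg χ : ℂ) = 1 := by exact_mod_cast huv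
    have e : χ g / charDeg χ = u * (((q ^ k : ℕ) : ℂ) * (χ g / charDeg χ)) + v * χ g := by
      field_simp
      linear_combination -huv'
    rw [e]
    have hu : ∀ w : ℤ, IsIntegral ℤ (w : ℂ) := fun w => by
      simpa using isIntegral_algebraMap (R := ℤ) (A := ℂ) (x := w)
    exact ((hu u).mul h1).add ((hu v).mul h2)
  obtain ⟨V, _, _, _, ρ, hρ, rfl⟩ := hχ
  obtain ⟨s, hcard, hroot, htr, hsc⟩ :=
    root_data (ρ g) (Nat.card G) Nat.card_pos (rep_pow_card ρ g)
  set α := ρ.character g / charDeg ρ.character with hαd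
  have hdV : charDeg ρ.character = finrank ℂ V := by
    rw [char_one] at hd1; exact_mod_cast hd1.symm
  have hsum : s.sum = s.card * α := by
    rw [hcard, ← hdV, hαd, mul_div_cancel₀ _ hd0, ← htr]; rfl
  have hα0 : α ≠ 0 := div_ne_zero hg0 hd0
  have hn1 : ∀ z ∈ s, ‖z‖ = 1 := fun z hz =>
    Complex.norm_eq_one_of_pow_eq_one (hroot z hz) Nat.card_pos.ne'
  have hα1 := norm_one_of s (Nat.card G) Nat.card_pos hroot α hsum (by
    rw [hcard, ← hdV]; exact_mod_cast hd0) hα0 hα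
  have hscal := hsc α (all_eq s hn1 α hα1 hsum)
  have hcomm : ∀ h, ρ g * ρ h = ρ h * ρ g := by
    intro h
    rw [hscal]
    ext v; simp
  have hker : ∀ h, g * h = h * g := by
    rcases hs ρ.ker inferInstance with hb | ht
    · intro h
      apply (MonoidHom.ker_eq_bot_iff ρ).1 hb
      rw [map_mul, map_mul, hcomm]
    · exfalso
      have htriv : ∀ x, ρ x = 1 := fun x => by
        have : x ∈ ρ.ker := ht ▸ Subgroup.mem_top x
        exact this
      apply hne
      have hI : Irr ρ.character := ⟨V, _, _, inferInstance, ρ, hρ, rfl⟩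
      have e : ρ.character = charDeg ρ.character • (1 : G → ℂ) := by
        ext x
        rw [Pi.smul_apply, Pi.one_apply, nsmul_eq_mul, mul_one, ← hd1]
        change LinearMap.trace ℂ V (ρ x) = LinearMap.trace ℂ V (ρ 1)
        rw [htriv, htriv]
      by_contra hne1
      have m0 := hI.mult_ne irr_one hne1
      rw [e, mult_nsmul_left isChar_one isChar_one, irr_one.mult_self, mul_one] at m0
      apply hd0; exact_mod_cast m0
  rcases hs (Subgroup.center G) inferInstance with hb | ht
  · apply hg
    have : g ∈ Subgroup.center G := Subgroup.mem_center_iff.2 fun h => (hker h).symm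
    rw [hb] at this
    exact Subgroup.mem_bot.1 this
  · obtain ⟨x, y, hxy⟩ := hna
    apply hxy
    have : y ∈ Subgroup.center G := ht ▸ Subgroup.mem_top y
    exact Subgroup.mem_center_iff.1 this x

end R

theorem burnside (p q : ℕ) (hp : p.Prime) (hq : q.Prime) :
    ∀ (n : ℕ) (G : Type) [Group G] [Finite G], Nat.card G = n →
      (∀ r : ℕ, r.Prime → r ∣ Nat.card G → r = p ∨ r = q) → Group.IsSolvable G := by
  intro n
  induction n using Nat.strong_induction_on with
  | _ n ih =>
  intro G _ _ hn hpr
  by_cases hab : ∀ x y : G, x * y = y * x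
  · exact Group.isSolvable_of_comm hab
  push Not at hab
  by_cases hs : ∀ K : Subgroup G, K.Normal → K = ⊥ ∨ K = ⊤
  · exfalso
    have := Fact.mk hp
    have := Fact.mk hq
    have P : Sylow p G := default
    by_cases hpd : p ∣ Nat.card G
    · have hP : Nontrivial P := by
        have := P.card_eq_multiplicity
        have h2 : 0 < (Nat.card G).factorization p :=
          hp.factorization_pos_of_dvd Nat.card_pos.ne' hpd
        have h3 := Nat.one_lt_pow h2.ne' hp.one_lt
        rw [← this] at h3
        exact Finite.one_lt_card_iff_nontrivial.1 h3
      have hZ := P.isPGroup'.center_nontrivial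
      obtain ⟨z, hz⟩ := exists_ne (1 : Subgroup.center P)
      have hle : (P : Subgroup G) ≤ Subgroup.centralizer {((z : P) : G)} := by
        intro x hx
        rw [Subgroup.mem_centralizer_singleton_iff]
        have := Subgroup.mem_center_iff.1 z.2 ⟨x, hx⟩
        exact congrArg Subtype.val this
      have hdv : (Subgroup.centralizer {((z : P) : G)}).index ∣ (P : Subgroup G).index :=
        Subgroup.index_dvd_of_le hle
      have hnp : ¬ p ∣ (Subgroup.centralizer {((z : P) : G)}).index := fun h =>
        P.not_dvd_index (h.trans hdv)
      have hqk : (Subgroup.centralizer {((z : P) : G)}).index =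
          q ^ (Subgroup.centralizer {((z : P) : G)}).index.primeFactorsList.length := by
        apply Nat.eq_prime_pow_of_unique_prime_dvd Subgroup.index_ne_zero_of_finite
        intro r hr hrd
        rcases hpr r hr (hrd.trans (Subgroup.index_dvd_card _)) with h | h
        · exact absurd (h ▸ hrd) hnp
        · exact h
      refine burnside_core hs hab ((z : P) : G) ?_ q _ hq hqk
      intro h1
      apply hz
      apply Subtype.ext
      apply Subtype.ext
      exact h1
    · have hqg : IsPGroup q G := by
        have := Nat.eq_prime_pow_of_unique_prime_dvd (n := Nat.card G) (p := q) Nat.card_pos.ne' (by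
          intro r hr hrd
          rcases hpr r hr hrd with h | h
          · exact absurd (h ▸ hrd) hpd
          · exact h)
        exact IsPGroup.of_card this
      have hnt : Nontrivial G := by
        obtain ⟨x, y, hxy⟩ := hab
        exact ⟨_, _, hxy⟩
      have := hqg.center_nontrivial
      rcases hs (Subgroup.center G) inferInstance with h | h
      · exact (Subgroup.nontrivial_iff_ne_bot _).1 this h
      · obtain ⟨x, y, hxy⟩ := hab
        apply hxy
        have : y ∈ Subgroup.center G := h ▸ Subgroup.mem_top y
        exact Subgroup.mem_center_iff.1 this x
  · push Not at hs
    obtain ⟨K, hK, hb, ht⟩ := hs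
    have hmul := K.card_mul_index
    have hi : 1 < K.index := by
      have := Subgroup.index_ne_zero_of_finite (H := K)
      have := mt Subgroup.index_eq_one.1 ht
      omega
    have hc : 1 < Nat.card K := by
      have := mt Subgroup.card_eq_one.1 hb
      have := Nat.card_pos (α := K)
      omega
    rw [Group.isSolvable_iff_subgroup_quotient K]
    constructor
    · refine ih (Nat.card K) (by nlinarith) K rfl fun r hr hd => hpr r hr (hd.trans ?_)
      exact Subgroup.card_subgroup_dvd_card K
    · refine ih (Nat.card (G ⧸ K)) ?_ (G ⧸ K) rfl fun r hr hd => hpr r hr (hd.trans ?_)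
      · change K.index < n
        nlinarith
      · exact Subgroup.card_quotient_dvd_card K

end ACD

namespace ACD

theorem exists_prime {G : Type} [Group G] [Finite G] {N : Subgroup G} [hN : N.Normal]
    (c : Ctx N) : ∃ p : ℕ, p.Prime ∧ 5 ≤ p ∧ p ∣ Nat.card N := by
  by_contra hcon
  push Not at hcon
  apply c.not_solvable
  refine burnside 2 3 Nat.prime_two Nat.prime_three (Nat.card N) N rfl fun r hr hd => ?_
  have h5 : r < 5 := by
    by_contra h
    exact hcon r hr (not_lt.1 h) hd
  have h2 := hr.two_le
  interval_cases r
  · exact Or.inl rfl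
  · exact Or.inr rfl
  · exact absurd hr (by norm_num)

theorem main_sum {G : Type} [Group G] [Finite G] {N : Subgroup G} [hN : N.Normal]
    (c : Ctx N) : 0 ≤ ∑ χ ∈ irr G, (5 * charDeg χ - 16 : ℝ) := by
  obtain ⟨M, hM⟩ := exists_reps N
  refine reduction c hM ?_
  by_cases h3 : ∃ W ∈ M, charDeg W = 3
  · obtain ⟨W, hW, hW3⟩ := h3
    exact star_three c hM hW hW3
  · push Not at h3
    obtain ⟨p, hp, hp5, hd⟩ := exists_prime c
    have := Fact.mk hp
    obtain ⟨χ, hχ, h1, h2⟩ := exists_good_sylow c p hd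
    exact star_zero c hM h3 p hp5 hχ h1 h2

end ACD

/-- If a finite group `G` has a non-abelian minimal normal subgroup contained in
the commutator subgroup `G'`, then `acd(G) ≥ 16/5`. -/
theorem acd_ge_sixteen_fifths_of_nonabelian_minimal_normal (G : Type) [Group G] [Finite G]
    (N : Subgroup G) [N.Normal] (hnt : N ≠ ⊥)
    (hmin : ∀ K : Subgroup G, K.Normal → K ≤ N → K = ⊥ ∨ K = N)
    (hna : ∃ x y : N, x * y ≠ y * x)
    (hle : N ≤ commutator G) :
    16 / 5 ≤ acd G := by
  have c : ACD.Ctx N := ⟨inferInstance, hmin, hna⟩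
  have h := ACD.main_sum c
  have hset : {χ ∈ IrrChar G | True} = (ACD.irr G : Set (G → ℂ)) := by
    ext χ
    rw [ACD.irrChar_eq]
    simp [ACD.mem_irr]
  rw [acd, acdRel, hset, Set.ncard_coe_finset, finsum_mem_coe_finset]
  have hpos : (0 : ℝ) < (ACD.irr G).card := by
    have : 0 < (ACD.irr G).card := Finset.card_pos.2 ⟨1, ACD.mem_irr.2 ACD.irr_one⟩
    exact_mod_cast this
  rw [le_div_iff₀ hpos]
  rw [Finset.sum_sub_distrib, ← Finset.mul_sum, Finset.sum_const, nsmul_eq_mul] at h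
  linarith
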